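/- arXiv:1205.1726 — 5 statements merged into one kernel-verified Lean document; each statement's English description precedes it below -/
import Mathlib

section
/- Let K be a Δ-field whose constant field K^Δ is algebraically closed, and let L|K be a finitely Δ-generated extension of Δ-fields with L^Δ = K^Δ. Then L|K is a Picard-Vessiot extension if and only if L|K is Δ-normal with respect to the pair of canonical K-Δ-morphisms τ_s, τ_t : L → L ⊗_K L given by τ_s(a) = a ⊗ 1 and τ_t(a) = 1 ⊗ a, i.e., if and only if 1 ⊗ L ⊆ τ_s(L)(L ⊗_K L)^Δ. -/
open scoped TensorProduct

/-- `S·T`: the set of finite sums `Σ sᵢ tᵢ` with `sᵢ ∈ S`, `tᵢ ∈ T`. -/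
def dotSet {R : Type*} [CommRing R] (S T : Set R) : Set R :=
  {x | ∃ (n : ℕ) (s t : Fin n → R), (∀ i, s i ∈ S) ∧ (∀ i, t i ∈ T) ∧ x = ∑ i, s i * t i}

/-- `ST`: the set of fractions `r/r'` with `r, r' ∈ S·T` and `r'` a unit of `R`. -/
def fracSet {R : Type*} [CommRing R] (S T : Set R) : Set R :=
  {x | ∃ r r', r ∈ dotSet S T ∧ r' ∈ dotSet S T ∧ IsUnit r' ∧ x * r' = r}

/-- The derivations `δ₁, …, δ_m` pairwise commute. -/
def CommutingDerivations {R : Type*} [CommRing R] {m : ℕ}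
    (δ : Fin m → Derivation ℤ R R) : Prop :=
  ∀ i j x, δ i (δ j x) = δ j (δ i x)

/-- The subfield of `Δ`-constants of a `Δ`-field. -/
def constantSubfield {K : Type*} [Field K] {m : ℕ}
    (δ : Fin m → Derivation ℤ K K) : Subfield K where
  carrier := {a | ∀ i, δ i a = 0}
  mul_mem' := by
    intro a b ha hb i
    simp [Derivation.leibniz, ha i, hb i]
  one_mem' := by intro i; simp
  add_mem' := by
    intro a b ha hb i
    simp [ha i, hb i]
  zero_mem' := by intro i; simp
  neg_mem' := by intro a ha i; simp [ha i]
  inv_mem' := by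
    intro a ha i
    rw [Derivation.leibniz_inv, ha i]
    simp

/-- `L|K` is a Picard-Vessiot extension: `L^Δ = K^Δ` and `L` is generated by a fundamental
solution matrix of an integrable linear system over `K`. -/
def IsPicardVessiot {m : ℕ} (K L : Type*) [Field K] [Field L] [Algebra K L]
    (δK : Fin m → Derivation ℤ K K) (δL : Fin m → Derivation ℤ L L) : Prop :=
  (∀ a : L, (∀ i, δL i a = 0) → a ∈ (algebraMap K L).range) ∧
  ∃ (n : ℕ) (A : Fin m → Matrix (Fin n) (Fin n) K) (Y : GL (Fin n) L),
    (∀ i j, (A j).map (fun x => δK i x) - (A i).map (fun x => δK j x)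
        = A i * A j - A j * A i) ∧
    (∀ i, ((Y : Matrix (Fin n) (Fin n) L)).map (fun x => δL i x)
        = (A i).map (algebraMap K L) * (Y : Matrix (Fin n) (Fin n) L)) ∧
    IntermediateField.adjoin K {x : L | ∃ p q, (Y : Matrix (Fin n) (Fin n) L) p q = x} = ⊤

/-- `L|K` is finitely `Δ`-generated: `L` is generated as a field over `K` by the elements
`θ(a)`, `a ∈ S`, `θ` a monomial in the derivations, for some finite `S ⊆ L`. -/
def FinitelyDeltaGenerated {m : ℕ} (K L : Type*) [Field K] [Field L] [Algebra K L]
    (δL : Fin m → Derivation ℤ L L) : Prop :=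
  ∃ S : Finset L, IntermediateField.adjoin K
    {x : L | ∃ a ∈ S, ∃ w : List (Fin m), x = w.foldr (fun i y => δL i y) a} = ⊤

universe u

/-- `L|K` is `Δ`-normal: for every commutative `K`-`Δ`-algebra `R` and every pair of
`K`-`Δ`-morphisms `τs, τt : L → R` one has `τt(L) ⊆ τs(L)R^Δ`. -/
def IsDeltaNormal {m : ℕ} (K L : Type*) [Field K] [Field L] [Algebra K L]
    (δK : Fin m → Derivation ℤ K K) (δL : Fin m → Derivation ℤ L L) : Prop :=
  ∀ (R : Type u) [CommRing R] [CharZero R] [Algebra K R]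
    (δR : Fin m → Derivation ℤ R R),
    CommutingDerivations δR →
    (∀ i a, δR i (algebraMap K R a) = algebraMap K R (δK i a)) →
    ∀ (τs τt : L →ₐ[K] R),
      (∀ i a, τs (δL i a) = δR i (τs a)) →
      (∀ i a, τt (δL i a) = δR i (τt a)) →
      ∀ b : L, τt b ∈ fracSet (Set.range ⇑τs) {a : R | ∀ i, δR i a = 0}

/-- The normality condition in the definition of strongly normal extensions: for every
`Δ`-field extension `M` of `K` and every pair of `K`-`Δ`-embeddings `τs, τt : L → M`
one has `τt(L) ⊆ τs(L)M^Δ` (field compositum inside `M`). -/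
def StronglyNormalCond {m : ℕ} (K L : Type*) [Field K] [Field L] [Algebra K L]
    (δK : Fin m → Derivation ℤ K K) (δL : Fin m → Derivation ℤ L L) : Prop :=
  ∀ (M : Type u) [Field M] [CharZero M] [Algebra K M]
    (δM : Fin m → Derivation ℤ M M),
    CommutingDerivations δM →
    (∀ i a, δM i (algebraMap K M a) = algebraMap K M (δK i a)) →
    ∀ (τs τt : L →ₐ[K] M),
      (∀ i a, τs (δL i a) = δM i (τs a)) →
      (∀ i a, τt (δL i a) = δM i (τt a)) →
      ∀ b : L, τt b ∈ fracSet (Set.range ⇑τs) {a : M | ∀ i, δM i a = 0}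


theorem aux_isDomain (K L ι : Type*) [Field K] [Field L] [Algebra K L] :
    IsDomain (FractionRing (MvPolynomial ι K) ⊗[K] L) := by
  let P := MvPolynomial ι K
  let E := FractionRing P
  have e1 : (P ⊗[K] L) ≃ₐ[K] MvPolynomial ι L :=
    (Algebra.TensorProduct.comm K P L).trans
      ((MvPolynomial.algebraTensorAlgEquiv (σ := ι) K L).restrictScalars K)
  have : IsDomain (P ⊗[K] L) := e1.toMulEquiv.isDomain
  have : IsDomain ((P ⊗[K] L) ⊗[P] E) := by
    have hl : IsLocalization (Algebra.algebraMapSubmonoid (P ⊗[K] L) (nonZeroDivisors P))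
        ((P ⊗[K] L) ⊗[P] E) := inferInstance
    refine IsLocalization.isDomain_of_le_nonZeroDivisors (R := P ⊗[K] L) (S := (P ⊗[K] L) ⊗[P] E)
      (M := Algebra.algebraMapSubmonoid (P ⊗[K] L) (nonZeroDivisors P)) ?_
    refine map_le_nonZeroDivisors_of_injective _ ?_ le_rfl
    exact Algebra.TensorProduct.includeLeft_injective (R := K) (S := K) (A := P) (B := L)
      (algebraMap K L).injective
  have : IsDomain (E ⊗[P] (P ⊗[K] L)) :=
    (Algebra.TensorProduct.comm P E (P ⊗[K] L)).toMulEquiv.isDomain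
  exact (Algebra.TensorProduct.cancelBaseChange K P P E L).symm.toMulEquiv.isDomain

theorem aux_isReduced_alg (E F L : Type*) [Field E] [Field F] [Field L] [Algebra E F] [Algebra E L]
    [CharZero E] [Algebra.IsAlgebraic E L] : IsReduced (F ⊗[E] L) := by
  apply IsReduced.tensorProduct_of_flat_of_forall_fg
  intro B hB
  have : Algebra.IsAlgebraic E B := Algebra.IsAlgebraic.of_injective B.val Subtype.val_injective
  let _ : Field B := (Subalgebra.isField_of_algebraic B).toField
  have : Algebra.FiniteType E B := B.fg_iff_finiteType.1 hB
  have : Module.Finite E B := Algebra.IsIntegral.finite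
  have : Algebra.FormallyUnramified E B := by
    have : Algebra.FormallyEtale E B := Algebra.FormallyEtale.of_isSeparable E B
    infer_instance
  have : Algebra.FormallyUnramified F (F ⊗[E] B) := inferInstance
  exact Algebra.FormallyUnramified.isReduced_of_field F _

theorem aux_isReduced_tower (K E L : Type*) [Field K] [Field E] [Field L] [Algebra K L] [CharZero E]
    [Algebra K E] [Algebra E L] [IsScalarTower K E L] [Algebra.IsAlgebraic E L]
    [IsDomain (E ⊗[K] L)] : IsReduced (L ⊗[K] L) := by
  have h := aux_isReduced_alg E (FractionRing (E ⊗[K] L)) L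
  have : IsReduced (L ⊗[E] (FractionRing (E ⊗[K] L))) :=
    isReduced_of_injective (Algebra.TensorProduct.comm E L _)
      (Algebra.TensorProduct.comm E L _).injective
  have : IsReduced (L ⊗[E] (E ⊗[K] L)) :=
    isReduced_of_injective
      (Algebra.TensorProduct.map (AlgHom.id E L)
        (IsScalarTower.toAlgHom E (E ⊗[K] L) (FractionRing (E ⊗[K] L))))
      (Module.Flat.lTensor_preserves_injective_linearMap _
        (IsFractionRing.injective (E ⊗[K] L) (FractionRing (E ⊗[K] L))))
  exact isReduced_of_injective (Algebra.TensorProduct.cancelBaseChange K E E L L).symm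
    (Algebra.TensorProduct.cancelBaseChange K E E L L).symm.injective

theorem aux_isReduced (K L : Type*) [Field K] [Field L] [Algebra K L] [CharZero K] :
    IsReduced (L ⊗[K] L) := by
  obtain ⟨ι, x, hx⟩ := exists_isTranscendenceBasis' K L
  have : Algebra.IsAlgebraic (IntermediateField.adjoin K (Set.range x)) L := hx.isAlgebraic_field
  have := aux_isDomain K L ι
  have e : (FractionRing (MvPolynomial ι K) ⊗[K] L) ≃ₐ[K]
      (IntermediateField.adjoin K (Set.range x) ⊗[K] L) :=
    Algebra.TensorProduct.congr hx.1.aevalEquivField AlgEquiv.refl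
  have : IsDomain (IntermediateField.adjoin K (Set.range x) ⊗[K] L) := e.symm.toMulEquiv.isDomain
  have : CharZero (IntermediateField.adjoin K (Set.range x)) :=
    charZero_of_injective_algebraMap
      (algebraMap K (IntermediateField.adjoin K (Set.range x))).injective
  exact aux_isReduced_tower K (IntermediateField.adjoin K (Set.range x)) L

theorem aux_point (C D : Type*) [Field C] [IsAlgClosed C] [CommRing D] [IsReduced D] [Algebra C D]
    [Algebra.FiniteType C D] (d : D) (hd : d ≠ 0) : ∃ ψ : D →ₐ[C] C, ψ d ≠ 0 := by
  have hnt : Nontrivial (Localization.Away d) := by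
    rw [← not_subsingleton_iff_nontrivial,
      IsLocalization.subsingleton_iff (S := Localization.Away d) (M := Submonoid.powers d)]
    rintro ⟨k, hk⟩
    exact hd (eq_zero_of_pow_eq_zero hk)
  obtain ⟨M, hM⟩ := Ideal.exists_maximal (Localization.Away d)
  let _ : Field (Localization.Away d ⧸ M) := Ideal.Quotient.field M
  have f1 : Algebra.FiniteType D (Localization.Away d) := IsLocalization.finiteType_of_monoid_fg (Submonoid.powers d) _
  have f2 : Algebra.FiniteType C (Localization.Away d) := Algebra.FiniteType.trans (S := D) inferInstance f1
  have f3 : Algebra.FiniteType C (Localization.Away d ⧸ M) :=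
    f2.of_surjective (Ideal.Quotient.mkₐ C M) Ideal.Quotient.mk_surjective
  have : Module.Finite C (Localization.Away d ⧸ M) := finite_of_finite_type_of_isJacobsonRing _ _
  let e : C ≃ₐ[C] (Localization.Away d ⧸ M) := AlgEquiv.ofBijective (Algebra.ofId _ _)
    (IsAlgClosed.algebraMap_bijective_of_isIntegral)
  let g : D →ₐ[C] (Localization.Away d ⧸ M) :=
    (Ideal.Quotient.mkₐ C M).comp (IsScalarTower.toAlgHom C D (Localization.Away d))
  refine ⟨e.symm.toAlgHom.comp g, ?_⟩
  have hu : IsUnit (algebraMap D (Localization.Away d) d) := IsLocalization.Away.algebraMap_isUnit d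
  have hu2 : IsUnit ((e.symm.toAlgHom.comp (Ideal.Quotient.mkₐ C M)) (algebraMap D (Localization.Away d) d)) :=
    hu.map _
  exact hu2.ne_zero

/-- constants linearly independent over `C` stay so over `L` -/
theorem aux_linInd {m : ℕ} (C L T : Type*) [Field C] [Field L] [CommRing T]
    [Algebra C L] [Algebra L T] [Algebra C T] [IsScalarTower C L T]
    (δL : Fin m → Derivation ℤ L L) (δT : Fin m → Derivation ℤ T T)
    (hT : ∀ i a, δT i (algebraMap L T a) = algebraMap L T (δL i a))
    (hC : ∀ a : L, (∀ i, δL i a = 0) → a ∈ Set.range (algebraMap C L))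
    {ι : Type*} (v : ι → T) (hv : ∀ i k, δT i (v k) = 0) (hli : LinearIndependent C v) :
    LinearIndependent L v := by
  classical
  rw [linearIndependent_iff']
  intro s
  induction s using Finset.induction_on with
  | empty => simp
  | insert a s ha ih =>
    intro g hg
    have hδ : ∀ (i : Fin m) (l : L) k, δT i (l • v k) = δL i l • v k := by
      intro i l k
      rw [Algebra.smul_def l, Derivation.leibniz, hv, hT, Algebra.smul_def (δL i l)]
      simp [mul_comm]
    by_cases h0 : g a = 0
    · rw [Finset.sum_insert ha, h0, zero_smul, zero_add] at hg
      intro k hk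
      rcases Finset.mem_insert.1 hk with rfl | hk
      · exact h0
      · exact ih g hg k hk
    · exfalso
      set l : ι → L := fun k => (g a)⁻¹ * g k with hl
      have hla : l a = 1 := by simp [hl, h0]
      have hsum : ∑ k ∈ insert a s, l k • v k = 0 := by
        simp only [hl, mul_smul, ← Finset.smul_sum, hg, smul_zero]
      have hc : ∀ k ∈ insert a s, ∀ i, δL i (l k) = 0 := by
        intro k hk i
        rcases Finset.mem_insert.1 hk with rfl | hk
        · rw [hla]; simp
        · have h := congrArg (δT i) hsum
          rw [map_sum, map_zero] at h
          simp only [hδ] at h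
          rw [Finset.sum_insert ha, hla] at h
          simp only [Derivation.map_one_eq_zero, zero_smul, zero_add] at h
          exact ih (fun k => δL i (l k)) h k hk
      have hch : ∀ k, ∃ c : C, k ∈ insert a s → algebraMap C L c = l k := by
        intro k
        by_cases hk : k ∈ insert a s
        · obtain ⟨c, hc⟩ := hC (l k) (hc k hk)
          exact ⟨c, fun _ => hc⟩
        · exact ⟨0, fun h => (hk h).elim⟩
      choose c hc' using hch
      have hs2 : ∑ k ∈ insert a s, c k • v k = 0 := by
        rw [← hsum]
        refine Finset.sum_congr rfl fun k hk => ?_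
        rw [← hc' k hk, algebraMap_smul]
      have := linearIndependent_iff'.1 hli _ _ hs2 a (Finset.mem_insert_self _ _)
      have h1 := hc' a (Finset.mem_insert_self _ _)
      rw [this, hla, map_zero] at h1
      exact zero_ne_one h1

/-- the points separate elements of `L ⊗ D` -/
theorem aux_sep (C L D : Type*) [Field C] [IsAlgClosed C] [Field L] [Algebra C L]
    [CommRing D] [IsReduced D] [Algebra C D] [Algebra.FiniteType C D] (f : L ⊗[C] D)
    (hf : ∀ ψ : D →ₐ[C] C, Algebra.TensorProduct.lift (AlgHom.id L L)
      ((Algebra.ofId C L).comp ψ) (fun _ _ => Commute.all _ _) f = 0) : f = 0 := by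
  classical
  let b := Module.Basis.ofVectorSpace C L
  by_contra hne
  let B := b.tensorProduct (Module.Basis.ofVectorSpace C D)
  obtain ⟨x, rfl⟩ := (TensorProduct.equivFinsuppOfBasisLeft b (N := D)).symm.surjective f
  have hx : x ≠ 0 := by rintro rfl; simp at hne
  obtain ⟨k, hk⟩ := Finsupp.ne_iff.1 hx
  obtain ⟨ψ, hψ⟩ := aux_point C D (x k) hk
  have h := hf ψ
  rw [TensorProduct.equivFinsuppOfBasisLeft_symm_apply, Finsupp.sum, map_sum] at h
  simp only [Algebra.TensorProduct.lift_tmul, AlgHom.id_apply, AlgHom.comp_apply,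
    Algebra.ofId_apply] at h
  have h2 : ∑ i ∈ x.support, ψ (x i) • b i = 0 := by
    rw [← h]; refine Finset.sum_congr rfl fun i _ => ?_
    rw [Algebra.smul_def, mul_comm]
  exact hψ (linearIndependent_iff'.1 b.linearIndependent _ _ h2 k (Finsupp.mem_support_iff.2 hk))

theorem aux_fund {m n : ℕ} (C L T : Type*) [Field C] [IsAlgClosed C] [Field L] [CommRing T]
    [IsReduced T]
    [Algebra C L] [Algebra L T] [Algebra C T] [IsScalarTower C L T]
    (δL : Fin m → Derivation ℤ L L) (δT : Fin m → Derivation ℤ T T)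
    (hT : ∀ i a, δT i (algebraMap L T a) = algebraMap L T (δL i a))
    (hC : ∀ a : L, (∀ i, δL i a = 0) → a ∈ Set.range (algebraMap C L))
    (hC' : ∀ i c, δL i (algebraMap C L c) = 0)
    (D : Subalgebra C T) (hD : ∀ x ∈ D, ∀ i, δT i x = 0)
    (A : Fin m → Matrix (Fin n) (Fin n) L) (z : Fin n → T) (hz : LinearIndependent L z)
    (hδz : ∀ i k, δT i (z k) = ∑ l, A i k l • z l) (s : T) (hs : IsUnit s)
    (hsD : s ∈ Submodule.span L (D : Set T))
    (hzs : ∀ k, z k * s ∈ Submodule.span L (D : Set T)) :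
    ∃ Y : GL (Fin n) L, ∀ i, (Y : Matrix (Fin n) (Fin n) L).map (fun x => δL i x)
      = A i * (Y : Matrix (Fin n) (Fin n) L) := by
  classical
  -- finitely generated algebra of constants
  obtain ⟨F0, hF0, hs0⟩ := Submodule.mem_span_finite_of_mem_span hsD
  choose F hF hzF using fun k => Submodule.mem_span_finite_of_mem_span (hzs k)
  let G : Finset T := F0 ∪ Finset.univ.biUnion F
  let D0 : Subalgebra C T := Algebra.adjoin C (G : Set T)
  have hGD : (G : Set T) ⊆ D := by
    intro x hx
    simp only [G, Finset.coe_union, Set.mem_union, Finset.mem_coe, Finset.mem_biUnion] at hx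
    rcases hx with hx | ⟨k, -, hx⟩
    · exact hF0 hx
    · exact hF k hx
  have hD0 : D0 ≤ D := Algebra.adjoin_le hGD
  have hGD0 : (G : Set T) ⊆ D0 := Algebra.subset_adjoin
  have ft : Algebra.FiniteType C D0 := D0.fg_iff_finiteType.1 ⟨G, rfl⟩
  have red : IsReduced D0 := isReduced_of_injective D0.val Subtype.val_injective
  let ι : L ⊗[C] D0 →ₐ[L] T := Algebra.TensorProduct.lift (Algebra.ofId L T) D0.val
    (fun _ _ => Commute.all _ _)
  have hι : ∀ l d, ι (l ⊗ₜ d) = l • (d : T) := by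
    intro l d
    simp [ι, Algebra.ofId_apply, Algebra.smul_def]
  have hιinj : Function.Injective ι := by
    let b := Module.Basis.ofVectorSpace C D0
    have h1 : LinearIndependent C (fun k => (b k : T)) :=
      b.linearIndependent.map' D0.val.toLinearMap (LinearMap.ker_eq_bot.2 Subtype.val_injective)
    have h2 := aux_linInd C L T δL δT hT hC (fun k => (b k : T))
      (fun i k => hD _ (hD0 (b k).2) i) h1
    let B := Algebra.TensorProduct.basis L b
    have h3 : LinearIndependent L (ι.toLinearMap ∘ B) := by
      convert h2 using 1
      funext k
      simp [B, hι]
    exact LinearMap.injective_of_linearIndependent B.span_eq h3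
  have hrange : ∀ x ∈ Submodule.span L (G : Set T), ∃ y, ι y = x := by
    intro x hx
    have : Submodule.span L (G : Set T) ≤ LinearMap.range ι.toLinearMap := by
      rw [Submodule.span_le]
      intro g hg
      exact ⟨1 ⊗ₜ ⟨g, hGD0 hg⟩, by simp [hι]⟩
    exact this hx
  obtain ⟨σ, hσ⟩ := hrange s (Submodule.span_mono (by simp [G]) hs0)
  have hz' : ∀ k, ∃ y, ι y = z k * s := fun k => hrange _ (Submodule.span_mono (by
    intro x hx
    simp only [G, Finset.coe_union, Set.mem_union, Finset.mem_coe, Finset.mem_biUnion]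
    exact Or.inr ⟨k, Finset.mem_univ _, hx⟩) (hzF k))
  choose ξ hξ using hz'
  let δC : Fin m → L →ₗ[C] L := fun i =>
    { toFun := δL i
      map_add' := fun a b => map_add _ a b
      map_smul' := fun c a => by
        simp [Algebra.smul_def, hC'] }
  let Θ : Fin m → L ⊗[C] D0 →ₗ[C] L ⊗[C] D0 := fun i => (δC i).rTensor D0
  have hΘι : ∀ i x, ι (Θ i x) = δT i (ι x) := by
    intro i x
    induction x using TensorProduct.induction_on with
    | zero => simp
    | add x y hx hy => simp only [map_add, hx, hy]
    | tmul l d =>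
      have : Θ i (l ⊗ₜ d) = δL i l ⊗ₜ d := rfl
      rw [this, hι, hι, Algebra.smul_def, Algebra.smul_def, Derivation.leibniz, hT,
        hD _ (hD0 d.2)]
      simp [mul_comm]
  let ev : (D0 →ₐ[C] C) → (L ⊗[C] D0 →ₐ[L] L) := fun ψ =>
    Algebra.TensorProduct.lift (AlgHom.id L L) ((Algebra.ofId C L).comp ψ)
      (fun _ _ => Commute.all _ _)
  have hevΘ : ∀ ψ i x, ev ψ (Θ i x) = δL i (ev ψ x) := by
    intro ψ i x
    induction x using TensorProduct.induction_on with
    | zero => simp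
    | add x y hx hy => simp only [map_add, hx, hy]
    | tmul l d =>
      have : Θ i (l ⊗ₜ d) = δL i l ⊗ₜ d := rfl
      rw [this]
      simp [ev, Algebra.ofId_apply, hC', mul_comm]
  -- the differential equation upstairs
  have hode : ∀ i k, (∑ l, A i k l • ξ l) * σ + ξ k * Θ i σ = σ * Θ i (ξ k) := by
    intro i k
    apply hιinj
    simp only [map_add, map_mul, map_sum, map_smul, hΘι, hσ, hξ, Derivation.leibniz, hδz,
      smul_eq_mul, Finset.sum_mul, Finset.mul_sum, mul_add]
    have : ∀ l, A i k l • (z l * s) * s = s * (s * A i k l • z l) := by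
      intro l; simp only [Algebra.smul_def]; ring
    simp only [this]
    ring
  let Sol : Set (Fin n → L) := {y | ∀ i k, δL i (y k) = ∑ l, A i k l * y l}
  have hsol : ∀ ψ, ev ψ σ ≠ 0 → (fun k => ev ψ (ξ k) / ev ψ σ) ∈ Sol := by
    intro ψ hψ i k
    have h := congrArg (ev ψ) (hode i k)
    simp only [map_add, map_mul, map_sum, map_smul, hevΘ, smul_eq_mul] at h
    have h1 : δL i (ev ψ (ξ k) / ev ψ σ) * (ev ψ σ * ev ψ σ) =
      δL i (ev ψ (ξ k)) * ev ψ σ - ev ψ (ξ k) * δL i (ev ψ σ) := by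
      have h2 := congrArg (δL i) (div_mul_cancel₀ (ev ψ (ξ k)) hψ)
      rw [Derivation.leibniz] at h2
      simp only [smul_eq_mul] at h2
      rw [← h2]
      field_simp
      ring
    have h3 : (∑ l, A i k l * (ev ψ (ξ l) / ev ψ σ)) * (ev ψ σ * ev ψ σ) =
        (∑ l, A i k l * ev ψ (ξ l)) * ev ψ σ := by
      rw [← mul_assoc, Finset.sum_mul]
      congr 1
      refine Finset.sum_congr rfl fun l _ => ?_
      field_simp
    apply mul_right_cancel₀ (mul_ne_zero hψ hψ)
    rw [h1, h3]
    linear_combination -h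
  have hspan : Submodule.span L Sol = ⊤ := by
    by_contra hne
    obtain ⟨φ, hφ0, hφ⟩ := Submodule.exists_le_ker_of_lt_top _ (lt_top_iff_ne_top.2 hne)
    let lam : Fin n → L := fun k => φ (Pi.single k 1)
    have hφs : ∀ y, φ y = ∑ k, y k * lam k := by
      intro y
      conv_lhs => rw [pi_eq_sum_univ' y]
      simp [lam, map_sum]
    have hzero : σ * ∑ k, lam k • ξ k = 0 := by
      apply aux_sep
      intro ψ
      change ev ψ _ = 0
      by_cases hψ : ev ψ σ = 0
      · rw [map_mul, hψ, zero_mul]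
      · have h1 : φ _ = 0 := hφ (Submodule.subset_span (hsol ψ hψ))
        rw [hφs] at h1
        have h2 : ∑ k, lam k * ev ψ (ξ k) = 0 := by
          have h3 := congrArg (· * ev ψ σ) h1
          simp only [zero_mul, Finset.sum_mul] at h3
          rw [← h3]
          refine Finset.sum_congr rfl fun l _ => ?_
          field_simp
        simp only [map_mul, map_sum, map_smul, smul_eq_mul, h2, mul_zero]
    have h4 := congrArg ι hzero
    simp only [map_mul, map_sum, map_smul, hσ, hξ, map_zero] at h4
    rw [hs.mul_right_eq_zero] at h4
    have h5 : (∑ k, lam k • z k) * s = 0 := by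
      rw [Finset.sum_mul, ← h4]
      simp
    rw [hs.mul_left_eq_zero] at h5
    have h6 := Fintype.linearIndependent_iff.1 hz lam h5
    apply hφ0
    ext y
    simp [lam] at h6
    simp [h6]
  obtain ⟨f, hf, hfs, hfl⟩ := Submodule.exists_fun_fin_finrank_span_eq L Sol
  have hn : Module.finrank L (Submodule.span L Sol) = n := by
    rw [hspan]; simp
  let g : Fin n → (Fin n → L) := fun j => f (Fin.cast hn.symm j)
  have hgl : LinearIndependent L g := hfl.comp _ (Fin.cast_injective _)
  let Y : Matrix (Fin n) (Fin n) L := Matrix.of fun k j => g j k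
  have hY : IsUnit Y := by
    rw [← Matrix.linearIndependent_cols_iff_isUnit]
    exact hgl
  refine ⟨hY.unit, fun i => ?_⟩
  ext k j
  simp only [IsUnit.unit_spec, Matrix.map_apply, Matrix.mul_apply]
  exact hf (Fin.cast hn.symm j) i k

/-- contraction of the left factor -/
noncomputable def contr (K L : Type*) [Field K] [Field L] [Algebra K L] (f : L →ₗ[K] K) :
    L ⊗[K] L →ₗ[K] L :=
  (TensorProduct.lid K L).toLinearMap ∘ₗ f.rTensor L

theorem contr_tmul {K L : Type*} [Field K] [Field L] [Algebra K L] (f : L →ₗ[K] K) (a c : L) :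
    contr K L f (a ⊗ₜ c) = f a • c := by
  simp [contr]

theorem contr_ne_zero {K L : Type*} [Field K] [Field L] [Algebra K L] (t : L ⊗[K] L) (ht : t ≠ 0) :
    ∃ f, contr K L f t ≠ 0 := by
  classical
  let b := Module.Basis.ofVectorSpace K L
  have h : ∀ (t : L ⊗[K] L) k,
      TensorProduct.equivFinsuppOfBasisLeft b t k = contr K L (b.coord k) t := by
    intro t k
    induction t using TensorProduct.induction_on with
    | zero => simp
    | add x y hx hy => simp [hx, hy]
    | tmul a c => simp [contr_tmul, TensorProduct.equivFinsuppOfBasisLeft_apply_tmul_apply]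
  by_contra! hc
  apply ht
  apply (TensorProduct.equivFinsuppOfBasisLeft b (N := L)).injective
  ext k
  rw [h, hc, map_zero, Finsupp.zero_apply]

theorem contr_mul_right {K L : Type*} [Field K] [Field L] [Algebra K L] (f : L →ₗ[K] K)
    (b : L) (t : L ⊗[K] L) : contr K L f ((1 ⊗ₜ b) * t) = b * contr K L f t := by
  induction t using TensorProduct.induction_on with
  | zero => simp
  | add x y hx hy => simp [mul_add, hx, hy]
  | tmul a c => simp [contr_tmul]

theorem contr_smul {K L : Type*} [Field K] [Field L] [Algebra K L] (f : L →ₗ[K] K)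
    (l : L) (t : L ⊗[K] L) :
    contr K L f (l • t) = contr K L (f ∘ₗ LinearMap.mulLeft K l) t := by
  induction t using TensorProduct.induction_on with
  | zero => simp
  | add x y hx hy => simp [hx, hy]
  | tmul a c => rw [TensorProduct.smul_tmul']; simp [contr_tmul]

/-- `W` is a finite-dimensional `Δ`-stable `K`-subspace of `L`. -/
def FinStable {m : ℕ} {K L : Type*} [Field K] [Field L] [Algebra K L]
    (δL : Fin m → Derivation ℤ L L) (W : Submodule K L) : Prop :=
  FiniteDimensional K W ∧ ∀ i, ∀ w ∈ W, δL i w ∈ W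

theorem FinStable.sup {m : ℕ} {K L : Type*} [Field K] [Field L] [Algebra K L]
    {δL : Fin m → Derivation ℤ L L} {W W' : Submodule K L} (h : FinStable δL W)
    (h' : FinStable δL W') : FinStable δL (W ⊔ W') := by
  have := h.1
  have := h'.1
  refine ⟨inferInstance, fun i w hw => ?_⟩
  obtain ⟨a, ha, b, hb, rfl⟩ := Submodule.mem_sup.1 hw
  rw [map_add]
  exact Submodule.mem_sup.2 ⟨_, h.2 i a ha, _, h'.2 i b hb, rfl⟩

theorem contr_finite {K L : Type*} [Field K] [Field L] [Algebra K L] (t : L ⊗[K] L) :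
    ∃ W : Submodule K L, FiniteDimensional K W ∧ ∀ f, contr K L f t ∈ W := by
  induction t using TensorProduct.induction_on with
  | zero => exact ⟨⊥, inferInstance, fun f => by simp⟩
  | add x y hx hy =>
    obtain ⟨W, hW, h⟩ := hx
    obtain ⟨W', hW', h'⟩ := hy
    refine ⟨W ⊔ W', inferInstance, fun f => ?_⟩
    rw [map_add]
    exact Submodule.add_mem_sup (h f) (h' f)
  | tmul a c =>
    refine ⟨Submodule.span K {c}, inferInstance, fun f => ?_⟩
    rw [contr_tmul]
    exact Submodule.smul_mem _ _ (Submodule.mem_span_singleton_self c)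

section
variable {m : ℕ} {K L : Type*} [Field K] [Field L] [Algebra K L]
    (δK : Fin m → Derivation ℤ K K) (δL : Fin m → Derivation ℤ L L)
    (δT : Fin m → Derivation ℤ (L ⊗[K] L) (L ⊗[K] L))

theorem aux_smul (hcompat : ∀ i a, δL i (algebraMap K L a) = algebraMap K L (δK i a)) (i : Fin m)
    (k : K) (a : L) : δL i (k • a) = δK i k • a + k • δL i a := by
  simp only [Algebra.smul_def, Derivation.leibniz, hcompat, Algebra.algebraMap_self,
    RingHom.id_apply]
  ring

theorem contr_const (hcompat : ∀ i a, δL i (algebraMap K L a) = algebraMap K L (δK i a))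
    (hδT : ∀ i (a b : L), δT i (a ⊗ₜ[K] b) = (δL i a) ⊗ₜ[K] b + a ⊗ₜ[K] (δL i b))
    (d : L ⊗[K] L) (hd : ∀ i, δT i d = 0) (f : L →ₗ[K] K) :
    ∃ W : Submodule K L, FinStable δL W ∧ contr K L f d ∈ W := by
  let Φ : (L →ₗ[K] K) →ₗ[K] L :=
    (TensorProduct.lid K L).toLinearMap ∘ₗ (LinearMap.rTensorHom L).flip d
  have hΦ : ∀ f, Φ f = contr K L f d := fun f => rfl
  refine ⟨LinearMap.range Φ, ⟨?_, ?_⟩, ⟨f, rfl⟩⟩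
  · obtain ⟨W, hW, h⟩ := contr_finite d
    refine Submodule.finiteDimensional_of_le (S₂ := W) ?_
    rintro _ ⟨f, rfl⟩
    exact h f
  · rintro i _ ⟨f, rfl⟩
    let g : L →ₗ[K] K :=
      { toFun := fun a => δK i (f a) - f (δL i a)
        map_add' := fun a b => by simp only [map_add]; ring
        map_smul' := fun k a => by
          simp only [aux_smul δK δL hcompat, map_add, map_smul, smul_eq_mul, Derivation.leibniz,
            RingHom.id_apply]
          ring }
    refine ⟨g, ?_⟩
    have key : ∀ t, δL i (contr K L f t) = contr K L g t + contr K L f (δT i t) := by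
      intro t
      induction t using TensorProduct.induction_on with
      | zero => simp
      | add x y hx hy => simp only [map_add, hx, hy]; ring
      | tmul a c =>
        rw [hδT, map_add, contr_tmul, contr_tmul, contr_tmul, contr_tmul,
          aux_smul δK δL hcompat]
        simp only [g, LinearMap.coe_mk, AddHom.coe_mk, sub_smul]
        ring
    rw [hΦ, hΦ, key, hd, map_zero, add_zero]

theorem contr_span (hcompat : ∀ i a, δL i (algebraMap K L a) = algebraMap K L (δK i a))
    (hδT : ∀ i (a b : L), δT i (a ⊗ₜ[K] b) = (δL i a) ⊗ₜ[K] b + a ⊗ₜ[K] (δL i b))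
    (r : L ⊗[K] L) (hr : r ∈ Submodule.span L {x : L ⊗[K] L | ∀ i, δT i x = 0})
    (f : L →ₗ[K] K) :
    ∃ W : Submodule K L, FinStable δL W ∧ contr K L f r ∈ W := by
  induction hr using Submodule.span_induction generalizing f with
  | mem x hx => exact contr_const δK δL δT hcompat hδT x hx f
  | zero => exact ⟨⊥, ⟨inferInstance, by simp⟩, by simp⟩
  | add x y _ _ hx hy =>
    obtain ⟨W, hW, h⟩ := hx f
    obtain ⟨W', hW', h'⟩ := hy f
    refine ⟨W ⊔ W', hW.sup hW', ?_⟩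
    rw [map_add]
    exact Submodule.add_mem_sup h h'
  | smul l x _ hx => rw [contr_smul]; exact hx _

theorem dot_eq_span :
    dotSet (Set.range fun a : L => a ⊗ₜ[K] (1 : L)) {x : L ⊗[K] L | ∀ i, δT i x = 0}
      = Submodule.span L {x : L ⊗[K] L | ∀ i, δT i x = 0} := by
  ext x
  constructor
  · rintro ⟨n, s, t, hs, ht, rfl⟩
    refine Submodule.sum_mem _ fun i _ => ?_
    obtain ⟨a, ha⟩ := hs i
    have : s i * t i = a • t i := by
      rw [← ha, Algebra.smul_def]; rfl
    rw [this]
    exact Submodule.smul_mem _ _ (Submodule.subset_span (ht i))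
  · intro hx
    obtain ⟨n, f, g, rfl⟩ := Submodule.mem_span_set'.1 hx
    refine ⟨n, fun i => f i ⊗ₜ 1, fun i => g i, fun i => ⟨_, rfl⟩, fun i => (g i).2, ?_⟩
    refine Finset.sum_congr rfl fun i _ => ?_
    rw [Algebra.smul_def]; rfl

/-- The subalgebra `L · T^Δ`. -/
theorem exists_B : ∃ B : Subalgebra L (L ⊗[K] L),
    Subalgebra.toSubmodule B = Submodule.span L {x : L ⊗[K] L | ∀ i, δT i x = 0} := by
  let M : Submonoid (L ⊗[K] L) :=
    { carrier := {x : L ⊗[K] L | ∀ i, δT i x = 0}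
      one_mem' := fun i => by simp
      mul_mem' := fun {a b} ha hb i => by simp [ha i, hb i] }
  refine ⟨Algebra.adjoin L (M : Set (L ⊗[K] L)), ?_⟩
  rw [Algebra.adjoin_eq_span, Submonoid.closure_eq]
  rfl

theorem frac_iff (B : Subalgebra L (L ⊗[K] L))
    (hB : Subalgebra.toSubmodule B = Submodule.span L {x : L ⊗[K] L | ∀ i, δT i x = 0})
    (x : L ⊗[K] L) :
    x ∈ fracSet (Set.range fun a : L => a ⊗ₜ[K] (1 : L)) {x : L ⊗[K] L | ∀ i, δT i x = 0} ↔
      ∃ r ∈ B, IsUnit r ∧ x * r ∈ B := by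
  have h : ∀ y, y ∈ dotSet (Set.range fun a : L => a ⊗ₜ[K] (1 : L))
      {x : L ⊗[K] L | ∀ i, δT i x = 0} ↔ y ∈ B := by
    intro y
    rw [dot_eq_span, ← hB]; rfl
  constructor
  · rintro ⟨r, r', hr, hr', hu, he⟩
    exact ⟨r', (h _).1 hr', hu, by rw [he]; exact (h _).1 hr⟩
  · rintro ⟨r, hr, hu, hx⟩
    exact ⟨_, r, (h _).2 hx, (h _).2 hr, hu, rfl⟩
end

theorem map_mul_deriv {n : ℕ} {R : Type*} [CommRing R] (δ : Derivation ℤ R R)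
    (M N : Matrix (Fin n) (Fin n) R) :
    (M * N).map (fun x => δ x) = M.map (fun x => δ x) * N + M * N.map (fun x => δ x) := by
  ext p q
  simp only [Matrix.map_apply, Matrix.mul_apply, map_sum, Derivation.leibniz, smul_eq_mul,
    Matrix.add_apply, ← Finset.sum_add_distrib]
  refine Finset.sum_congr rfl fun l _ => ?_
  ring

theorem forward_dir {m : ℕ}
    (K L : Type*) [Field K] [Field L] [Algebra K L]
    (δK : Fin m → Derivation ℤ K K) (δL : Fin m → Derivation ℤ L L)
    (δT : Fin m → Derivation ℤ (L ⊗[K] L) (L ⊗[K] L))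
    (hδT : ∀ i (a b : L), δT i (a ⊗ₜ[K] b) = (δL i a) ⊗ₜ[K] b + a ⊗ₜ[K] (δL i b))
    (B : Subalgebra L (L ⊗[K] L))
    (hB : Subalgebra.toSubmodule B = Submodule.span L {x : L ⊗[K] L | ∀ i, δT i x = 0})
    (hPV : IsPicardVessiot K L δK δL) (b : L) :
    ∃ r ∈ B, IsUnit r ∧ ((1 : L) ⊗ₜ[K] b) * r ∈ B := by
  obtain ⟨-, n, A, Y, -, hY, hgen⟩ := hPV
  let R : L →ₐ[K] L ⊗[K] L := Algebra.TensorProduct.includeRight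
  let S : L →ₐ[K] L ⊗[K] L := Algebra.TensorProduct.includeLeft
  have hR : ∀ x, R x = 1 ⊗ₜ x := fun x => rfl
  have hS : ∀ x, S x = x ⊗ₜ 1 := fun x => rfl
  have hδR : ∀ i x, δT i (R x) = R (δL i x) := by
    intro i x; simp [hR, hδT]
  have hδS : ∀ i x, δT i (S x) = S (δL i x) := by
    intro i x; simp [hS, hδT]
  have hBS : ∀ x, S x ∈ B := fun x => B.algebraMap_mem x
  have hBc : ∀ x, (∀ i, δT i x = 0) → x ∈ B := by
    intro x hx
    rw [← Subalgebra.mem_toSubmodule, hB]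
    exact Submodule.subset_span hx
  let YL : Matrix (Fin n) (Fin n) L := Y
  let YS := YL.map S
  let YR := YL.map R
  let YI := ((Y⁻¹ : GL (Fin n) L) : Matrix (Fin n) (Fin n) L).map S
  have hinv1 : YS * YI = 1 := by
    have : YL * ((Y⁻¹ : GL (Fin n) L) : Matrix (Fin n) (Fin n) L) = 1 := by
      simp [YL, ← Units.val_mul]
    simp only [YS, YI]
    rw [← Matrix.map_mul, this]
    simp
  have hinv2 : YI * YS = 1 := mul_eq_one_comm.1 hinv1
  let Z := YI * YR
  have hZ : YR = YS * Z := by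
    simp only [Z]; rw [← mul_assoc, hinv1, one_mul]
  have hYS : ∀ i, YS.map (fun x => δT i x) = (A i).map (algebraMap K _) * YS := by
    intro i
    have h := congrArg (fun M => M.map S) (hY i)
    simp only [Matrix.map_mul] at h
    ext p q
    have h2 := congrFun (congrFun h p) q
    simp only [Matrix.map_apply, Matrix.mul_apply, AlgHom.commutes] at h2
    simp only [YS, YL, Matrix.map_apply, Matrix.mul_apply, hδS, h2]
  have hYR : ∀ i, YR.map (fun x => δT i x) = (A i).map (algebraMap K _) * YR := by
    intro i
    have h := congrArg (fun M => M.map R) (hY i)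
    simp only [Matrix.map_mul] at h
    ext p q
    have h2 := congrFun (congrFun h p) q
    simp only [Matrix.map_apply, Matrix.mul_apply, AlgHom.commutes] at h2
    simp only [YR, YL, Matrix.map_apply, Matrix.mul_apply, hδR, h2]
  have hZc : ∀ i, Z.map (fun x => δT i x) = 0 := by
    intro i
    have h := hYR i
    have h' : (YS * Z).map (fun x => δT i x) =
        YS.map (fun x => δT i x) * Z + YS * Z.map (fun x => δT i x) :=
      map_mul_deriv (δT i) YS Z
    rw [hZ, h', hYS, mul_assoc] at h
    have h2 : YS * Z.map (fun x => δT i x) = 0 := by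
      simpa using h
    have h3 := congrArg (fun M => YI * M) h2
    simpa [← mul_assoc, hinv2] using h3
  have hYB : ∀ p q, R (YL p q) ∈ B := by
    intro p q
    have : R (YL p q) = ∑ l, S (YL p l) * Z l q := by
      have := congrFun (congrFun hZ p) q
      simpa only [YR, YS, Matrix.map_apply, Matrix.mul_apply] using this
    rw [this]
    refine B.sum_mem fun l _ => B.mul_mem (hBS _) (hBc _ fun i => ?_)
    exact congrFun (congrFun (hZc i) l) q
  have hb : b ∈ IntermediateField.adjoin K {x : L | ∃ p q, YL p q = x} := by
    rw [show IntermediateField.adjoin K {x : L | ∃ p q, YL p q = x} = ⊤ from hgen]; trivial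
  change ∃ r ∈ B, IsUnit r ∧ R b * r ∈ B
  induction hb using IntermediateField.adjoin_induction with
  | mem x hx =>
    obtain ⟨p, q, rfl⟩ := hx
    exact ⟨1, B.one_mem, isUnit_one, by rw [mul_one]; exact hYB p q⟩
  | algebraMap k =>
    refine ⟨1, B.one_mem, isUnit_one, ?_⟩
    rw [mul_one, AlgHom.commutes, ← S.commutes]
    exact hBS _
  | add x y _ _ hx hy =>
    obtain ⟨r, hr, hru, hrx⟩ := hx
    obtain ⟨s, hs, hsu, hsy⟩ := hy
    refine ⟨r * s, B.mul_mem hr hs, hru.mul hsu, ?_⟩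
    have : R (x + y) * (r * s) = (R x * r) * s + r * (R y * s) := by rw [map_add]; ring
    rw [this]
    exact B.add_mem (B.mul_mem hrx hs) (B.mul_mem hr hsy)
  | mul x y _ _ hx hy =>
    obtain ⟨r, hr, hru, hrx⟩ := hx
    obtain ⟨s, hs, hsu, hsy⟩ := hy
    refine ⟨r * s, B.mul_mem hr hs, hru.mul hsu, ?_⟩
    have : R (x * y) * (r * s) = (R x * r) * (R y * s) := by rw [map_mul]; ring
    rw [this]
    exact B.mul_mem hrx hsy
  | inv x _ hx =>
    by_cases h0 : x = 0
    · exact ⟨1, B.one_mem, isUnit_one, by simp [h0]⟩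
    · obtain ⟨r, hr, hru, hrx⟩ := hx
      refine ⟨R x * r, hrx, ((isUnit_iff_ne_zero.2 h0).map R).mul hru, ?_⟩
      rw [← mul_assoc, ← map_mul, inv_mul_cancel₀ h0, map_one, one_mul]
      exact hr

theorem backward_dir {m : ℕ}
    (K L : Type*) [Field K] [CharZero K] [Field L] [Algebra K L]
    (δK : Fin m → Derivation ℤ K K) (δL : Fin m → Derivation ℤ L L)
    (hcL : CommutingDerivations δL)
    (hcompat : ∀ i a, δL i (algebraMap K L a) = algebraMap K L (δK i a))
    (halgcl : IsAlgClosed ↥(constantSubfield δK))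
    (hfg : FinitelyDeltaGenerated K L δL)
    (hnonew : ∀ a : L, (∀ i, δL i a = 0) → a ∈ (algebraMap K L).range)
    (δT : Fin m → Derivation ℤ (L ⊗[K] L) (L ⊗[K] L))
    (hδT : ∀ i (a b : L), δT i (a ⊗ₜ[K] b) = (δL i a) ⊗ₜ[K] b + a ⊗ₜ[K] (δL i b))
    (B : Subalgebra L (L ⊗[K] L))
    (hB : Subalgebra.toSubmodule B = Submodule.span L {x : L ⊗[K] L | ∀ i, δT i x = 0})
    (hfrac : ∀ b : L, ∃ r ∈ B, IsUnit r ∧ ((1 : L) ⊗ₜ[K] b) * r ∈ B) :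
    IsPicardVessiot K L δK δL := by
  classical
  refine ⟨hnonew, ?_⟩
  obtain ⟨S, hS⟩ := hfg
  have hmemB : ∀ x, x ∈ B ↔ x ∈ Submodule.span L {x : L ⊗[K] L | ∀ i, δT i x = 0} := by
    intro x; rw [← hB]; rfl
  -- each element is a quotient of elements of finite stable subspaces
  have hquot : ∀ b : L, ∃ W : Submodule K L, FinStable δL W ∧ ∃ c ∈ W, ∃ e ∈ W, c ≠ 0 ∧ b * c = e := by
    intro b
    obtain ⟨r, hr, hru, hbr⟩ := hfrac b
    obtain ⟨f, hf⟩ := contr_ne_zero r hru.ne_zero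
    obtain ⟨W, hW, hc⟩ := contr_span δK δL δT hcompat hδT r ((hmemB _).1 hr) f
    obtain ⟨W', hW', he⟩ := contr_span δK δL δT hcompat hδT _ ((hmemB _).1 hbr) f
    rw [contr_mul_right] at he
    exact ⟨W ⊔ W', hW.sup hW', _, le_sup_left (a := W) (b := W') hc, _,
      le_sup_right (a := W) (b := W') he, hf, rfl⟩
  have hW : ∃ W : Submodule K L, FinStable δL W ∧
      ∀ b ∈ S, ∃ c ∈ W, ∃ e ∈ W, c ≠ 0 ∧ b * c = e := by
    clear hS
    induction S using Finset.induction_on with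
    | empty => exact ⟨⊥, ⟨inferInstance, by simp⟩, by simp⟩
    | insert a S _ ih =>
      obtain ⟨W, hW, h⟩ := ih
      obtain ⟨W', hW', c, hc, e, he, hh⟩ := hquot a
      refine ⟨W ⊔ W', hW.sup hW', ?_⟩
      intro b hb
      rcases Finset.mem_insert.1 hb with rfl | hb
      · exact ⟨c, le_sup_right (a := W) (b := W') hc, e, le_sup_right (a := W) (b := W') he, hh⟩
      · obtain ⟨c, hc, e, he, hh⟩ := h b hb
        exact ⟨c, le_sup_left (a := W) (b := W') hc, e, le_sup_left (a := W) (b := W') he, hh⟩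
  obtain ⟨W, ⟨hWf, hWs⟩, hSW⟩ := hW
  let n := Module.finrank K W
  let w : Module.Basis (Fin n) K W := Module.finBasis K W
  let A : Fin m → Matrix (Fin n) (Fin n) K :=
    fun i => Matrix.of fun k l => w.repr ⟨δL i (w k), hWs i _ (w k).2⟩ l
  have hA : ∀ i k, δL i (w k : L) = ∑ l, A i k l • (w l : L) := by
    intro i k
    have h := congrArg W.subtype (w.sum_repr ⟨δL i (w k), hWs i _ (w k).2⟩)
    rw [map_sum] at h
    simp only [map_smul, Submodule.subtype_apply] at h
    exact h.symm
  let z : Fin n → L ⊗[K] L := fun k => 1 ⊗ₜ (w k : L)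
  have hz : LinearIndependent L z := by
    have h1 := (w.baseChange L).linearIndependent
    have h2 := h1.map' (W.subtype.baseChange L) (LinearMap.ker_eq_bot.2
      (Module.Flat.lTensor_preserves_injective_linearMap W.subtype Subtype.val_injective))
    have h3 : z = (W.subtype.baseChange L) ∘ (w.baseChange L) := by
      funext k
      simp [z]
    rw [h3]
    exact h2
  have hTL : ∀ i (a : L), δT i (algebraMap L (L ⊗[K] L) a) = algebraMap L (L ⊗[K] L) (δL i a) := by
    intro i a
    change δT i (a ⊗ₜ 1) = (δL i a) ⊗ₜ 1
    simp [hδT]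
  have hδz : ∀ i k, δT i (z k) = ∑ l, (A i).map (algebraMap K L) k l • z l := by
    intro i k
    simp only [z, hδT, Derivation.map_one_eq_zero, TensorProduct.zero_tmul, zero_add, hA,
      TensorProduct.tmul_sum, Matrix.map_apply]
    refine Finset.sum_congr rfl fun l _ => ?_
    rw [algebraMap_smul, TensorProduct.tmul_smul]
  have hCL : ∀ a : L, (∀ i, δL i a = 0) → a ∈ Set.range (algebraMap (constantSubfield δK) L) := by
    intro a ha
    obtain ⟨k, rfl⟩ := hnonew a ha
    refine ⟨⟨k, fun i => ?_⟩, rfl⟩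
    apply (algebraMap K L).injective
    rw [← hcompat, ha, map_zero]
  have hCL' : ∀ i (c : constantSubfield δK), δL i (algebraMap (constantSubfield δK) L c) = 0 := by
    intro i c
    change δL i (algebraMap K L c) = 0
    rw [hcompat, c.2 i, map_zero]
  let D : Subalgebra (constantSubfield δK) (L ⊗[K] L) :=
    { carrier := {x : L ⊗[K] L | ∀ i, δT i x = 0}
      mul_mem' := fun {a b} ha hb i => by simp [ha i, hb i]
      add_mem' := fun {a b} ha hb i => by simp [ha i, hb i]
      algebraMap_mem' := fun c i => by
        rw [IsScalarTower.algebraMap_apply (constantSubfield δK) L (L ⊗[K] L), hTL, hCL', map_zero] }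
  have hred := aux_isReduced K L
  choose r hr hru hrz using hfrac
  obtain ⟨Y, hY⟩ := aux_fund (constantSubfield δK) L (L ⊗[K] L) δL δT hTL hCL hCL' D
    (fun x hx => hx) (fun i => (A i).map (algebraMap K L)) z hz hδz
    (∏ k, r (w k)) (by
      rw [IsUnit.prod_univ_iff]
      exact fun k => hru _)
    ((hmemB _).1 (B.prod_mem fun k _ => hr _))
    (fun k => (hmemB _).1 (by
      rw [← Finset.mul_prod_erase Finset.univ (fun k => r (w k : L)) (Finset.mem_univ k), ← mul_assoc]
      exact B.mul_mem (hrz _) (B.prod_mem fun k _ => hr _)))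
  have hAmap : ∀ i j, ((A j).map (algebraMap K L)).map (fun x => δL i x) =
      ((A j).map (fun x => δK i x)).map (algebraMap K L) := by
    intro i j; ext p q; simp [hcompat]
  refine ⟨n, A, Y, ?_, hY, ?_⟩
  · intro i j
    have hcomm : ((Y : Matrix (Fin n) (Fin n) L).map (fun x => δL j x)).map (fun x => δL i x) =
        ((Y : Matrix (Fin n) (Fin n) L).map (fun x => δL i x)).map (fun x => δL j x) := by
      ext p q; simp [hcL i j]
    rw [hY, hY, map_mul_deriv, map_mul_deriv, hY, hY, hAmap, hAmap, ← mul_assoc, ← mul_assoc,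
      ← add_mul, ← add_mul] at hcomm
    have h2 := Y.isUnit.mul_right_cancel hcomm
    have h3 : ((A j).map (fun x => δK i x) - (A i).map (fun x => δK j x)).map (algebraMap K L)
        = (A i * A j - A j * A i).map (algebraMap K L) := by
      rw [Matrix.map_sub _ (map_sub (algebraMap K L)), Matrix.map_sub _ (map_sub (algebraMap K L)),
        Matrix.map_mul, Matrix.map_mul, sub_eq_sub_iff_add_eq_add, h2]
      exact add_comm _ _
    exact Matrix.map_injective (algebraMap K L).injective h3
  · set E := IntermediateField.adjoin K {x : L | ∃ p q, (Y : Matrix (Fin n) (Fin n) L) p q = x} with hE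
    have hYE : ∀ p q, (Y : Matrix (Fin n) (Fin n) L) p q ∈ E := fun p q =>
      IntermediateField.subset_adjoin _ _ ⟨p, q, rfl⟩
    have hδE : ∀ i, ∀ x ∈ E, δL i x ∈ E := by
      intro i x hx
      induction hx using IntermediateField.adjoin_induction with
      | mem x hx =>
        obtain ⟨p, q, rfl⟩ := hx
        have h := congrFun (congrFun (hY i) p) q
        simp only [Matrix.map_apply, Matrix.mul_apply] at h
        rw [h]
        exact sum_mem fun l _ => mul_mem (E.algebraMap_mem _) (hYE _ _)
      | algebraMap k => rw [hcompat]; exact E.algebraMap_mem _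
      | add x y _ _ hx hy => rw [map_add]; exact add_mem hx hy
      | mul x y hx' hy' hx hy =>
        rw [Derivation.leibniz, smul_eq_mul, smul_eq_mul]
        exact add_mem (mul_mem hx' hy) (mul_mem hy' hx)
      | inv x hx' hx =>
        rw [Derivation.leibniz_inv]
        simp only [smul_eq_mul]
        exact mul_mem (neg_mem (pow_mem (inv_mem hx') 2)) hx
    -- the vector `w` is a constant combination of the columns of `Y`
    let wv : Fin n → L := fun k => (w k : L)
    let v : Fin n → L := ((Y⁻¹ : GL (Fin n) L) : Matrix (Fin n) (Fin n) L).mulVec wv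
    have hv : wv = (Y : Matrix (Fin n) (Fin n) L).mulVec v := by
      simp only [v, Matrix.mulVec_mulVec]
      rw [← Units.val_mul, mul_inv_cancel, Units.val_one, Matrix.one_mulVec]
    clear_value v
    have hvc : ∀ i k, δL i (v k) = 0 := by
      intro i
      have h1 : (Y : Matrix (Fin n) (Fin n) L).mulVec (fun k => δL i (v k)) = 0 := by
        funext k
        have h2 : δL i (wv k) = ∑ l, (algebraMap K L (A i k l)) * wv l := by
          simp only [wv, hA, Algebra.smul_def]
        have h3 : ((A i).map (algebraMap K L)).mulVec wv k = ∑ l, (algebraMap K L (A i k l)) * wv l := by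
          simp [Matrix.mulVec, dotProduct]
        rw [← h3, hv, Matrix.mulVec_mulVec, ← hY i] at h2
        simp only [Matrix.mulVec, dotProduct, map_sum, Derivation.leibniz, smul_eq_mul,
          Matrix.map_apply, Finset.sum_add_distrib] at h2
        simp only [Matrix.mulVec, dotProduct, Pi.zero_apply]
        rw [add_eq_right.symm, h2]
        refine Finset.sum_congr rfl fun l _ => mul_comm _ _
      have h4 := congrArg (((Y⁻¹ : GL (Fin n) L) : Matrix (Fin n) (Fin n) L).mulVec) h1
      rw [Matrix.mulVec_mulVec, ← Units.val_mul, inv_mul_cancel, Units.val_one,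
        Matrix.one_mulVec, Matrix.mulVec_zero] at h4
      exact fun k => congrFun h4 k
    have hwE : ∀ k, (w k : L) ∈ E := by
      intro k
      have : (w k : L) = ∑ l, (Y : Matrix (Fin n) (Fin n) L) k l * v l := congrFun hv k
      rw [this]
      refine sum_mem fun l _ => mul_mem (hYE _ _) ?_
      obtain ⟨c, hc⟩ := hnonew (v l) (fun i => hvc i l)
      rw [← hc]
      exact E.algebraMap_mem c
    have hWE : ∀ x ∈ W, x ∈ E := by
      intro x hx
      have h2 : x = ∑ l, w.repr ⟨x, hx⟩ l • (w l : L) := by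
        have h := congrArg W.subtype (w.sum_repr ⟨x, hx⟩)
        rw [map_sum] at h
        simp only [map_smul, Submodule.subtype_apply] at h
        exact h.symm
      rw [h2]
      exact sum_mem fun l _ => E.smul_mem (hwE l)
    rw [eq_top_iff, ← hS, IntermediateField.adjoin_le_iff]
    rintro x ⟨a, ha, u, rfl⟩
    have haE : a ∈ E := by
      obtain ⟨c, hc, e, he, hc0, hce⟩ := hSW a ha
      rw [eq_div_of_mul_eq hc0 hce]
      exact div_mem (hWE _ he) (hWE _ hc)
    induction u with
    | nil => exact haE
    | cons i u ih => exact hδE i _ ih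

/-- With `K^Δ` algebraically closed and `L|K` finitely `Δ`-generated with
no new constants: `L|K` is Picard-Vessiot iff `L|K` is `Δ`-normal with respect to the
canonical pair `τs, τt : L → L ⊗_K L`, `τs(a) = a ⊗ 1`, `τt(a) = 1 ⊗ a`; that is, iff
`1 ⊗ L ⊆ τs(L)·(L ⊗_K L)^Δ` (fractions with unit denominators). -/
theorem picardVessiot_iff_deltaNormal_tensor {m : ℕ}
    (K L : Type u) [Field K] [CharZero K] [Field L] [CharZero L] [Algebra K L]
    (δK : Fin m → Derivation ℤ K K) (δL : Fin m → Derivation ℤ L L)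
    (hcK : CommutingDerivations δK) (hcL : CommutingDerivations δL)
    (hcompat : ∀ i a, δL i (algebraMap K L a) = algebraMap K L (δK i a))
    (halgcl : IsAlgClosed ↥(constantSubfield δK))
    (hfg : FinitelyDeltaGenerated K L δL)
    (hnonew : ∀ a : L, (∀ i, δL i a = 0) → a ∈ (algebraMap K L).range)
    -- the (unique) `Δ`-ring structure on `L ⊗_K L`:
    (δT : Fin m → Derivation ℤ (L ⊗[K] L) (L ⊗[K] L))
    (hδT : ∀ i (a b : L), δT i (a ⊗ₜ[K] b) = (δL i a) ⊗ₜ[K] b + a ⊗ₜ[K] (δL i b)) :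
    IsPicardVessiot K L δK δL ↔
      ∀ b : L, (1 : L) ⊗ₜ[K] b ∈
        fracSet (Set.range fun a : L => a ⊗ₜ[K] (1 : L)) {x : L ⊗[K] L | ∀ i, δT i x = 0} := by
  obtain ⟨B, hB⟩ := exists_B δT
  constructor
  · intro h b
    rw [frac_iff δT B hB]
    exact forward_dir K L δK δL δT hδT B hB h b
  · intro h
    exact backward_dir K L δK δL hcL hcompat halgcl hfg hnonew δT hδT B hB
      (fun b => (frac_iff δT B hB _).1 (h b))
end

section
/- Let K be a Δ-field whose constant field K^Δ is algebraically closed, and let L|K be a finitely Δ-generated extension of Δ-fields with L^Δ = K^Δ. Let Quot(L ⊗_K L) denote the total ring of fractions of L ⊗_K L (the localization at the multiplicative set of nonzerodivisors), with each derivation δᵢ extended (uniquely) from L ⊗_K L. Then L|K is strongly normal if and only if L|K is Δ-normal with respect to the pair of K-Δ-morphisms τ_s, τ_t : L → Quot(L ⊗_K L) given by τ_s(a) = a ⊗ 1 and τ_t(a) = 1 ⊗ a, i.e., if and only if τ_t(L) ⊆ τ_s(L)Quot(L ⊗_K L)^Δ. -/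
open scoped TensorProduct

universe u

/-- helper -/
theorem isDomain_tensor_frac (K A E N : Type*) [Field K] [CommRing A] [Field E] [Field N]
    [Algebra K A] [Algebra K E] [Algebra A E] [IsScalarTower K A E] [Algebra K N]
    [IsFractionRing A E] [IsDomain (A ⊗[K] N)] : IsDomain (E ⊗[K] N) := by
  have : IsDomain A := (IsFractionRing.injective A E).isDomain
  let g : A ⊗[K] N →ₐ[A] E ⊗[K] N := (Algebra.TensorProduct.map (IsScalarTower.toAlgHom A A E)
    (AlgHom.id K N))
  let _ : Algebra (A ⊗[K] N) (E ⊗[K] N) := RingHom.toAlgebra g.toRingHom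
  have : IsScalarTower A (A ⊗[K] N) (E ⊗[K] N) := .of_algebraMap_eq' g.comp_algebraMap.symm
  have hl := IsLocalization.tensorProduct_tensorProduct K N (nonZeroDivisors A) E (by
    ext a
    change g (1 ⊗ₜ a) = 1 ⊗ₜ a
    simp [g])
  have h0 : Algebra.algebraMapSubmonoid (A ⊗[K] N) (nonZeroDivisors A) ≤ nonZeroDivisors _ := by
    apply Submonoid.map_le_of_le_comap
    intro a ha
    simp only [Submonoid.mem_comap, mem_nonZeroDivisors_iff_ne_zero] at ha ⊢
    intro h
    refine ha (Algebra.TensorProduct.includeLeft_injective (R := K) (S := K) (A := A) (B := N) (algebraMap K N).injective ?_)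
    rw [map_zero]; exact h
  exact IsLocalization.isDomain_of_le_nonZeroDivisors _ h0

open scoped IntermediateField.algebraAdjoinAdjoin in
/-- helper -/
theorem isDomain_tensor_adjoin {K L N : Type*} [Field K] [Field L] [Algebra K L]
    [Field N] [Algebra K N] {ι : Type*} {x : ι → L}
    (hx : AlgebraicIndependent K x) :
    IsDomain ((IntermediateField.adjoin K (Set.range x)) ⊗[K] N) := by
  let A := Algebra.adjoin K (Set.range x)
  let E := IntermediateField.adjoin K (Set.range x)
  have e1 : A ⊗[K] N ≃ₐ[K] N ⊗[K] MvPolynomial ι K :=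
    (Algebra.TensorProduct.comm K A N).trans
    (Algebra.TensorProduct.congr AlgEquiv.refl hx.aevalEquiv.symm)
  have e2 : N ⊗[K] MvPolynomial ι K ≃ₐ[N] MvPolynomial ι N := MvPolynomial.algebraTensorAlgEquiv K N
  have hd : IsDomain (A ⊗[K] N) := (e1.toRingEquiv.trans e2.toRingEquiv).toMulEquiv.isDomain
  exact isDomain_tensor_frac K A E N

/-- helper -/
theorem isReduced_tensor_algebraic (F E L : Type*) [Field E] [CharZero E] [Field F] [Field L]
    [Algebra E F] [Algebra E L] [Algebra.IsAlgebraic E L] : IsReduced (F ⊗[E] L) := by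
  refine IsReduced.tensorProduct_of_flat_of_forall_fg fun B hB => ?_
  have : Algebra.FiniteType E B := B.fg_iff_finiteType.mp hB
  have hh : IsField B := Subalgebra.isField_of_algebraic B
  have : Algebra.IsAlgebraic E B := Algebra.IsAlgebraic.of_injective B.val Subtype.val_injective
  let _ : Field B := hh.toField
  have : Algebra.FormallyUnramified E B := Algebra.FormallyUnramified.of_isSeparable E B
  exact Algebra.FormallyUnramified.isReduced_of_field F _

/-- helper -/
theorem isReduced_tensor_algebraic' (D E L : Type*) [Field E] [CharZero E] [CommRing D] [IsDomain D]
    [Field L] [Algebra E D] [Algebra E L] [Algebra.IsAlgebraic E L] : IsReduced (L ⊗[E] D) := by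
  let F := FractionRing D
  have h := isReduced_tensor_algebraic F E L
  have := isReduced_of_injective _ (Algebra.TensorProduct.comm E L F).injective
  let f : L ⊗[E] D →ₐ[E] L ⊗[E] F := Algebra.TensorProduct.map (AlgHom.id E L) (IsScalarTower.toAlgHom E D F)
  have hf : Function.Injective f :=
    Module.Flat.lTensor_preserves_injective_linearMap (IsScalarTower.toAlgHom E D F).toLinearMap
      (IsFractionRing.injective D F)
  exact isReduced_of_injective f hf

/-- helper -/
theorem isReduced_tensor (K L N : Type*) [Field K] [CharZero K] [Field L] [Algebra K L]
    [Field N] [Algebra K N] :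
    IsReduced (L ⊗[K] N) := by
  obtain ⟨s, hs⟩ := exists_isTranscendenceBasis K L
  let E := IntermediateField.adjoin K (Set.range ((↑) : s → L))
  have : IsDomain (E ⊗[K] N) := isDomain_tensor_adjoin hs.1
  have : Algebra.IsAlgebraic E L := hs.isAlgebraic_field
  have : CharZero E := charZero_of_injective_algebraMap (algebraMap K E).injective
  have := isReduced_tensor_algebraic' (E ⊗[K] N) E L
  exact isReduced_of_injective _ (Algebra.TensorProduct.cancelBaseChange K E E L N).symm.injective

/-- helper -/
def wordApp {R : Type*} [CommRing R] {m : ℕ} (δ : Fin m → Derivation ℤ R R) (w : List (Fin m))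
    (a : R) : R := w.foldr (fun i y => δ i y) a

theorem wordApp_map {T R : Type*} [CommRing T] [CommRing R] {m : ℕ} {δ : Fin m → Derivation ℤ T T}
    {δ' : Fin m → Derivation ℤ R R} {π : T →+* R} (h : ∀ i a, δ' i (π a) = π (δ i a))
    (w : List (Fin m)) (a : T) : π (wordApp δ w a) = wordApp δ' w (π a) := by
  induction w with
  | nil => rfl
  | cons i w ih =>
    change π (δ i (wordApp δ w a)) = δ' i (wordApp δ' w (π a))
    rw [← h, ih]

theorem wordApp_sum {R : Type*} [CommRing R] {m : ℕ} {δ : Fin m → Derivation ℤ R R}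
    {ι : Type*} [Fintype ι] (c f : ι → R) (hc : ∀ i j, δ i (c j) = 0) (w : List (Fin m)) :
    wordApp δ w (∑ j, c j * f j) = ∑ j, c j * wordApp δ w (f j) := by
  induction w with
  | nil => rfl
  | cons i w ih =>
    change δ i (wordApp δ w _) = ∑ j, c j * δ i (wordApp δ w (f j))
    rw [ih, map_sum]
    refine Finset.sum_congr rfl fun j _ => ?_
    simp [Derivation.leibniz, hc]

theorem wordApp_zero {R : Type*} [CommRing R] {m : ℕ} {δ : Fin m → Derivation ℤ R R}
    (w : List (Fin m)) : wordApp δ w 0 = 0 := by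
  induction w with
  | nil => rfl
  | cons i w ih =>
    change δ i (wordApp δ w _) = 0
    rw [ih, map_zero]

/-- helper: minimal support argument -/
theorem exists_const_of_stable {M : Type*} [Field M] {m : ℕ} (δ : Fin m → Derivation ℤ M M)
    {ι : Type*} [Fintype ι] (A : Submodule M (ι → M))
    (hA : ∀ c ∈ A, ∀ i, (fun j => δ i (c j)) ∈ A) (hne : A ≠ ⊥) :
    ∃ c ∈ A, c ≠ 0 ∧ ∀ i j, δ i (c j) = 0 := by
  classical
  let P : ℕ → Prop := fun n => ∃ c ∈ A, c ≠ 0 ∧ (Finset.univ.filter fun j => c j ≠ 0).card = n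
  have hP : ∃ n, P n := by
    obtain ⟨c, hc, h0⟩ := A.ne_bot_iff.mp hne
    exact ⟨_, c, hc, h0, rfl⟩
  obtain ⟨c, hc, h0, hn⟩ := Nat.find_spec hP
  obtain ⟨k, hk⟩ := Function.ne_iff.mp h0
  simp only [Pi.zero_apply] at hk
  let d : ι → M := (c k)⁻¹ • c
  have hd : d ∈ A := A.smul_mem _ hc
  have hdk : d k = 1 := by simp [d, hk]
  refine ⟨d, hd, fun h => by simp [h] at hdk, fun i j => ?_⟩
  by_contra hij
  have hlt : (Finset.univ.filter fun j => δ i (d j) ≠ 0).card < Nat.find hP := by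
    rw [← hn]
    apply Finset.card_lt_card
    refine ⟨fun j hj => ?_, fun h => ?_⟩
    · simp only [Finset.mem_filter, Finset.mem_univ, true_and] at hj ⊢
      intro h
      simp [d, h] at hj
    · have := h (Finset.mem_filter.mpr ⟨Finset.mem_univ k, hk⟩)
      simp [hdk] at this
  exact Nat.find_min hP hlt ⟨_, hA d hd i, fun h => hij (congrFun h j), rfl⟩

/-- helper -/
theorem exists_wronskian {M : Type*} [Field M] {m : ℕ} (δ : Fin m → Derivation ℤ M M)
    {ι : Type*} [Fintype ι] [DecidableEq ι] (f : ι → M)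
    (hf : ∀ c : ι → M, (∀ i j, δ i (c j) = 0) → ∑ j, c j * f j = 0 → c = 0) :
    ∃ w : ι → List (Fin m), (Matrix.of fun k j => wordApp δ (w k) (f j)).det ≠ 0 := by
  let v : List (Fin m) → ι → M := fun w j => wordApp δ w (f j)
  have hspan : Submodule.span M (Set.range v) = ⊤ := by
    by_contra hne
    obtain ⟨φ, hφ0, hφ⟩ := Submodule.exists_le_ker_of_lt_top _ (lt_top_iff_ne_top.mpr hne)
    let A : Submodule M (ι → M) :=
      { carrier := {c | ∀ w, ∑ j, c j * v w j = 0}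
        add_mem' := by
          intro a b ha hb w
          simp only [Set.mem_ofPred_eq] at ha hb
          simp [add_mul, Finset.sum_add_distrib, ha w, hb w]
        zero_mem' := by intro w; simp
        smul_mem' := by
          intro r a ha w
          simp only [Set.mem_ofPred_eq] at ha
          simp [mul_assoc, ← Finset.mul_sum, ha w] }
    have hAs : ∀ c ∈ A, ∀ i, (fun j => δ i (c j)) ∈ A := by
      intro c hc i w
      have h1 := congrArg (δ i) (hc w)
      have h2 := hc (i :: w)
      have h3 : ∀ j, v (i :: w) j = δ i (v w j) := fun j => rfl
      simp only [h3] at h2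
      simp only [map_sum, map_zero, Derivation.leibniz, smul_eq_mul, Finset.sum_add_distrib, h2,
        zero_add] at h1
      rw [← h1]
      exact Finset.sum_congr rfl fun j _ => mul_comm _ _
    have hAne : A ≠ ⊥ := by
      refine A.ne_bot_iff.mpr ⟨fun j => φ (Pi.single j 1), fun w => ?_, fun h => hφ0 ?_⟩
      · have : φ (v w) = 0 := hφ (Submodule.subset_span ⟨w, rfl⟩)
        rw [← this, LinearMap.pi_apply_eq_sum_univ φ (v w)]
        refine Finset.sum_congr rfl fun j _ => ?_
        rw [smul_eq_mul, mul_comm]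
        congr 1
        change φ (Pi.single j 1) = _
        congr 1
        funext k; simp [Pi.single_apply, eq_comm]
      · refine LinearMap.pi_ext' fun j => LinearMap.ext_ring ?_
        exact congrFun h j
    obtain ⟨c, hc, hc0, hcc⟩ := exists_const_of_stable δ A hAs hAne
    exact hc0 (hf c hcc (hc []))
  obtain ⟨κ, a, -, hs, hli⟩ := exists_linearIndependent' M v
  let b := Module.Basis.mk hli (by rw [hs, hspan])
  let e := (Pi.basisFun M ι).indexEquiv b
  refine ⟨fun k => a (e k), ?_⟩
  have : LinearIndependent M (Matrix.of fun k j => wordApp δ (a (e k)) (f j)).row :=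
    hli.comp e e.injective
  rw [Matrix.linearIndependent_rows_iff_isUnit, Matrix.isUnit_iff_isUnit_det] at this
  exact this.ne_zero

/-- helper: linear dependence over constants specializes. -/
theorem dep_specialize {T M N : Type*} [CommRing T] [Field M] [Field N] {m : ℕ}
    {δT : Fin m → Derivation ℤ T T} {δM : Fin m → Derivation ℤ M M} {δN : Fin m → Derivation ℤ N N}
    {φ : T →+* M} {ψ : T →+* N} (hφ : ∀ i a, δM i (φ a) = φ (δT i a))
    (hψ : ∀ i a, δN i (ψ a) = ψ (δT i a)) (hker : ∀ t, ψ t = 0 → φ t = 0)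
    {ι : Type*} [Fintype ι] (f : ι → T) (c : ι → N) (hc : ∀ i j, δN i (c j) = 0) (hc0 : c ≠ 0)
    (hsum : ∑ j, c j * ψ (f j) = 0) :
    ∃ d : ι → M, (∀ i j, δM i (d j) = 0) ∧ d ≠ 0 ∧ ∑ j, d j * φ (f j) = 0 := by
  classical
  by_contra hcon
  push Not at hcon
  obtain ⟨w, hw⟩ := exists_wronskian δM (fun j => φ (f j)) (fun d hd hs => by
    by_contra h0; exact hcon d hd h0 hs)
  apply hw
  have e1 : (Matrix.of fun k j => wordApp δM (w k) (φ (f j))) =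
      φ.mapMatrix (Matrix.of fun k j => wordApp δT (w k) (f j)) := by
    ext k j; simp [wordApp_map hφ]
  rw [e1, ← RingHom.map_det]
  apply hker
  rw [RingHom.map_det]
  refine Matrix.exists_mulVec_eq_zero_iff.mp ⟨c, hc0, ?_⟩
  ext k
  have h1 := congrArg (wordApp δN (w k)) hsum
  rw [wordApp_sum c _ hc, wordApp_zero] at h1
  simp only [Matrix.mulVec, dotProduct, RingHom.mapMatrix_apply, Matrix.map_apply, Matrix.of_apply,
    wordApp_map hψ, Pi.zero_apply]
  rw [← h1]
  exact Finset.sum_congr rfl fun j _ => mul_comm _ _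

/-- helper: uniqueness of extension, as commutation. -/
theorem commuting_of_frac {T R : Type*} [CommRing T] [CommRing R] {m : ℕ}
    {δT : Fin m → Derivation ℤ T T} {δR : Fin m → Derivation ℤ R R} {π : T →+* R}
    (h : ∀ i a, δR i (π a) = π (δT i a)) (hfr : ∀ r, ∃ s t, IsUnit (π t) ∧ r * π t = π s)
    (hc : CommutingDerivations δT) : CommutingDerivations δR := by
  intro i j r
  obtain ⟨s, t, hu, e⟩ := hfr r
  have key : ∀ a, ⁅δR i, δR j⁆ (π a) = 0 := by
    intro a
    rw [Derivation.commutator_apply, h, h, h, h, hc i j, sub_self]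
  have h1 := congrArg (fun z => ⁅δR i, δR j⁆ z) e
  rw [Derivation.leibniz, key, key, smul_zero, zero_add, smul_eq_mul, mul_comm] at h1
  have h2 := (hu.mul_left_eq_zero).mp h1
  rwa [Derivation.commutator_apply, sub_eq_zero] at h2

/-- helper: extension of a derivation to the residue field of a stable prime. -/
theorem exists_residue_der {T M : Type*} [CommRing T] [Field M] (π : T →+* M)
    (hfr : ∀ r, ∃ s t, IsUnit (π t) ∧ r * π t = π s)
    (δ : Derivation ℤ T T) (h : ∀ a, π a = 0 → π (δ a) = 0) :
    ∃ D : Derivation ℤ M M, ∀ x : T, D (π x) = π (δ x) := by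
  let q := RingHom.ker π
  let _ : Algebra (T ⧸ q) M := (RingHom.kerLift π).toAlgebra
  have hal : ∀ a, algebraMap (T ⧸ q) M (Ideal.Quotient.mk q a) = π a := fun a => rfl
  have hinj : Function.Injective (algebraMap (T ⧸ q) M) := RingHom.kerLift_injective π
  have : IsDomain (T ⧸ q) := hinj.isDomain (algebraMap (T ⧸ q) M)
  have : FaithfulSMul (T ⧸ q) M := (faithfulSMul_iff_algebraMap_injective _ _).mpr hinj
  have : IsFractionRing (T ⧸ q) M := by
    refine IsFractionRing.of_field _ _ fun z => ?_
    obtain ⟨s, t, hu, e⟩ := hfr z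
    refine ⟨Ideal.Quotient.mk q s, Ideal.Quotient.mk q t, ?_⟩
    rw [hal, hal, eq_div_iff hu.ne_zero, e]
  let f0 : T →+* TrivSqZeroExt M M :=
    { toFun := fun a => (π a, π (δ a))
      map_one' := by
        apply TrivSqZeroExt.ext
        · change π 1 = 1
          simp
        · change π (δ 1) = 0
          simp
      map_zero' := by
        apply TrivSqZeroExt.ext
        · change π 0 = 0
          simp
        · change π (δ 0) = 0
          simp
      map_add' := by
        intro a b
        apply TrivSqZeroExt.ext
        · change π (a + b) = π a + π b
          simp
        · change π (δ (a + b)) = π (δ a) + π (δ b)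
          simp
      map_mul' := by
        intro a b
        apply TrivSqZeroExt.ext
        · change π (a * b) = π a * π b
          simp
        · change π (δ (a * b)) = π a * π (δ b) + π (δ a) * π b
          simp [mul_comm] }
  have hf0 : ∀ a, f0 a = (π a, π (δ a)) := fun a => rfl
  let f1 : T ⧸ q →+* TrivSqZeroExt M M := Ideal.Quotient.lift q f0 (by
    intro a ha
    rw [hf0, h a ha, RingHom.mem_ker.mp ha]
    rfl)
  have hf1' : ∀ a, f1 (Ideal.Quotient.mk q a) = f0 a := fun a => Ideal.Quotient.lift_mk _ _ _
  have hf1 : ∀ y : nonZeroDivisors (T ⧸ q), IsUnit (f1 y) := by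
    rintro ⟨y, hy⟩
    obtain ⟨a, rfl⟩ := Ideal.Quotient.mk_surjective y
    rw [TrivSqZeroExt.isUnit_iff_isUnit_fst, hf1', hf0]
    change IsUnit (algebraMap (T ⧸ q) M (Ideal.Quotient.mk q a))
    exact IsLocalization.map_units M ⟨_, hy⟩
  let g : M →+* TrivSqZeroExt M M := IsLocalization.lift hf1
  have hg : ∀ x : T, g (π x) = f0 x := fun x => by
    rw [← hal, IsLocalization.lift_eq, hf1']
  have hfst : ∀ x, (g x).fst = x := by
    have : ((TrivSqZeroExt.fstHom M M M).toRingHom.comp g) = RingHom.id M := by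
      apply IsLocalization.ringHom_ext (nonZeroDivisors (T ⧸ q))
      apply Ideal.Quotient.ringHom_ext
      ext x
      change (g (π x)).fst = π x
      rw [hg]; rfl
    intro x
    exact congrArg (fun k => k x) this
  refine ⟨Derivation.mk' (AddMonoidHom.toIntLinearMap
    { toFun := fun x => (g x).snd
      map_zero' := by rw [map_zero]; rfl
      map_add' := fun a b => by rw [map_add]; rfl }) ?_, ?_⟩
  · intro a b
    change (g (a * b)).snd = a * (g b).snd + b * (g a).snd
    rw [map_mul, TrivSqZeroExt.snd_mul, hfst, hfst, op_smul_eq_smul]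
    rfl
  · intro x
    change (g (π x)).snd = _
    rw [hg]; rfl

theorem minimalPrime_stable {T : Type*} [CommRing T] [IsReduced T] (q : Ideal T)
    (hq : q ∈ minimalPrimes T) (δ : Derivation ℤ T T) (a : T) (ha : a ∈ q) : δ a ∈ q := by
  have hp : q.IsPrime := hq.1.1
  obtain ⟨s, hs, hsa⟩ : ∃ s ∉ q, s * a = 0 := by
    have hmem := ha
    by_contra hcon
    push Not at hcon
    -- multiplicative set generated by complement and powers of a
    have h0 : ∀ s ∉ q, ∀ n : ℕ, s * a ^ n ≠ 0 := by
      intro s hs n h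
      apply hcon s hs
      apply pow_eq_zero_iff (n := n + 1) (by omega) |>.mp
      rw [mul_pow, pow_succ' a, pow_succ s]
      calc s ^ n * s * (a * a ^ n) = s ^ n * a * (s * a ^ n) := by ring
        _ = 0 := by rw [h, mul_zero]
    let S : Submonoid T := q.primeCompl ⊔ Submonoid.powers a
    have hS : Disjoint ((⊥ : Ideal T) : Set T) S := by
      rw [Set.disjoint_left]
      rintro x hx hxS
      obtain ⟨s, hs, t, ⟨n, rfl⟩, rfl⟩ := Submonoid.mem_sup.mp hxS
      exact h0 s hs n (by simpa using hx)
    obtain ⟨p, hpp, -, hpd⟩ := Ideal.exists_le_prime_disjoint _ _ hS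
    have hpq : p ≤ q := by
      intro x hx
      by_contra hxq
      exact Set.disjoint_left.mp hpd hx (Submonoid.mem_sup_left hxq)
    have : q ≤ p := hq.2 ⟨hpp, bot_le⟩ hpq
    exact Set.disjoint_left.mp hpd (this ha) (Submonoid.mem_sup_right (Submonoid.mem_powers a))
  have h1 := congrArg (fun z => s * δ z) hsa
  simp only [Derivation.leibniz, smul_eq_mul, map_zero, mul_zero] at h1
  have h2 : s * (s * δ a) = 0 := by
    have : s * (s * δ a + a * δ s) = s * (s * δ a) + (s * a) * δ s := by ring
    rw [this, hsa] at h1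
    simpa using h1
  have h3 : s * (s * δ a) ∈ q := by rw [h2]; exact q.zero_mem
  exact (hp.mem_or_mem ((hp.mem_or_mem h3).resolve_left hs)).resolve_left hs

theorem compat_of_frac {T Q N : Type*} [CommRing T] [CommRing Q] [CommRing N]
    {δT : Derivation ℤ T T} {δQ : Derivation ℤ Q Q} {δN : Derivation ℤ N N}
    {π : T →+* Q} (h : ∀ a, δQ (π a) = π (δT a)) (hfr : ∀ r, ∃ s t, IsUnit (π t) ∧ r * π t = π s)
    (χ : Q →+* N) (hχ : ∀ a, δN (χ (π a)) = χ (π (δT a))) (r : Q) : δN (χ r) = χ (δQ r) := by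
  obtain ⟨s, t, hu, e⟩ := hfr r
  have h1 := congrArg (fun z => χ (δQ z)) e
  have h2 := congrArg (fun z => δN (χ z)) e
  simp only [Derivation.leibniz, h, map_add, map_mul, smul_eq_mul, hχ] at h1 h2
  rw [← h1] at h2
  have h3 := add_left_cancel h2
  exact (hu.map χ).mul_left_cancel h3

theorem dotSet_repr {L N : Type*} [Field L] [Field N] {m : ℕ}
    {δL : Fin m → Derivation ℤ L L} {δN : Fin m → Derivation ℤ N N} (σ : L →+* N)
    (hσ : ∀ i a, δN i (σ a) = σ (δL i a)) {ι : Type*} (B : Module.Basis ι (constantSubfield δL) L)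
    (S : Set N) (hS : ∀ s ∈ S, ∃ a, σ a = s)
    (x : N) (hx : x ∈ dotSet S {a : N | ∀ i, δN i a = 0}) :
    ∃ c : ι →₀ N, (∀ i j, δN i (c j) = 0) ∧ x = c.sum fun j a => a * σ (B j) := by
  have hmem : x ∈ Submodule.span (constantSubfield δN) (Set.range fun j => σ (B j)) := by
    obtain ⟨n, s, t, hs, ht, rfl⟩ := hx
    refine Submodule.sum_mem _ fun k _ => ?_
    obtain ⟨a, ha⟩ := hS _ (hs k)
    have h1 : s k * t k = (⟨t k, ht k⟩ : constantSubfield δN) • σ a := by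
      rw [ha, mul_comm]; rfl
    rw [h1]
    refine Submodule.smul_mem _ _ ?_
    rw [← B.linearCombination_repr a, Finsupp.linearCombination_apply, Finsupp.sum, map_sum]
    refine Submodule.sum_mem _ fun j _ => ?_
    have h2 : σ ((B.repr a) j • B j) =
      (⟨σ ((B.repr a) j : L), fun i => by rw [hσ, ((B.repr a) j).2 i, map_zero]⟩ :
        constantSubfield δN) • σ (B j) := by
      rw [Subfield.smul_def, smul_eq_mul, map_mul]; rfl
    rw [h2]
    exact Submodule.smul_mem _ _ (Submodule.subset_span ⟨j, rfl⟩)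
  obtain ⟨c, hc⟩ := (Finsupp.mem_span_range_iff_exists_finsupp).mp hmem
  refine ⟨c.mapRange (fun z : constantSubfield δN => (z : N)) rfl, fun i j => (c j).2 i, ?_⟩
  rw [← hc, Finsupp.sum_mapRange_index (by simp)]
  rfl

theorem const_indep {L M : Type*} [Field L] [Field M] {m : ℕ}
    {δL : Fin m → Derivation ℤ L L} {δM : Fin m → Derivation ℤ M M} (σ : L →+* M)
    (hσ : ∀ i a, δM i (σ a) = σ (δL i a)) {ι : Type*} (B : Module.Basis ι (constantSubfield δL) L)
    (F : Finset ι) (d : F → M) (hd : ∀ i j, δM i (d j) = 0)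
    (hs : ∑ j, d j * σ (B j) = 0) : d = 0 := by
  by_contra h0
  obtain ⟨e, he, he0, hes⟩ := dep_specialize (δT := δL) (δM := δL) (δN := δM)
    (φ := RingHom.id L) (ψ := σ) (fun _ _ => rfl) hσ (fun t ht => by simpa using ht)
    (fun j : F => B j) d hd h0 hs
  have hli := (B.linearIndependent.comp (fun j : F => (j : ι)) Subtype.val_injective)
  rw [Fintype.linearIndependent_iff] at hli
  apply he0
  funext j
  have := hli (fun j => ⟨e j, fun i => he i j⟩) (by simpa [Subfield.smul_def] using hes) j
  exact congrArg Subtype.val this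

universe v

theorem exists_residue_field_aux {T : Type v} [CommRing T] (q : Ideal T) [q.IsPrime] :
    ∃ (N : Type v) (_ : Field N) (ψ : T →+* N), (∀ t, ψ t = 0 ↔ t ∈ q) ∧
      (∀ r, ∃ s t, IsUnit (ψ t) ∧ r * ψ t = ψ s) := by
  refine ⟨FractionRing (T ⧸ q), inferInstance,
    (algebraMap (T ⧸ q) _).comp (Ideal.Quotient.mk q), fun t => ?_, fun r => ?_⟩
  · rw [← Ideal.Quotient.eq_zero_iff_mem]
    exact map_eq_zero_iff _ (IsFractionRing.injective (T ⧸ q) (FractionRing (T ⧸ q)))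
  · obtain ⟨⟨s, t⟩, e⟩ := IsLocalization.surj (nonZeroDivisors (T ⧸ q)) r
    obtain ⟨s, rfl⟩ := Ideal.Quotient.mk_surjective s
    obtain ⟨t, ht⟩ := t
    obtain ⟨t, rfl⟩ := Ideal.Quotient.mk_surjective t
    exact ⟨s, t, IsLocalization.map_units (FractionRing (T ⧸ q)) ⟨_, ht⟩, e⟩

theorem exists_residue_field {T : Type v} [CommRing T] {m : ℕ} (δT : Fin m → Derivation ℤ T T)
    (q : Ideal T) [q.IsPrime] (hst : ∀ i, ∀ a ∈ q, δT i a ∈ q) :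
    ∃ (N : Type v) (_ : Field N) (ψ : T →+* N) (δN : Fin m → Derivation ℤ N N),
      (∀ t, ψ t = 0 ↔ t ∈ q) ∧ (∀ r, ∃ s t, IsUnit (ψ t) ∧ r * ψ t = ψ s) ∧
      (∀ i x, δN i (ψ x) = ψ (δT i x)) := by
  obtain ⟨N, hN, ψ, h0, hfr⟩ := exists_residue_field_aux q
  have hex : ∀ i, ∃ D : Derivation ℤ N N, ∀ x, D (ψ x) = ψ (δT i x) := fun i =>
    exists_residue_der ψ hfr (δT i) fun a ha => (h0 _).mpr (hst i a ((h0 a).mp ha))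
  choose δN hδN using hex
  exact ⟨N, hN, ψ, δN, h0, hfr, hδN⟩

theorem core_mpr {m : ℕ}
    (K L : Type v) [Field K] [CharZero K] [Field L] [Algebra K L]
    (δK : Fin m → Derivation ℤ K K) (δL : Fin m → Derivation ℤ L L)
    (δT : Fin m → Derivation ℤ (L ⊗[K] L) (L ⊗[K] L))
    (hδT : ∀ i (a b : L), δT i (a ⊗ₜ[K] b) = (δL i a) ⊗ₜ[K] b + a ⊗ₜ[K] (δL i b))
    (Q : Type v) [CommRing Q] [Algebra (L ⊗[K] L) Q] [IsFractionRing (L ⊗[K] L) Q]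
    (δQ : Fin m → Derivation ℤ Q Q)
    (hδQ : ∀ i x, δQ i (algebraMap (L ⊗[K] L) Q x) = algebraMap (L ⊗[K] L) Q (δT i x))
    (h : ∀ b : L, algebraMap (L ⊗[K] L) Q ((1 : L) ⊗ₜ[K] b) ∈
        fracSet (Set.range fun a : L => algebraMap (L ⊗[K] L) Q (a ⊗ₜ[K] (1 : L)))
          {x : Q | ∀ i, δQ i x = 0}) :
    StronglyNormalCond.{v} K L δK δL := by
  intro M _ _ _ δM hcM hKM τs τt hs ht b
  have hred : IsReduced (L ⊗[K] L) := isReduced_tensor K L L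
  let φ : L ⊗[K] L →ₐ[K] M := Algebra.TensorProduct.productMap τs τt
  have hφ : ∀ i t, δM i (φ t) = φ (δT i t) := by
    intro i t
    induction t with
    | zero => simp
    | add x y hx hy => simp [hx, hy]
    | tmul x y =>
      simp only [φ, hδT, map_add, Algebra.TensorProduct.productMap_apply_tmul, hs, ht,
        Derivation.leibniz, smul_eq_mul]
      ring
  have hpp : (RingHom.ker φ).IsPrime := RingHom.ker_isPrime φ
  obtain ⟨q, hq, hqp⟩ := Ideal.exists_minimalPrimes_le (bot_le : ⊥ ≤ RingHom.ker φ)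
  have hqP : q.IsPrime := hq.1.1
  obtain ⟨N, _, ψ, δN, hψ0, hfrN, hδN⟩ := exists_residue_field δT q
    (fun i a => minimalPrime_stable q hq (δT i) a)
  let χ : Q →+* N := IsLocalization.lift (M := nonZeroDivisors (L ⊗[K] L)) (g := ψ) (by
    rintro ⟨y, hy⟩
    rw [isUnit_iff_ne_zero, ne_eq, hψ0]
    exact fun hyq => notMem_nonZeroDivisors_of_mem_mem_minimalPrimes hyq hq hy)
  have hχ : ∀ t, χ (algebraMap _ Q t) = ψ t := fun t => IsLocalization.lift_eq _ _
  have hfrQ : ∀ r : Q, ∃ s t, IsUnit (algebraMap (L ⊗[K] L) Q t) ∧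
      r * algebraMap (L ⊗[K] L) Q t = algebraMap (L ⊗[K] L) Q s := by
    intro r
    obtain ⟨⟨s, t⟩, e⟩ := IsLocalization.surj (nonZeroDivisors (L ⊗[K] L)) r
    exact ⟨s, t, IsLocalization.map_units Q t, e⟩
  have hχδ : ∀ i r, δN i (χ r) = χ (δQ i r) := fun i r =>
    compat_of_frac (hδQ i) hfrQ χ (fun a => by rw [hχ, hχ, hδN]) r
  have hdot : ∀ r, r ∈ dotSet (Set.range fun a : L => algebraMap (L ⊗[K] L) Q (a ⊗ₜ[K] (1 : L)))
          {x : Q | ∀ i, δQ i x = 0} → χ r ∈ dotSet (Set.range fun a : L => ψ (a ⊗ₜ[K] (1 : L)))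
          {x : N | ∀ i, δN i x = 0} := by
    rintro r ⟨n, s, t, hs, ht, rfl⟩
    refine ⟨n, fun k => χ (s k), fun k => χ (t k), fun k => ?_, fun k i => ?_, by simp⟩
    · obtain ⟨a, ha⟩ := hs k
      refine ⟨a, ?_⟩
      change ψ _ = χ (s k)
      rw [← ha, hχ]
    · rw [hχδ, ht k i, map_zero]
  obtain ⟨r, r', hr, hr', hru, hrr⟩ := h b
  let B := Module.Basis.ofVectorSpace (constantSubfield δL) L
  let σ : L →+* N := ψ.comp Algebra.TensorProduct.includeLeftRingHom
  have hσ : ∀ i a, δN i (σ a) = σ (δL i a) := by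
    intro i a
    change δN i (ψ (a ⊗ₜ 1)) = ψ ((δL i a) ⊗ₜ 1)
    exact (hδN i _).trans (congrArg ψ ((hδT i a 1).trans (by simp)))
  obtain ⟨c, hc, hcr⟩ := dotSet_repr σ hσ B _ (by rintro _ ⟨a, rfl⟩; exact ⟨a, rfl⟩) _ (hdot r hr)
  obtain ⟨c', hc', hcr'⟩ := dotSet_repr σ hσ B _ (by rintro _ ⟨a, rfl⟩; exact ⟨a, rfl⟩) _ (hdot r' hr')
  classical
  let F := c.support ∪ c'.support
  rw [Finsupp.sum_of_support_subset (s := F) _ Finset.subset_union_left _ (by simp),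
    ← Finset.sum_coe_sort] at hcr
  rw [Finsupp.sum_of_support_subset (s := F) _ Finset.subset_union_right _ (by simp),
    ← Finset.sum_coe_sort] at hcr'
  have hrN : ψ (1 ⊗ₜ b) * χ r' = χ r := by rw [← hχ, ← map_mul, hrr]
  have hr'0 : χ r' ≠ 0 := (hru.map χ).ne_zero
  have hrel := hrN
  rw [hcr, hcr'] at hrel
  obtain ⟨d, hd, hd0, hds⟩ := dep_specialize (δT := δT) (δM := δM) (δN := δN)
    (φ := (φ : L ⊗[K] L →+* M)) (ψ := ψ) hφ (fun i a => hδN i a)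
    (fun t ht => hqp ((hψ0 t).mp ht))
    (fun k : F ⊕ F => Sum.elim (fun j : F => ((1 : L) ⊗ₜ[K] b) * (B j ⊗ₜ[K] (1 : L)))
      (fun j : F => - (B j ⊗ₜ[K] (1 : L))) k) (Sum.elim (fun j => c' j) (fun j => c j))
    (by rintro i (j | j); exacts [hc' i j, hc i j])
    (by
      intro h0
      apply hr'0
      rw [hcr']
      refine Finset.sum_eq_zero fun j _ => ?_
      have : c' j = 0 := congrFun h0 (Sum.inl j)
      rw [this, zero_mul])
    (by
      rw [Fintype.sum_sum_type]
      simp only [Sum.elim_inl, Sum.elim_inr, map_mul, map_neg, mul_neg, Finset.sum_neg_distrib]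
      rw [add_neg_eq_zero]
      refine Eq.trans ?_ hrel
      rw [Finset.mul_sum]
      refine Finset.sum_congr rfl fun j _ => ?_
      change _ * (_ * ψ _) = _ * (_ * ψ _)
      simp only [Algebra.TensorProduct.includeLeftRingHom_apply]
      ring)
  have hφl : ∀ a, φ (a ⊗ₜ 1) = τs a := fun a => by simp [φ]
  have hφr : ∀ a, φ (1 ⊗ₜ a) = τt a := fun a => by simp [φ]
  rw [Fintype.sum_sum_type] at hds
  simp only [Sum.elim_inl, Sum.elim_inr, map_mul, map_neg, mul_neg, Finset.sum_neg_distrib,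
    RingHom.coe_coe, hφl, hφr] at hds
  rw [add_neg_eq_zero] at hds
  have hmem : ∀ e : F → M, (∀ i j, δM i (e j) = 0) → ∑ j, e j * τs (B j) ∈
      dotSet (Set.range ⇑τs) {a : M | ∀ i, δM i a = 0} := by
    intro e he
    let ε := Fintype.equivFin F
    refine ⟨Fintype.card F, fun k => τs (B (ε.symm k)), fun k => e (ε.symm k), fun k => ⟨_, rfl⟩,
      fun k i => he i _, ?_⟩
    rw [← ε.symm.sum_comp]
    exact Finset.sum_congr rfl fun j _ => mul_comm _ _
  have hrel2 : τt b * ∑ j, d (Sum.inl j) * τs (B j) = ∑ j, d (Sum.inr j) * τs (B j) := by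
    rw [← hds, Finset.mul_sum]
    exact Finset.sum_congr rfl fun j _ => by ring
  refine ⟨_, _, hmem (fun j => d (Sum.inr j)) (fun i j => hd i _),
    hmem (fun j => d (Sum.inl j)) (fun i j => hd i _), ?_, hrel2⟩
  rw [isUnit_iff_ne_zero]
  intro h0
  rw [h0, mul_zero] at hrel2
  have hind := const_indep (δL := δL) (δM := δM) (τs : L →+* M) (fun i a => (hs i a).symm) B F
  have e1 := hind (fun j => d (Sum.inl j)) (fun i j => hd i _) h0
  have e2 := hind (fun j => d (Sum.inr j)) (fun i j => hd i _) hrel2.symm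
  apply hd0
  funext k
  rcases k with j | j
  exacts [congrFun e1 j, congrFun e2 j]

theorem der_aeval_mem {K L : Type*} [Field K] [Field L] [Algebra K L] (K' E : IntermediateField K L)
    (hle : K' ≤ E) (δ : Derivation ℤ L L) (hK' : ∀ a ∈ K', δ a ∈ E) (x : L) (hx : x ∈ E)
    (p : Polynomial K') :
    ∃ e ∈ E, δ (Polynomial.aeval x p) = e + Polynomial.aeval x p.derivative * δ x := by
  have hmem : ∀ a : K', algebraMap K' L a ∈ E := fun a => hle a.2
  have hmem' : ∀ a : K', δ (algebraMap K' L a) ∈ E := fun a => hK' _ a.2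
  induction p using Polynomial.induction_on with
  | C a =>
    refine ⟨δ (algebraMap K' L a), hmem' a, by simp⟩
  | add p q hp hq =>
    obtain ⟨e, he, h1⟩ := hp
    obtain ⟨f, hf, h2⟩ := hq
    refine ⟨e + f, add_mem he hf, ?_⟩
    simp only [map_add, h1, h2]
    ring
  | monomial n a ih =>
    obtain ⟨e, he, h1⟩ := ih
    refine ⟨x * e, mul_mem hx he, ?_⟩
    rw [pow_succ, ← mul_assoc, map_mul, Polynomial.derivative_mul, Derivation.leibniz, h1]
    simp only [Polynomial.aeval_X, smul_eq_mul, map_mul, map_add, map_pow, Polynomial.derivative_X,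
      mul_one, Polynomial.aeval_C]
    ring

theorem essFinite_of_basis {m : ℕ} {K L : Type*} [Field K] [CharZero K] [Field L]
    [Algebra K L]
    {δK : Fin m → Derivation ℤ K K} {δL : Fin m → Derivation ℤ L L}
    (hcompat : ∀ i a, δL i (algebraMap K L a) = algebraMap K L (δK i a))
    (hfg : FinitelyDeltaGenerated K L δL) (B : Set L) (hfin : B.Finite)
    (hB : IsTranscendenceBasis K ((↑) : B → L)) : Algebra.EssFiniteType K L := by
  rw [← IntermediateField.fg_top_iff]
  obtain ⟨S, hS⟩ := hfg
  let K' := IntermediateField.adjoin K B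
  have hfinA : (B ∪ (⋃ i, (fun x => δL i x) '' B) ∪ (S : Set L)).Finite :=
    (hfin.union (Set.finite_iUnion fun i => hfin.image _)).union S.finite_toSet
  let E := IntermediateField.adjoin K (B ∪ (⋃ i, (fun x => δL i x) '' B) ∪ (S : Set L))
  have hle : K' ≤ E := IntermediateField.adjoin.mono _ _ _
    (Set.subset_union_left.trans Set.subset_union_left)
  have halg : Algebra.IsAlgebraic K' L := by
    have alg := hB.isAlgebraic_field
    rwa [Subtype.range_coe] at alg
  have hK' : ∀ i, ∀ a ∈ K', δL i a ∈ E := by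
    intro i a ha
    induction ha using IntermediateField.adjoin_induction with
    | mem x hx =>
      exact IntermediateField.subset_adjoin _ _ (Or.inl (Or.inr (Set.mem_iUnion.mpr ⟨i, x, hx, rfl⟩)))
    | algebraMap x => rw [hcompat]; exact E.algebraMap_mem _
    | add x y hx hy h1 h2 => rw [map_add]; exact add_mem h1 h2
    | inv x hx h1 =>
      rw [Derivation.leibniz_inv, smul_eq_mul]
      exact mul_mem (neg_mem (pow_mem (inv_mem (hle hx)) _)) h1
    | mul x y hx hy h1 h2 =>
      rw [Derivation.leibniz]
      exact add_mem (mul_mem (hle hx) h2) (mul_mem (hle hy) h1)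
  have hE : ∀ i, ∀ x ∈ E, δL i x ∈ E := by
    intro i x hx
    obtain ⟨e, he, h1⟩ := der_aeval_mem K' E hle (δL i) (hK' i) x hx (minpoly K' x)
    have hint : IsIntegral K' x := (halg.isAlgebraic x).isIntegral
    have hsep : (minpoly K' x).Separable := (minpoly.irreducible hint).separable
    have hne := hsep.aeval_derivative_ne_zero (minpoly.aeval K' x)
    rw [minpoly.aeval, map_zero] at h1
    have h2 : δL i x = - e / Polynomial.aeval x (minpoly K' x).derivative := by
      rw [eq_div_iff hne]; linear_combination -h1
    rw [h2]
    refine div_mem (neg_mem he) ?_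
    have h3 : Polynomial.aeval x (minpoly K' x).derivative =
      ((Polynomial.aeval (⟨x, hx⟩ : E)
        ((minpoly K' x).derivative.map (IntermediateField.inclusion hle : K' →+* E)) : E) : L) := by
      rw [Polynomial.aeval_def, Polynomial.aeval_def, Polynomial.eval₂_map]
      change _ = algebraMap E L _
      rw [Polynomial.hom_eval₂]
      rfl
    rw [h3]
    exact Subtype.mem _
  refine ⟨hfinA.toFinset, ?_⟩
  rw [hfinA.coe_toFinset]
  change E = ⊤
  rw [← top_le_iff, ← hS, IntermediateField.adjoin_le_iff]
  rintro x ⟨a, ha, w, rfl⟩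
  induction w with
  | nil => exact IntermediateField.subset_adjoin _ _ (Or.inr ha)
  | cons i w ih => exact hE i _ ih

theorem dotSet_adjoin {L N : Type*} [Field L] [Field N] [Algebra L N] (C : Set N) (x : N)
    (hx : x ∈ dotSet (Set.range (algebraMap L N)) C) :
    ∃ Γ : Finset N, (Γ : Set N) ⊆ C ∧ x ∈ IntermediateField.adjoin L (Γ : Set N) := by
  classical
  obtain ⟨n, s, t, hs, ht, rfl⟩ := hx
  refine ⟨Finset.univ.image t, ?_, sum_mem fun i _ => mul_mem ?_ ?_⟩
  · intro y hy
    obtain ⟨i, -, rfl⟩ := Finset.mem_image.mp (Finset.mem_coe.mp hy)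
    exact ht i
  · obtain ⟨a, ha⟩ := hs i
    rw [← ha]; exact IntermediateField.algebraMap_mem _ _
  · exact IntermediateField.subset_adjoin _ _ (by simp)

theorem fracSet_adjoin {L N : Type*} [Field L] [Field N] [Algebra L N] (C : Set N) (x : N)
    (hx : x ∈ fracSet (Set.range (algebraMap L N)) C) :
    ∃ Γ : Finset N, (Γ : Set N) ⊆ C ∧ x ∈ IntermediateField.adjoin L (Γ : Set N) := by
  classical
  obtain ⟨r, r', hr, hr', hu, e⟩ := hx
  obtain ⟨Γ, h1, h2⟩ := dotSet_adjoin C r hr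
  obtain ⟨Γ', h1', h2'⟩ := dotSet_adjoin C r' hr'
  refine ⟨Γ ∪ Γ', by simp [h1, h1'], ?_⟩
  rw [eq_div_of_mul_eq hu.ne_zero e]
  exact div_mem (IntermediateField.adjoin.mono _ _ _ (by simp) h2)
    (IntermediateField.adjoin.mono _ _ _ (by simp) h2')

theorem finite_of_algInd {m : ℕ} {K L N : Type*} [Field K] [Field L] [Algebra K L] [Field N]
    [Algebra L N] {δL : Fin m → Derivation ℤ L L} {δN : Fin m → Derivation ℤ N N}
    (hfg : FinitelyDeltaGenerated K L δL)
    (hσ : ∀ i a, δN i (algebraMap L N a) = algebraMap L N (δL i a))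
    (ρ : L →+* N) (hρ : ∀ i a, δN i (ρ a) = ρ (δL i a))
    (hK : ∀ a : K, ρ (algebraMap K L a) = algebraMap L N (algebraMap K L a))
    (h : ∀ b, ρ b ∈ fracSet (Set.range (algebraMap L N)) {a : N | ∀ i, δN i a = 0})
    (B : Set L) (hB : AlgebraicIndependent L (fun b : B => ρ b)) : B.Finite := by
  classical
  obtain ⟨S, hS⟩ := hfg
  choose Γ hΓ hΓ' using fun b => fracSet_adjoin _ _ (h b)
  let G := S.biUnion Γ
  let F := IntermediateField.adjoin L (G : Set N)
  have hF : ∀ i, ∀ x ∈ F, δN i x ∈ F := by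
    intro i x hx
    induction hx using IntermediateField.adjoin_induction with
    | mem x hx =>
      obtain ⟨a, ha, hxa⟩ := Finset.mem_biUnion.mp (Finset.mem_coe.mp hx)
      rw [hΓ a hxa i]; exact zero_mem _
    | algebraMap x => rw [hσ]; exact F.algebraMap_mem _
    | add x y hx hy h1 h2 => rw [map_add]; exact add_mem h1 h2
    | inv x hx h1 =>
      rw [Derivation.leibniz_inv, smul_eq_mul]
      exact mul_mem (neg_mem (pow_mem (inv_mem hx) _)) h1
    | mul x y hx hy h1 h2 =>
      rw [Derivation.leibniz]
      exact add_mem (mul_mem hx h2) (mul_mem hy h1)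
  have hw : ∀ a ∈ S, ∀ w : List (Fin m), ρ (w.foldr (fun i y => δL i y) a) ∈ F := by
    intro a ha w
    induction w with
    | nil => exact IntermediateField.adjoin.mono _ _ _ (Finset.subset_biUnion_of_mem Γ ha) (hΓ' a)
    | cons i w ih =>
      simp only [List.foldr_cons]
      rw [← hρ]
      exact hF i _ ih
  have hall : ∀ b, ρ b ∈ F := by
    intro b
    have hb : b ∈ IntermediateField.adjoin K
      {x : L | ∃ a ∈ S, ∃ w : List (Fin m), x = w.foldr (fun i y => δL i y) a} := by
      rw [hS]; trivial
    induction hb using IntermediateField.adjoin_induction with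
    | mem x hx => obtain ⟨a, ha, w, rfl⟩ := hx; exact hw a ha w
    | algebraMap x => rw [hK]; exact F.algebraMap_mem _
    | add x y hx hy h1 h2 => rw [map_add]; exact add_mem h1 h2
    | inv x hx h1 => rw [map_inv₀]; exact inv_mem h1
    | mul x y hx hy h1 h2 => rw [map_mul]; exact mul_mem h1 h2
  have : Algebra.EssFiniteType L F := IntermediateField.essFiniteType_iff.mpr ⟨G, rfl⟩
  have hB' : AlgebraicIndependent L (fun b : B => (⟨ρ b, hall b⟩ : F)) :=
    AlgebraicIndependent.of_comp F.val hB
  exact Set.finite_coe_iff.mp (finite_of_algebraicIndependent hB')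

universe w

theorem mem_all_minimalPrimes {Q : Type*} [CommRing Q] [IsReduced Q] (x : Q)
    (h : ∀ p ∈ minimalPrimes Q, x ∈ p) : x = 0 := by
  have h1 : x ∈ sInf (⊥ : Ideal Q).minimalPrimes := by
    rw [Ideal.mem_sInf]; exact fun {p} hp => h p hp
  rw [Ideal.sInf_minimalPrimes] at h1
  have h2 : IsNilpotent x := by
    obtain ⟨n, hn⟩ := h1
    exact ⟨n, by simpa using hn⟩
  exact h2.eq_zero

theorem prime_minimal_of_total {Q : Type*} [CommRing Q] [IsReduced Q] [IsNoetherianRing Q]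
    (hu : ∀ x ∈ nonZeroDivisors Q, IsUnit x) (p : Ideal Q) (hp : p.IsPrime) :
    p ∈ minimalPrimes Q := by
  have hfin := minimalPrimes.finite_of_isNoetherianRing Q
  have hsub : (p : Set Q) ⊆ ⋃ i ∈ (↑hfin.toFinset : Set (Ideal Q)), (id i : Ideal Q) := by
    intro x hx
    have hnu : ¬ IsUnit x := fun h => hp.ne_top (Ideal.eq_top_of_isUnit_mem _ hx h)
    have hx0 : x ∉ nonZeroDivisors Q := fun h => hnu (hu x h)
    rw [mem_nonZeroDivisors_iff_right] at hx0
    push Not at hx0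
    obtain ⟨y, hy, hy0⟩ := hx0
    by_contra hcon
    apply hy0
    refine mem_all_minimalPrimes y fun q hq => ?_
    have hqP : q.IsPrime := hq.1.1
    have h1 : y * x ∈ q := by rw [hy]; exact q.zero_mem
    refine (hqP.mem_or_mem h1).resolve_right fun hxq => hcon ?_
    simp only [Set.mem_iUnion]
    exact ⟨q, by simpa using hq, hxq⟩
  rw [Ideal.subset_union_prime ⊥ ⊥ (fun i hi _ _ => by
    have : i ∈ minimalPrimes Q := by simpa using hi
    exact this.1.1)] at hsub
  obtain ⟨q, hq, hpq⟩ := hsub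
  have hq' : q ∈ minimalPrimes Q := by simpa using hq
  have : p = q := le_antisymm hpq (hq'.2 ⟨hp, bot_le⟩ hpq)
  rw [this]; exact hq'

theorem dotSet_add {R : Type*} [CommRing R] {S T : Set R} {x y : R}
    (hx : x ∈ dotSet S T) (hy : y ∈ dotSet S T) : x + y ∈ dotSet S T := by
  obtain ⟨n, s, t, hs, ht, rfl⟩ := hx
  obtain ⟨n', s', t', hs', ht', rfl⟩ := hy
  refine ⟨n + n', Fin.append s s', Fin.append t t', fun i => ?_, fun i => ?_, ?_⟩
  · refine Fin.addCases (fun i => ?_) (fun i => ?_) i <;> simp [hs, hs']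
  · refine Fin.addCases (fun i => ?_) (fun i => ?_) i <;> simp [ht, ht']
  · rw [Fin.sum_univ_add]; simp

theorem dotSet_zero {R : Type*} [CommRing R] {S T : Set R} : (0 : R) ∈ dotSet S T :=
  ⟨0, Fin.elim0, Fin.elim0, fun i => i.elim0, fun i => i.elim0, by simp⟩

theorem glue_frac {Q : Type*} [CommRing Q] [IsReduced Q] [IsNoetherianRing Q]
    (hu : ∀ x ∈ nonZeroDivisors Q, IsUnit x) {m : ℕ} (δQ : Fin m → Derivation ℤ Q Q)
    (S : Set Q) (x : Q)
    (h : ∀ p ∈ minimalPrimes Q, ∃ r r', r ∈ dotSet S {t | ∀ i, δQ i t ∈ p} ∧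
      r' ∈ dotSet S {t | ∀ i, δQ i t ∈ p} ∧ r' ∉ p ∧ x * r' - r ∈ p) :
    x ∈ fracSet S {t | ∀ i, δQ i t = 0} := by
  classical
  have hfin := minimalPrimes.finite_of_isNoetherianRing Q
  let P := hfin.toFinset
  have hP : ∀ p, p ∈ P ↔ p ∈ minimalPrimes Q := fun p => by simp [P]
  have hmax : ∀ p ∈ minimalPrimes Q, p.IsMaximal := by
    intro p hp
    obtain ⟨M, hM, hpM⟩ := Ideal.exists_le_maximal p hp.1.1.ne_top
    have := prime_minimal_of_total hu M hM.isPrime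
    have e : p = M := le_antisymm hpM (this.2 hp.1 hpM)
    rw [e]; exact hM
  have hidem : ∀ p ∈ minimalPrimes Q, ∃ e : Q, e - 1 ∈ p ∧ ∀ p' ∈ minimalPrimes Q, p' ≠ p → e ∈ p' := by
    intro p hp
    have hcop : IsCoprime p (⨅ j ∈ P.erase p, j) := by
      refine Ideal.isCoprime_biInf fun j hj => ?_
      rw [Finset.mem_erase, hP] at hj
      have := hmax p hp
      have := hmax j hj.2
      exact Ideal.isCoprime_of_isMaximal hj.1.symm
    obtain ⟨u, hu, e, he, hue⟩ := Ideal.isCoprime_iff_exists.mp hcop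
    refine ⟨e, ?_, fun p' hp' hne => ?_⟩
    · have : e - 1 = - u := by rw [← hue]; ring
      rw [this]; exact p.neg_mem hu
    · simp only [Ideal.mem_iInf] at he
      exact he p' (Finset.mem_erase.mpr ⟨hne, (hP p').mpr hp'⟩)
  have hst : ∀ i, ∀ p ∈ minimalPrimes Q, ∀ a ∈ p, δQ i a ∈ p := fun i p hp a ha =>
    minimalPrime_stable p hp (δQ i) a ha
  choose! e he1 he2 using hidem
  choose! r r' hr hr' hr'p hx using h
  have hδe : ∀ p ∈ minimalPrimes Q, ∀ i, ∀ p' ∈ minimalPrimes Q, δQ i (e p) ∈ p' := by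
    intro p hp i p' hp'
    by_cases hpp : p' = p
    · subst hpp
      have := hst i p' hp' _ (he1 p' hp')
      simpa using this
    · exact hst i p' hp' _ (he2 p hp p' hp' hpp)
  have hdot : ∀ p ∈ minimalPrimes Q, ∀ z ∈ dotSet S {t | ∀ i, δQ i t ∈ p},
      e p * z ∈ dotSet S {t | ∀ i, δQ i t = 0} := by
    rintro p hp z ⟨n, s, t, hs, ht, rfl⟩
    refine ⟨n, s, fun k => e p * t k, hs, fun k i => ?_, ?_⟩
    · refine mem_all_minimalPrimes _ fun p' hp' => ?_
      rw [Derivation.leibniz, smul_eq_mul, smul_eq_mul]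
      refine p'.add_mem ?_ (p'.mul_mem_left _ (hδe p hp i p' hp'))
      by_cases hpp : p' = p
      · subst hpp
        exact p'.mul_mem_left _ (ht k i)
      · exact p'.mul_mem_right _ (he2 p hp p' hp' hpp)
    · rw [Finset.mul_sum]
      exact Finset.sum_congr rfl fun k _ => by ring
  have hmod : ∀ z : Ideal Q → Q, ∀ p ∈ minimalPrimes Q, ∑ p' ∈ P, e p' * z p' - z p ∈ p := by
    intro z p hp
    rw [← Finset.add_sum_erase P _ ((hP p).mpr hp)]
    have e1 : e p * z p + ∑ p' ∈ P.erase p, e p' * z p' - z p =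
      (e p - 1) * z p + ∑ p' ∈ P.erase p, e p' * z p' := by ring
    rw [e1]
    refine p.add_mem (p.mul_mem_right _ (he1 p hp)) (p.sum_mem fun p' hp' => ?_)
    rw [Finset.mem_erase, hP] at hp'
    exact p.mul_mem_right _ (he2 p' hp'.2 p hp hp'.1.symm)
  have hsum : ∀ z : Ideal Q → Q, (∀ p ∈ minimalPrimes Q, z p ∈ dotSet S {t | ∀ i, δQ i t ∈ p}) →
      ∑ p' ∈ P, e p' * z p' ∈ dotSet S {t | ∀ i, δQ i t = 0} := by
    intro z hz
    refine Finset.sum_induction _ (· ∈ dotSet S {t | ∀ i, δQ i t = 0})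
      (fun _ _ => dotSet_add) dotSet_zero fun p hp => ?_
    rw [hP] at hp
    exact hdot p hp _ (hz p hp)
  refine ⟨_, _, hsum r hr, hsum r' hr', ?_, ?_⟩
  · by_contra hnu
    obtain ⟨M, hM, hmem⟩ := exists_max_ideal_of_mem_nonunits hnu
    have hMm := prime_minimal_of_total hu M hM.isPrime
    apply hr'p M hMm
    have := M.sub_mem hmem (hmod r' M hMm)
    simpa using this
  · rw [← sub_eq_zero]
    refine mem_all_minimalPrimes _ fun p hp => ?_
    have h1 := p.mul_mem_left x (hmod r' p hp)
    have h2 := hmod r p hp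
    have h3 := hx p hp
    have := p.add_mem (p.sub_mem h1 h2) h3
    convert this using 1
    ring

theorem sn_residue {m : ℕ} {K L : Type w} [Field K] [CharZero K] [Field L] [Algebra K L]
    {δK : Fin m → Derivation ℤ K K} {δL : Fin m → Derivation ℤ L L}
    (hcompat : ∀ i a, δL i (algebraMap K L a) = algebraMap K L (δK i a))
    (hSN : StronglyNormalCond.{w} K L δK δL)
    {R : Type w} [CommRing R] {δR : Fin m → Derivation ℤ R R} (hcR : CommutingDerivations δR)
    (ls lt : L →+* R) (hK : ∀ a : K, lt (algebraMap K L a) = ls (algebraMap K L a))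
    (hls : ∀ i a, δR i (ls a) = ls (δL i a)) (hlt : ∀ i a, δR i (lt a) = lt (δL i a))
    {N : Type w} [Field N] {ψ : R →+* N} {δN : Fin m → Derivation ℤ N N}
    (hfr : ∀ r, ∃ s t, IsUnit (ψ t) ∧ r * ψ t = ψ s)
    (hδN : ∀ i x, δN i (ψ x) = ψ (δR i x)) (b : L) :
    ψ (lt b) ∈ fracSet (Set.range fun a => ψ (ls a)) {x : N | ∀ i, δN i x = 0} := by
  letI : Algebra K N := ((ψ.comp ls).comp (algebraMap K L)).toAlgebra
  haveI : CharZero N := charZero_of_injective_algebraMap (algebraMap K N).injective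
  let τs : L →ₐ[K] N := { (ψ.comp ls) with commutes' := fun a => rfl }
  let τt : L →ₐ[K] N := { (ψ.comp lt) with commutes' := fun a => congrArg ψ (hK a) }
  have := hSN N δN (commuting_of_frac hδN hfr hcR)
    (fun i a => by
      change δN i (ψ (ls _)) = ψ (ls _)
      rw [hδN, hls, hcompat]) τs τt
    (fun i a => by
      change ψ (ls _) = δN i (ψ (ls _))
      rw [hδN, hls])
    (fun i a => by
      change ψ (lt _) = δN i (ψ (lt _))
      rw [hδN, hlt]) b
  exact this

/-- lift membership in the fraction set from the residue field to the ring -/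
theorem lift_local {Q N : Type*} [CommRing Q] [Field N] {m : ℕ} {δQ : Fin m → Derivation ℤ Q Q}
    {δN : Fin m → Derivation ℤ N N} {ψ : Q →+* N} (p : Ideal Q) (h0 : ∀ t, ψ t = 0 ↔ t ∈ p)
    (hsurj : Function.Surjective ψ) (hδN : ∀ i x, δN i (ψ x) = ψ (δQ i x))
    {L : Type*} (ls : L → Q) (x : Q)
    (hx : ψ x ∈ fracSet (Set.range fun a => ψ (ls a)) {x : N | ∀ i, δN i x = 0}) :
    ∃ r r', r ∈ dotSet (Set.range ls) {t | ∀ i, δQ i t ∈ p} ∧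
      r' ∈ dotSet (Set.range ls) {t | ∀ i, δQ i t ∈ p} ∧ r' ∉ p ∧ x * r' - r ∈ p := by
  have key : ∀ r ∈ dotSet (Set.range fun a => ψ (ls a)) {x : N | ∀ i, δN i x = 0},
      ∃ r₀ ∈ dotSet (Set.range ls) {t | ∀ i, δQ i t ∈ p}, ψ r₀ = r := by
    rintro r ⟨n, s, t, hs, ht, rfl⟩
    choose a ha using hs
    choose t₀ ht₀ using fun k => hsurj (t k)
    refine ⟨∑ k, ls (a k) * t₀ k, ⟨n, fun k => ls (a k), t₀, fun k => ⟨_, rfl⟩,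
      fun k i => ?_, rfl⟩, ?_⟩
    · rw [← h0, ← hδN, ht₀]; exact ht k i
    · simp only [map_sum, map_mul, ht₀]
      exact Finset.sum_congr rfl fun k _ => by rw [← ha k]
  obtain ⟨r, r', hr, hr', hu, e⟩ := hx
  obtain ⟨r₀, h1, rfl⟩ := key r hr
  obtain ⟨r₀', h1', rfl⟩ := key r' hr'
  refine ⟨r₀, r₀', h1, h1', fun h => hu.ne_zero ((h0 _).mpr h), ?_⟩
  rw [← h0, map_sub, map_mul, e, sub_self]

theorem exists_minprime_algInd (K L : Type*) [Field K] [Field L] [Algebra K L] (B : Set L)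
    (hB : AlgebraicIndependent K ((↑) : B → L)) :
    ∃ q ∈ minimalPrimes (L ⊗[K] L), ∀ p : MvPolynomial B L,
      (MvPolynomial.aeval (fun b : B => (1 : L) ⊗ₜ[K] (b : L)) p : L ⊗[K] L) ∈ q → p = 0 := by
  let f : MvPolynomial B L →ₐ[L] L ⊗[K] L :=
    MvPolynomial.aeval (fun b : B => (1 : L) ⊗ₜ[K] (b : L))
  let g : L ⊗[K] MvPolynomial B K →ₐ[L] L ⊗[K] L :=
    Algebra.TensorProduct.map (AlgHom.id L L) (MvPolynomial.aeval ((↑) : B → L))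
  have hg : Function.Injective g :=
    Module.Flat.lTensor_preserves_injective_linearMap (M := L)
      (MvPolynomial.aeval ((↑) : B → L) : MvPolynomial B K →ₐ[K] L).toLinearMap hB
  have hfg : ∀ p, f p = g ((MvPolynomial.algebraTensorAlgEquiv K L).symm p) := by
    intro p
    have : f = g.comp (MvPolynomial.algebraTensorAlgEquiv (σ := B) K L).symm.toAlgHom := by
      apply MvPolynomial.algHom_ext
      intro b
      simp [f, g]
    rw [this]; rfl
  have hf : Function.Injective f := by
    intro x y hxy
    rw [hfg, hfg] at hxy
    exact (MvPolynomial.algebraTensorAlgEquiv K L).symm.injective (hg hxy)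
  have hcom : (⊥ : Ideal (L ⊗[K] L)).comap (f : MvPolynomial B L →+* L ⊗[K] L) = ⊥ := by
    rw [eq_bot_iff]
    intro p hp
    rw [Ideal.mem_comap] at hp
    exact hf (by simpa using hp)
  obtain ⟨q, hq, hqe⟩ := Ideal.exists_minimalPrimes_comap_eq
    (I := (⊥ : Ideal (L ⊗[K] L))) (f : MvPolynomial B L →+* L ⊗[K] L) ⊥ (by
      rw [hcom]
      exact ⟨⟨Ideal.isPrime_bot, le_refl _⟩, fun _ _ _ => bot_le⟩)
  refine ⟨q, hq, fun p hp => ?_⟩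
  have : p ∈ (⊥ : Ideal (MvPolynomial B L)) := by rw [← hqe]; exact hp
  simpa using this

theorem tensor_commuting {m : ℕ} {K L : Type*} [Field K] [Field L] [Algebra K L]
    {δL : Fin m → Derivation ℤ L L} (hcL : CommutingDerivations δL)
    (δT : Fin m → Derivation ℤ (L ⊗[K] L) (L ⊗[K] L))
    (hδT : ∀ i (a b : L), δT i (a ⊗ₜ[K] b) = (δL i a) ⊗ₜ[K] b + a ⊗ₜ[K] (δL i b)) :
    CommutingDerivations δT := by
  intro i j x
  induction x with
  | zero => exact (by simp : δT i (δT j 0) = δT j (δT i 0))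
  | add x y hx hy =>
    have h1 : δT i (δT j (x + y)) = δT i (δT j x) + δT i (δT j y) := by simp
    have h2 : δT j (δT i (x + y)) = δT j (δT i x) + δT j (δT i y) := by simp
    exact h1.trans ((congrArg₂ (· + ·) hx hy).trans h2.symm)
  | tmul a b =>
    have h1 : ∀ i j, δT i (δT j (a ⊗ₜ[K] b)) =
      (δL i (δL j a)) ⊗ₜ[K] b + (δL j a) ⊗ₜ[K] (δL i b) +
      ((δL i a) ⊗ₜ[K] (δL j b) + a ⊗ₜ[K] (δL i (δL j b))) := by
      intro i j
      rw [hδT, map_add, hδT, hδT]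
    refine (h1 i j).trans (Eq.trans ?_ (h1 j i).symm)
    rw [hcL i j a, hcL i j b]
    abel

theorem essFinite_of_sn {m : ℕ} {K L : Type w} [Field K] [CharZero K] [Field L] [Algebra K L]
    {δK : Fin m → Derivation ℤ K K} {δL : Fin m → Derivation ℤ L L}
    (hcL : CommutingDerivations δL)
    (hcompat : ∀ i a, δL i (algebraMap K L a) = algebraMap K L (δK i a))
    (hfg : FinitelyDeltaGenerated K L δL)
    (hSN : StronglyNormalCond.{w} K L δK δL)
    (δT : Fin m → Derivation ℤ (L ⊗[K] L) (L ⊗[K] L))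
    (hδT : ∀ i (a b : L), δT i (a ⊗ₜ[K] b) = (δL i a) ⊗ₜ[K] b + a ⊗ₜ[K] (δL i b)) :
    Algebra.EssFiniteType K L := by
  obtain ⟨B, hB⟩ := exists_isTranscendenceBasis K L
  refine essFinite_of_basis hcompat hfg B ?_ hB
  obtain ⟨q, hq, hqB⟩ := exists_minprime_algInd K L B hB.1
  have hred : IsReduced (L ⊗[K] L) := isReduced_tensor K L L
  have hqP : q.IsPrime := hq.1.1
  obtain ⟨N, _, ψ, δN, hψ0, hfrN, hδN⟩ := exists_residue_field δT q
    (fun i a => minimalPrime_stable q hq (δT i) a)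
  let ls : L →+* L ⊗[K] L := Algebra.TensorProduct.includeLeftRingHom
  let lt : L →+* L ⊗[K] L := (Algebra.TensorProduct.includeRight : L →ₐ[K] L ⊗[K] L)
  have hK : ∀ a : K, lt (algebraMap K L a) = ls (algebraMap K L a) := by
    intro a
    change (1 : L) ⊗ₜ[K] (algebraMap K L a) = (algebraMap K L a) ⊗ₜ[K] 1
    rw [Algebra.algebraMap_eq_smul_one, TensorProduct.smul_tmul]
  have hls : ∀ i a, δT i (ls a) = ls (δL i a) := fun i a => (hδT i a 1).trans (by simp [ls])
  have hlt : ∀ i a, δT i (lt a) = lt (δL i a) := fun i a => (hδT i 1 a).trans (by simp [lt])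
  have key := sn_residue hcompat hSN (tensor_commuting hcL δT hδT) ls lt hK hls hlt hfrN hδN
  let _ : Algebra L N := (ψ.comp ls).toAlgebra
  refine finite_of_algInd (K := K) (δL := δL) (δN := δN) hfg
    (fun i a => (hδN i (ls a)).trans (congrArg ψ (hls i a))) (ψ.comp lt)
    (fun i a => (hδN i (lt a)).trans (congrArg ψ (hlt i a)))
    (fun a => congrArg ψ (hK a)) key B ?_
  let ψ' : L ⊗[K] L →ₐ[L] N := { ψ with commutes' := fun a => rfl }
  rw [AlgebraicIndependent, injective_iff_map_eq_zero]
  intro p hp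
  apply hqB
  rw [← hψ0]
  refine Eq.trans ?_ hp
  change ψ' _ = _
  exact MvPolynomial.comp_aeval_apply (fun b : B => (1 : L) ⊗ₜ[K] (b : L)) ψ' p

theorem core_mp {m : ℕ}
    (K L : Type w) [Field K] [CharZero K] [Field L] [Algebra K L]
    (δK : Fin m → Derivation ℤ K K) (δL : Fin m → Derivation ℤ L L)
    (hcL : CommutingDerivations δL)
    (hcompat : ∀ i a, δL i (algebraMap K L a) = algebraMap K L (δK i a))
    (hfg : FinitelyDeltaGenerated K L δL)
    (δT : Fin m → Derivation ℤ (L ⊗[K] L) (L ⊗[K] L))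
    (hδT : ∀ i (a b : L), δT i (a ⊗ₜ[K] b) = (δL i a) ⊗ₜ[K] b + a ⊗ₜ[K] (δL i b))
    (Q : Type w) [CommRing Q] [Algebra (L ⊗[K] L) Q] [IsFractionRing (L ⊗[K] L) Q]
    (δQ : Fin m → Derivation ℤ Q Q)
    (hδQ : ∀ i x, δQ i (algebraMap (L ⊗[K] L) Q x) = algebraMap (L ⊗[K] L) Q (δT i x))
    (hSN : StronglyNormalCond.{w} K L δK δL) (b : L) :
    algebraMap (L ⊗[K] L) Q ((1 : L) ⊗ₜ[K] b) ∈
        fracSet (Set.range fun a : L => algebraMap (L ⊗[K] L) Q (a ⊗ₜ[K] (1 : L)))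
          {x : Q | ∀ i, δQ i x = 0} := by
  have hess : Algebra.EssFiniteType K L := essFinite_of_sn hcL hcompat hfg hSN δT hδT
  have hred : IsReduced (L ⊗[K] L) := isReduced_tensor K L L
  have hNoe : IsNoetherianRing (L ⊗[K] L) := Algebra.EssFiniteType.isNoetherianRing L (L ⊗[K] L)
  have hNQ : IsNoetherianRing Q :=
    IsLocalization.isNoetherianRing (nonZeroDivisors (L ⊗[K] L)) Q hNoe
  have hrQ : IsReduced Q := isReduced_localizationPreserves (nonZeroDivisors (L ⊗[K] L)) Q hred
  have hu : ∀ x ∈ nonZeroDivisors Q, IsUnit x := by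
    intro x hx
    rw [IsFractionRing.nonZeroDivisors_eq_isUnit (L ⊗[K] L) Q] at hx
    exact hx
  have hfrQ : ∀ r : Q, ∃ s t, IsUnit (algebraMap (L ⊗[K] L) Q t) ∧
      r * algebraMap (L ⊗[K] L) Q t = algebraMap (L ⊗[K] L) Q s := by
    intro r
    obtain ⟨⟨s, t⟩, e⟩ := IsLocalization.surj (nonZeroDivisors (L ⊗[K] L)) r
    exact ⟨s, t, IsLocalization.map_units Q t, e⟩
  have hcQ : CommutingDerivations δQ :=
    commuting_of_frac hδQ hfrQ (tensor_commuting hcL δT hδT)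
  let π := algebraMap (L ⊗[K] L) Q
  let ls : L →+* Q := π.comp Algebra.TensorProduct.includeLeftRingHom
  let lt : L →+* Q := π.comp (Algebra.TensorProduct.includeRight : L →ₐ[K] L ⊗[K] L)
  have hK : ∀ a : K, lt (algebraMap K L a) = ls (algebraMap K L a) := by
    intro a
    change π ((1 : L) ⊗ₜ[K] (algebraMap K L a)) = π ((algebraMap K L a) ⊗ₜ[K] 1)
    refine congrArg π ?_
    rw [Algebra.algebraMap_eq_smul_one, TensorProduct.smul_tmul]
  have hls : ∀ i a, δQ i (ls a) = ls (δL i a) := fun i a =>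
    (hδQ i _).trans (congrArg π ((hδT i a 1).trans (by simp)))
  have hlt : ∀ i a, δQ i (lt a) = lt (δL i a) := fun i a =>
    (hδQ i _).trans (congrArg π ((hδT i 1 a).trans (by simp)))
  refine glue_frac hu δQ (Set.range ls) (lt b) fun p hp => ?_
  have hpP : p.IsPrime := hp.1.1
  have hpM : p.IsMaximal := by
    obtain ⟨M, hM, hpM⟩ := Ideal.exists_le_maximal p hpP.ne_top
    have := prime_minimal_of_total hu M hM.isPrime
    have e : p = M := le_antisymm hpM (this.2 hp.1 hpM)
    rw [e]; exact hM
  obtain ⟨N, _, ψ, δN, hψ0, hfrN, hδN⟩ := exists_residue_field δQ p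
    (fun i a => minimalPrime_stable p hp (δQ i) a)
  have hsurj : Function.Surjective ψ := by
    intro r
    obtain ⟨s, t, ht, e⟩ := hfrN r
    have htp : t ∉ p := fun h => ht.ne_zero ((hψ0 t).mpr h)
    obtain ⟨y, i, hi, hy⟩ := hpM.exists_inv htp
    refine ⟨s * y, ?_⟩
    have h1 : ψ y * ψ t = 1 := by
      rw [← map_mul, ← map_one ψ, ← hy, map_add, (hψ0 i).mpr hi, add_zero]
    rw [map_mul, ← e, mul_assoc, mul_comm (ψ t), h1, mul_one]
  exact lift_local p hψ0 hsurj hδN ls (lt b)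
    (sn_residue hcompat hSN hcQ ls lt hK hls hlt hfrN hδN b)

theorem exists_der_of_add {Q : Type*} [CommRing Q] (f : Q → Q)
    (hadd : ∀ x y, f (x + y) = f x + f y) (hmul : ∀ x y, f (x * y) = x * f y + y * f x) :
    ∃ D : Derivation ℤ Q Q, ∀ x, D x = f x :=
  ⟨Derivation.mk' (AddMonoidHom.mk' f hadd).toIntLinearMap hmul, fun _ => rfl⟩

/-- With `K^Δ` algebraically closed and `L|K` finitely `Δ`-generated with
no new constants: `L|K` is strongly normal iff `L|K` is `Δ`-normal with respect to the pair
`τs, τt : L → Quot(L ⊗_K L)`, `τs(a) = a ⊗ 1`, `τt(a) = 1 ⊗ a`, where `Quot(L ⊗_K L)` is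
the total ring of fractions of `L ⊗_K L` with the (unique) extended `Δ`-structure. -/
theorem stronglyNormal_iff_deltaNormal_quot {m : ℕ}
    (K L : Type u) [Field K] [CharZero K] [Field L] [CharZero L] [Algebra K L]
    (δK : Fin m → Derivation ℤ K K) (δL : Fin m → Derivation ℤ L L)
    (hcK : CommutingDerivations δK) (hcL : CommutingDerivations δL)
    (hcompat : ∀ i a, δL i (algebraMap K L a) = algebraMap K L (δK i a))
    (halgcl : IsAlgClosed ↥(constantSubfield δK))
    (hfg : FinitelyDeltaGenerated K L δL)
    (hnonew : ∀ a : L, (∀ i, δL i a = 0) → a ∈ (algebraMap K L).range)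
    -- the (unique) `Δ`-ring structure on `L ⊗_K L`:
    (δT : Fin m → Derivation ℤ (L ⊗[K] L) (L ⊗[K] L))
    (hδT : ∀ i (a b : L), δT i (a ⊗ₜ[K] b) = (δL i a) ⊗ₜ[K] b + a ⊗ₜ[K] (δL i b))
    -- its (unique) extension to the total ring of fractions `Quot(L ⊗_K L)`:
    (δQ : Fin m → Derivation ℤ (FractionRing (L ⊗[K] L)) (FractionRing (L ⊗[K] L)))
    (hδQ : ∀ i x, δQ i (algebraMap (L ⊗[K] L) (FractionRing (L ⊗[K] L)) x)
        = algebraMap (L ⊗[K] L) (FractionRing (L ⊗[K] L)) (δT i x)) :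
    StronglyNormalCond.{u} K L δK δL ↔
      ∀ b : L, algebraMap (L ⊗[K] L) (FractionRing (L ⊗[K] L)) ((1 : L) ⊗ₜ[K] b) ∈
        fracSet
          (Set.range fun a : L =>
            algebraMap (L ⊗[K] L) (FractionRing (L ⊗[K] L)) (a ⊗ₜ[K] (1 : L)))
          {x : FractionRing (L ⊗[K] L) | ∀ i, δQ i x = 0} := by
  have key : ∀ (δ' : Fin m → @Derivation ℤ (FractionRing (L ⊗[K] L)) (FractionRing (L ⊗[K] L)) _ _ _
      (Ring.toIntAlgebra _) _ (AddCommGroup.toIntModule _)),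
      (∀ i x, δ' i x = δQ i x) → _ := fun δ' hδ' =>
    (⟨core_mp K L δK δL hcL hcompat hfg δT hδT (FractionRing (L ⊗[K] L)) δ'
        (fun i x => (hδ' i _).trans (hδQ i x)),
      core_mpr K L δK δL δT hδT (FractionRing (L ⊗[K] L)) δ'
        (fun i x => (hδ' i _).trans (hδQ i x))⟩ : Iff _ _)
  choose δ' hδ' using fun i => exists_der_of_add (fun x => δQ i x) (fun x y => map_add _ x y)
    (fun x y => (δQ i).leibniz x y)
  have := key δ' hδ'
  simp only [hδ'] at this
  exact this
end

section
/- Let K be a Δ-field and L|K a finitely Δ-generated extension of Δ-fields (all of characteristic zero). Then the ring L ⊗_K L is reduced and has only finitely many minimal prime ideals. -/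
open scoped TensorProduct

theorem lemB0 (K L A F : Type*) [Field K] [Field L] [Algebra K L] [CommRing A] [Algebra K A]
    [Algebra A L] [IsScalarTower K A L] [Algebra.FormallyUnramified A L]
    [Algebra.EssFiniteType A L] [Module.Flat A L] [Field F] [Algebra (A ⊗[K] L) F]
    [Algebra A F] [IsScalarTower A (A ⊗[K] L) F]
    (hinj : Function.Injective (algebraMap (A ⊗[K] L) F)) :
    IsReduced (L ⊗[K] L) ∧ (minimalPrimes (L ⊗[K] L)).Finite := by
  let Q := F ⊗[A] L
  have : IsReduced Q := Algebra.FormallyUnramified.isReduced_of_field F Q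
  have : Module.Finite F Q := Algebra.FormallyUnramified.finite_of_free F Q
  have : IsArtinianRing Q := IsArtinianRing.of_finite F Q
  let g : L ⊗[A] (A ⊗[K] L) →ₐ[A] L ⊗[A] F :=
    Algebra.TensorProduct.map (AlgHom.id A L) (IsScalarTower.toAlgHom A (A ⊗[K] L) F)
  have hg : Function.Injective g :=
    Module.Flat.lTensor_preserves_injective_linearMap (M := L)
      (IsScalarTower.toAlgHom A (A ⊗[K] L) F).toLinearMap
      hinj
  let f : L ⊗[K] L →+* Q :=
    ((Algebra.TensorProduct.comm A L F).toRingEquiv.toRingHom.comp g.toRingHom).comp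
     (Algebra.TensorProduct.cancelBaseChange K A A L L).symm.toRingEquiv.toRingHom
  have hf : Function.Injective f :=
    ((Algebra.TensorProduct.comm A L F).injective.comp hg).comp
      (Algebra.TensorProduct.cancelBaseChange K A A L L).symm.injective
  refine ⟨isReduced_of_injective f hf, ?_⟩
  have hQ : {p : Ideal Q | p.IsPrime}.Finite := by
    exact IsArtinianRing.setOfPred_isPrime_finite Q
  refine (hQ.image (Ideal.comap f)).subset fun p hp => ?_
  obtain ⟨p', h1, h2⟩ := Ideal.exists_comap_eq_of_mem_minimalPrimes_of_injective hf p hp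
  exact ⟨p', h1, h2⟩

theorem lemB1 (K L A : Type*) [Field K] [Field L] [Algebra K L] [CommRing A] [Algebra K A]
    [Algebra A L] [IsScalarTower K A L] [Algebra.FormallyUnramified A L]
    [Algebra.EssFiniteType A L] [Module.Flat A L] [IsDomain (A ⊗[K] L)] :
    IsReduced (L ⊗[K] L) ∧ (minimalPrimes (L ⊗[K] L)).Finite := by
  let F := FractionRing (A ⊗[K] L)
  exact lemB0 K L A F (IsFractionRing.injective (A ⊗[K] L) F)

open scoped IntermediateField.algebraAdjoinAdjoin in
theorem lemB {ι : Type*} (K L : Type*) [Field K] [Field L] [CharZero L] [Algebra K L]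
    (x : ι → L) (hx : AlgebraicIndependent K x)
    (hfin : FiniteDimensional (IntermediateField.adjoin K (Set.range x)) L) :
    IsReduced (L ⊗[K] L) ∧ (minimalPrimes (L ⊗[K] L)).Finite := by
  let A := Algebra.adjoin K (Set.range x)
  let E := IntermediateField.adjoin K (Set.range x)
  have : IsScalarTower A E L := IsScalarTower.of_algebraMap_eq fun _ => rfl
  have : Algebra.FormallyUnramified A E :=
    Algebra.FormallyUnramified.of_isLocalization (nonZeroDivisors A)
  have : Algebra.EssFiniteType A E :=
    Algebra.EssFiniteType.of_isLocalization _ (nonZeroDivisors A)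
  have : Module.Flat A E := IsLocalization.flat _ (nonZeroDivisors A)
  have : Algebra.FormallyUnramified E L := Algebra.FormallyUnramified.of_isSeparable E L
  have : Algebra.FormallyUnramified A L := Algebra.FormallyUnramified.comp A E L
  have : Algebra.EssFiniteType A L := Algebra.EssFiniteType.comp A E L
  have : Module.Flat A L := Module.Flat.trans A E L
  let e1 : A ⊗[K] L ≃ₐ[K] MvPolynomial ι L :=
    (Algebra.TensorProduct.comm K A L).trans
      ((Algebra.TensorProduct.congr AlgEquiv.refl hx.aevalEquiv.symm).trans
        ((MvPolynomial.algebraTensorAlgEquiv K L).restrictScalars K))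
  have : IsDomain (A ⊗[K] L) := e1.toMulEquiv.isDomain _
  exact lemB1 K L A

theorem lemA {I : Type*} [LinearOrder I] [WellFoundedLT I] (K L : Type*) [Field K] [Field L]
    [Algebra K L] (a : I → L) (M : Set I) (hM : M.Finite)
    (htop : IntermediateField.adjoin K (Set.range a) = ⊤)
    (h : ∀ i, IsAlgebraic (IntermediateField.adjoin K (a '' Set.Iio i)) (a i) →
      i ∉ M → a i ∈ IntermediateField.adjoin K (a '' Set.Iio i)) :
    ∃ N : Set I, AlgebraicIndependent K (fun i : N => a i) ∧
      FiniteDimensional (IntermediateField.adjoin K (Set.range (fun i : N => a i))) L := by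
  let N : Set I := {i | Transcendental (IntermediateField.adjoin K (a '' Set.Iio i)) (a i)}
  refine ⟨N, ?_, ?_⟩
  · have key : ∀ s : Finset I, (s : Set I) ⊆ N → AlgebraicIndepOn K a (s : Set I) := by
      intro s
      induction s using Finset.induction_on_max with
      | empty =>
        intro _
        simpa using (algebraicIndependent_empty_type : AlgebraicIndependent K (fun i : (∅ : Set I) => a i))
      | insert i s hi ih =>
        intro hs
        rw [Finset.coe_insert] at hs ⊢
        rw [Set.insert_subset_iff] at hs
        refine (ih hs.2).insert ?_
        have h1 : Transcendental (IntermediateField.adjoin K (a '' Set.Iio i)) (a i) := hs.1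
        have hle : Algebra.adjoin K (a '' (s : Set I)) ≤
            (IntermediateField.adjoin K (a '' Set.Iio i)).toSubalgebra :=
          Algebra.adjoin_le ((Set.image_mono fun j hj => hi j hj).trans
            (IntermediateField.subset_adjoin _ _))
        intro halg
        apply h1
        let : Algebra (Algebra.adjoin K (a '' (s : Set I))) (IntermediateField.adjoin K (a '' Set.Iio i)) :=
          (Subalgebra.inclusion hle).toAlgebra
        have : IsScalarTower (Algebra.adjoin K (a '' (s : Set I))) (IntermediateField.adjoin K (a '' Set.Iio i)) L :=
          IsScalarTower.of_algebraMap_eq fun _ => rfl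
        have : FaithfulSMul (Algebra.adjoin K (a '' (s : Set I))) (IntermediateField.adjoin K (a '' Set.Iio i)) :=
          (faithfulSMul_iff_algebraMap_injective _ _).2 (Subalgebra.inclusion_injective hle)
        exact halg.extendScalars (FaithfulSMul.algebraMap_injective _ _)
    refine algebraicIndependent_of_finite_type fun t ht => ?_
    have hfin : (Subtype.val '' t : Set I).Finite := ht.image _
    have h1 := key hfin.toFinset (by
      rw [hfin.coe_toFinset]; rintro _ ⟨j, _, rfl⟩; exact j.2)
    rw [hfin.coe_toFinset] at h1
    exact h1.comp (fun j : t => ⟨j.1.1, ⟨j.1, j.2, rfl⟩⟩) fun j k hjk =>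
      Subtype.ext (Subtype.ext (congrArg (fun z => z.1) hjk))
  · have hr : Set.range (fun i : N => a i) = a '' N := by ext; simp
    rw [hr]
    let E := IntermediateField.adjoin K (a '' N)
    change FiniteDimensional E L
    have halg : ∀ i, a i ∈ algebraicClosure E L := by
      intro i
      induction i using WellFoundedLT.induction with
      | ind i ih =>
      by_cases hi : i ∈ N
      · have : a i ∈ E := IntermediateField.subset_adjoin _ _ ⟨i, hi, rfl⟩
        exact (algebraicClosure E L).algebraMap_mem ⟨a i, this⟩
      · have hi' : IsAlgebraic (IntermediateField.adjoin K (a '' Set.Iio i)) (a i) := not_not.1 hi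
        have hle : IntermediateField.adjoin K (a '' Set.Iio i) ≤
            (algebraicClosure E L).restrictScalars K := by
          rw [IntermediateField.adjoin_le_iff]
          rintro _ ⟨j, hj, rfl⟩
          exact ih j hj
        let : Algebra (IntermediateField.adjoin K (a '' Set.Iio i)) (algebraicClosure E L) :=
          (IntermediateField.inclusion hle).toAlgebra
        have : IsScalarTower (IntermediateField.adjoin K (a '' Set.Iio i)) (algebraicClosure E L) L :=
          IsScalarTower.of_algebraMap_eq fun _ => rfl
        have h2 : IsAlgebraic (algebraicClosure E L) (a i) := hi'.extendScalars (IntermediateField.inclusion hle).injective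
        rw [mem_algebraicClosure_iff]
        exact h2.restrictScalars E
    have hmem : ∀ i, a i ∈ IntermediateField.adjoin E (a '' M) := by
      intro i
      induction i using WellFoundedLT.induction with
      | ind i ih =>
      by_cases hi : i ∈ N
      · have : a i ∈ E := IntermediateField.subset_adjoin _ _ ⟨i, hi, rfl⟩
        exact (IntermediateField.adjoin E (a '' M)).algebraMap_mem ⟨a i, this⟩
      by_cases hiM : i ∈ M
      · exact IntermediateField.subset_adjoin _ _ ⟨i, hiM, rfl⟩
      have hle : IntermediateField.adjoin K (a '' Set.Iio i) ≤
            (IntermediateField.adjoin E (a '' M)).restrictScalars K := by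
          rw [IntermediateField.adjoin_le_iff]
          rintro _ ⟨j, hj, rfl⟩
          exact ih j hj
      exact hle (h i (not_not.1 hi) hiM)
    have htop' : IntermediateField.adjoin E (a '' M) = ⊤ := by
      rw [eq_top_iff]
      intro y _
      have hle : IntermediateField.adjoin K (Set.range a) ≤
            (IntermediateField.adjoin E (a '' M)).restrictScalars K := by
          rw [IntermediateField.adjoin_le_iff]
          rintro _ ⟨j, rfl⟩
          exact hmem j
      exact hle (htop ▸ IntermediateField.mem_top)
    have : Finite (a '' M) := (hM.image a).to_subtype
    have : FiniteDimensional E (IntermediateField.adjoin E (a '' M)) := by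
      apply IntermediateField.finiteDimensional_adjoin
      rintro _ ⟨i, _, rfl⟩
      exact (mem_algebraicClosure_iff.1 (halg i)).isIntegral
    rw [htop'] at this
    exact IntermediateField.topEquiv.toLinearEquiv.finiteDimensional

theorem deriv_mem_of_algebraic {K L : Type*} [Field K] [Field L] [CharZero L] [Algebra K L]
    (E F : IntermediateField K L) (D : Derivation ℤ L L) (hEF : E ≤ F)
    (hD : ∀ x ∈ E, D x ∈ F) (u : L) (huF : u ∈ F) (hu : IsAlgebraic E u) : D u ∈ F := by
  have hq : ∀ q : Polynomial E, Polynomial.aeval u q ∈ F := by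
    intro q
    rw [Polynomial.aeval_eq_sum_range]
    refine sum_mem fun i _ => ?_
    rw [Algebra.smul_def]
    exact mul_mem (hEF (q.coeff i).2) (pow_mem huF i)
  have key : ∀ q : Polynomial E,
      D (Polynomial.aeval u q) - Polynomial.aeval u (Polynomial.derivative q) * D u ∈ F := by
    intro q
    induction q using Polynomial.induction_on' with
    | add p q hp hq =>
      have := add_mem hp hq
      convert this using 1
      simp only [map_add]
      ring
    | monomial n c =>
      have h1 : D ((c : L) * u ^ n) - ((c : L) * (n * u ^ (n-1))) * D u = u ^ n * D c := by
        simp only [Derivation.leibniz, Derivation.leibniz_pow, smul_eq_mul, nsmul_eq_mul]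
        ring
      have h2 : u ^ n * D c ∈ F := mul_mem (pow_mem huF n) (hD c c.2)
      rw [← h1] at h2
      convert h2 using 2
      · rw [Polynomial.aeval_monomial]; rfl
      · rw [Polynomial.derivative_monomial, Polynomial.aeval_monomial, map_mul, map_natCast,
          mul_assoc (algebraMap E L c)]; rfl
  have h := key (minpoly E u)
  rw [minpoly.aeval, map_zero, zero_sub] at h
  have hne : Polynomial.aeval u (Polynomial.derivative (minpoly E u)) ≠ 0 :=
    (minpoly.irreducible hu.isIntegral).separable.aeval_derivative_ne_zero (minpoly.aeval E u)
  have h3 := div_mem (neg_mem h) (hq (Polynomial.derivative (minpoly E u)))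
  rwa [neg_neg, mul_div_cancel_left₀ _ hne] at h3

theorem deriv_adjoin_mem {K L : Type*} [Field K] [Field L] [Algebra K L]
    (S : Set L) (F : IntermediateField K L) (D : Derivation ℤ L L)
    (hK : ∀ c : K, D (algebraMap K L c) ∈ F) (hS : S ⊆ F) (hDS : ∀ x ∈ S, D x ∈ F) :
    ∀ x ∈ IntermediateField.adjoin K S, D x ∈ F := by
  have hle : IntermediateField.adjoin K S ≤ F := IntermediateField.adjoin_le_iff.2 hS
  intro x hx
  induction hx using IntermediateField.adjoin_induction with
  | mem x hx => exact hDS x hx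
  | algebraMap c => exact hK c
  | add x y _ _ hx hy => rw [map_add]; exact add_mem hx hy
  | inv x hx h =>
    rw [Derivation.leibniz_inv, smul_eq_mul]
    exact mul_mem (neg_mem (pow_mem (inv_mem (hle hx)) _)) h
  | mul x y hx hy h1 h2 =>
    rw [Derivation.leibniz, smul_eq_mul, smul_eq_mul]
    exact add_mem (mul_mem (hle hx) h2) (mul_mem (hle hy) h1)

theorem lemC {m : ℕ} {ι : Type*} [LinearOrder ι] [Finite ι] (K L : Type*)
    [Field K] [Field L] [CharZero L] [Algebra K L]
    (δ : Fin m → Derivation ℤ L L)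
    (hK : ∀ i (c : K), ∃ d : K, δ i (algebraMap K L c) = algebraMap K L d)
    (v : (Fin m →₀ ℕ) → ι → L)
    (hv : ∀ k α j, v (α + Finsupp.single k 1) j = δ k (v α j))
    (htop : IntermediateField.adjoin K {x | ∃ α j, x = v α j} = ⊤) :
    ∃ (N : Set (Lex (Fin m →₀ ℕ) ×ₗ ι)) (a : Lex (Fin m →₀ ℕ) ×ₗ ι → L),
      AlgebraicIndependent K (fun i : N => a i) ∧
      FiniteDimensional (IntermediateField.adjoin K (Set.range (fun i : N => a i))) L := by
  let I := Lex (Fin m →₀ ℕ) ×ₗ ι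
  let a : I → L := fun i => v (ofLex (ofLex i).1) (ofLex i).2
  let mk : (Fin m →₀ ℕ) → ι → I := fun α j => toLex (toLex α, j)
  have hlt : ∀ (α β : Fin m →₀ ℕ) (i j : ι), mk α i < mk β j ↔
      toLex α < toLex β ∨ (toLex α = toLex β ∧ i < j) := fun α β i j => Prod.Lex.toLex_lt_toLex
  have hmono : ∀ k α β i j, mk α i < mk β j →
      mk (α + Finsupp.single k 1) i < mk (β + Finsupp.single k 1) j := by
    intro k α β i j h
    rw [hlt] at h ⊢
    rcases h with h | ⟨h, h'⟩
    · left
      rw [toLex_add, toLex_add]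
      exact add_lt_add_left h _
    · right
      rw [toLex_add, toLex_add, h]
      exact ⟨rfl, h'⟩
  have hself : ∀ k α j, mk α j < mk (α + Finsupp.single k 1) j := by
    intro k α j
    rw [hlt]
    left
    rw [toLex_add]
    apply lt_add_of_pos_right
    refine lt_of_le_of_ne (Finsupp.toLex_monotone zero_le) fun h => ?_
    have h' : (0 : Fin m →₀ ℕ) = Finsupp.single k 1 := toLex.injective h
    exact one_ne_zero (Finsupp.single_eq_zero.1 h'.symm)
  let Fl : I → IntermediateField K L := fun i => IntermediateField.adjoin K (a '' Set.Iio i)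
  let lead : (Fin m →₀ ℕ) → ι → Prop := fun α j => IsAlgebraic (Fl (mk α j)) (v α j)
  have hstep : ∀ k α j, lead α j →
      v (α + Finsupp.single k 1) j ∈ Fl (mk (α + Finsupp.single k 1) j) := by
    intro k α j h
    rw [hv]
    have hsub : a '' Set.Iio (mk α j) ⊆ Fl (mk (α + Finsupp.single k 1) j) := by
      refine (Set.image_mono ?_).trans (IntermediateField.subset_adjoin _ _)
      exact Set.Iio_subset_Iio (hself k α j).le
    refine deriv_mem_of_algebraic (Fl (mk α j)) _ (δ k) ?_ ?_ _ ?_ h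
    · exact IntermediateField.adjoin_le_iff.2 hsub
    · refine deriv_adjoin_mem _ _ _ ?_ hsub ?_
      · intro c
        obtain ⟨d, hd⟩ := hK k c
        rw [hd]
        exact IntermediateField.algebraMap_mem _ d
      · rintro _ ⟨i, hi, rfl⟩
        refine IntermediateField.subset_adjoin _ _ ⟨mk (ofLex (ofLex i).1 + Finsupp.single k 1) (ofLex i).2, ?_, ?_⟩
        · exact hmono k _ _ _ _ hi
        · exact hv k _ _
    · exact IntermediateField.subset_adjoin _ _ ⟨mk α j, hself k α j, rfl⟩
  have hstep' : ∀ k α j, lead α j → lead (α + Finsupp.single k 1) j := by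
    intro k α j h
    exact isAlgebraic_algebraMap (⟨_, hstep k α j h⟩ : Fl (mk (α + Finsupp.single k 1) j))
  have hup : ∀ γ α j, lead α j → lead (α + γ) j := by
    intro γ
    induction γ using Finsupp.induction_linear with
    | zero => intro α j h; simpa using h
    | add f g hf hg => intro α j h; rw [← add_assoc]; exact hg _ _ (hf _ _ h)
    | single k n =>
      induction n with
      | zero => intro α j h; simpa using h
      | succ n ih =>
        intro α j h
        rw [Finsupp.single_add, ← add_assoc]
        exact hstep' _ _ _ (ih _ _ h)
  let M0 : ι → Set (Fin m →₀ ℕ) := fun j =>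
    {α | lead α j ∧ ∀ k β, α = β + Finsupp.single k 1 → ¬ lead β j}
  have hM0 : ∀ j, (M0 j).Finite := by
    intro j
    have hanti : IsAntichain (· ≤ ·) (M0 j) := by
      intro α hα β hβ hne hle
      obtain ⟨γ, rfl⟩ := exists_add_of_le hle
      have hγ : γ ≠ 0 := by rintro rfl; simp at hne
      obtain ⟨k, hk⟩ := Finsupp.ne_iff.1 hγ
      have hk' : Finsupp.single k 1 ≤ γ := by
        rw [Finsupp.single_le_iff]
        exact Nat.one_le_iff_ne_zero.2 hk
      obtain ⟨ε, rfl⟩ := exists_add_of_le hk'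
      refine hβ.2 k (α + ε) ?_ (hup _ _ _ hα.1)
      rw [add_assoc, add_comm ε]
    exact hanti.finite_of_wellQuasiOrdered wellQuasiOrdered_le
  let M : Set I := ⋃ j, (fun α => mk α j) '' M0 j
  have hM : M.Finite := Set.finite_iUnion fun j => (hM0 j).image _
  obtain ⟨N, h1, h2⟩ := lemA K L a M hM (by
    rw [← htop]
    congr 1
    ext x
    constructor
    · rintro ⟨i, rfl⟩; exact ⟨_, _, rfl⟩
    · rintro ⟨α, j, rfl⟩; exact ⟨mk α j, rfl⟩) (by
    intro i hi hiM
    have hl : lead (ofLex (ofLex i).1) (ofLex i).2 := hi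
    by_contra hcon
    apply hiM
    refine Set.mem_iUnion.2 ⟨(ofLex i).2, ofLex (ofLex i).1, ⟨hl, ?_⟩, rfl⟩
    intro k β hβ hlβ
    apply hcon
    have h3 := hstep k β _ hlβ
    rw [← hβ] at h3
    exact h3)
  exact ⟨N, a, h1, h2⟩

theorem tensor_reduced_and_finitely_many_minimalPrimes {m : ℕ}
    (K L : Type*) [Field K] [CharZero K] [Field L] [CharZero L] [Algebra K L]
    (δK : Fin m → Derivation ℤ K K) (δL : Fin m → Derivation ℤ L L)
    (hcK : CommutingDerivations δK) (hcL : CommutingDerivations δL)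
    (hcompat : ∀ i a, δL i (algebraMap K L a) = algebraMap K L (δK i a))
    (hfg : FinitelyDeltaGenerated K L δL) :
    IsReduced (L ⊗[K] L) ∧ (minimalPrimes (L ⊗[K] L)).Finite := by
  obtain ⟨S, hS⟩ := hfg
  let f : Fin m → L → L := fun i y => δL i y
  have : LeftCommutative f := ⟨fun i j x => hcL i j x⟩
  let v : (Fin m →₀ ℕ) → Fin S.card → L := fun α j =>
    (Finsupp.toMultiset α).foldr f (S.equivFin.symm j : L)
  obtain ⟨N, a, h1, h2⟩ := lemC K L δL (fun i c => ⟨_, hcompat i c⟩) v (by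
    intro k α j
    change Multiset.foldr _ _ _ = δL k (Multiset.foldr _ _ _)
    rw [map_add, add_comm, Finsupp.toMultiset_single, one_nsmul, Multiset.singleton_add,
      Multiset.foldr_cons]) (by
    rw [← hS]
    congr 1
    ext x
    constructor
    · rintro ⟨α, j, rfl⟩
      refine ⟨_, (S.equivFin.symm j).2, (Finsupp.toMultiset α).toList, ?_⟩
      change Multiset.foldr f _ _ = List.foldr f _ _
      rw [← Multiset.coe_foldr, Multiset.coe_toList]
    · rintro ⟨b, hb, w, rfl⟩
      refine ⟨Multiset.toFinsupp (w : Multiset (Fin m)), S.equivFin ⟨b, hb⟩, ?_⟩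
      change List.foldr f _ _ = Multiset.foldr f _ _
      rw [Multiset.toFinsupp_toMultiset, Multiset.coe_foldr, Equiv.symm_apply_apply])
  exact lemB K L _ h1 h2
end

section
/- Let K be a Δ-field and L|K a finitely Δ-generated extension of Δ-fields (all of characteristic zero). Then the total ring of fractions M := Quot(L ⊗_K L) is a finite direct product of fields: there exist pairwise orthogonal idempotents e₁,…,e_r ∈ M with e₁ + ⋯ + e_r = 1 such that each eᵢM is a field and M = e₁M ⊕ ⋯ ⊕ e_rM. -/
open scoped TensorProduct

section
attribute [local instance] Algebra.TensorProduct.rightAlgebra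

theorem aux_dom1 (K L k B : Type*) [Field K] [Field L] [Algebra K L] [Field k] [Algebra K k]
    [CommRing B] [IsDomain B] [Algebra K B] [Algebra B k] [IsScalarTower K B k] [IsFractionRing B k]
    (h : IsDomain (B ⊗[K] L)) : IsDomain (k ⊗[K] L) := by
  have h1 : IsDomain (k ⊗[B] (B ⊗[K] L)) := by
    refine IsLocalization.isDomain_of_le_nonZeroDivisors (R := B ⊗[K] L)
      (M := Algebra.algebraMapSubmonoid (B ⊗[K] L) (nonZeroDivisors B)) _ ?_
    rintro _ ⟨b, hb, rfl⟩
    rw [mem_nonZeroDivisors_iff_ne_zero]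
    have hinj : Function.Injective (algebraMap B (B ⊗[K] L)) :=
      Algebra.TensorProduct.includeLeft_injective (S := B) (algebraMap K L).injective
    intro h0
    exact nonZeroDivisors.ne_zero hb (hinj (by simpa using h0))
  exact (Algebra.TensorProduct.cancelBaseChange K B B k L).symm.toMulEquiv.isDomain _

theorem aux_dom2 {ι : Type*} (K L : Type*) [Field K] [Field L] [Algebra K L] (x : ι → L)
    (hx : AlgebraicIndependent K x) :
    IsDomain (IntermediateField.adjoin K (Set.range x) ⊗[K] L) := by
  open scoped IntermediateField.algebraAdjoinAdjoin in
  refine aux_dom1 K L _ (Algebra.adjoin K (Set.range x)) ?_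
  have e : (Algebra.adjoin K (Set.range x)) ⊗[K] L ≃+* MvPolynomial ι L :=
    (((Algebra.TensorProduct.congr hx.aevalEquiv.symm AlgEquiv.refl).trans
      (Algebra.TensorProduct.comm K _ _)).toRingEquiv.trans
      (MvPolynomial.algebraTensorAlgEquiv K L).toRingEquiv)
  exact e.toMulEquiv.isDomain _

theorem aux_art0 (R A : Type*) [CommRing R] [CommRing A] [Algebra R A] (W : Submonoid R)
    (hW : W ≤ nonZeroDivisors R) [IsLocalization W A] [IsArtinianRing A] [IsReduced A] :
    IsArtinianRing (FractionRing R) ∧ IsReduced (FractionRing R) := by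
  let f : A →+* FractionRing R := IsLocalization.lift (M := W) (S := A) (g := algebraMap R (FractionRing R))
    (fun y => IsLocalization.map_units (FractionRing R) ⟨y.1, hW y.2⟩)
  let : Algebra A (FractionRing R) := f.toAlgebra
  have : IsScalarTower R A (FractionRing R) := .of_algebraMap_eq fun r =>
    (IsLocalization.lift_eq _ r).symm
  have := IsLocalization.isLocalization_of_submonoid_le A (FractionRing R) W (nonZeroDivisors R) hW
  have hR : IsReduced R := isReduced_of_injective (algebraMap R A) (IsLocalization.injective A hW)
  exact ⟨IsArtinianRing.localization_artinian ((nonZeroDivisors R).map (algebraMap R A)) _,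
    isReduced_localizationPreserves (nonZeroDivisors R) (FractionRing R) hR⟩

theorem aux_art1 (k L D : Type*) [Field k] [Field L] [CharZero k] [Algebra k L]
    [FiniteDimensional k L] [CommRing D] [IsDomain D] [Algebra k D] :
    IsArtinianRing (FractionRing (D ⊗[k] L)) ∧ IsReduced (FractionRing (D ⊗[k] L)) := by
  let F := FractionRing D
  let A := F ⊗[D] (D ⊗[k] L)
  have : Algebra.FormallyEtale k L := Algebra.FormallyEtale.of_isSeparable k L
  have : Algebra.FormallyEtale F A := inferInstance
  have : Module.Finite F A := inferInstance
  have : IsArtinianRing A := .of_finite F A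
  have : IsReduced A := Algebra.FormallyUnramified.isReduced_of_field F A
  refine aux_art0 (D ⊗[k] L) A (Algebra.algebraMapSubmonoid (D ⊗[k] L) (nonZeroDivisors D)) ?_
  rintro _ ⟨b, hb, rfl⟩
  rw [mem_nonZeroDivisors_iff_right]
  intro z hz
  have : Module.IsTorsionFree D (D ⊗[k] L) := inferInstance
  rw [mul_comm, ← Algebra.smul_def] at hz
  exact (smul_eq_zero.mp hz).resolve_left (nonZeroDivisors.ne_zero hb)

end

theorem aux_art2 (K L k : Type*) [Field K] [CharZero K] [Field L] [Algebra K L] [Field k]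
    [CharZero k] [Algebra K k] [Algebra k L] [IsScalarTower K k L] [FiniteDimensional k L]
    (h : IsDomain (k ⊗[K] L)) :
    IsArtinianRing (FractionRing (L ⊗[K] L)) ∧ IsReduced (FractionRing (L ⊗[K] L)) := by
  obtain ⟨h1, h2⟩ := aux_art1 k L (k ⊗[K] L)
  let e : (k ⊗[K] L) ⊗[k] L ≃+* L ⊗[K] L :=
    (Algebra.TensorProduct.comm k _ _).toRingEquiv.trans
      (Algebra.TensorProduct.cancelBaseChange K k k L L).toRingEquiv
  let e' : FractionRing ((k ⊗[K] L) ⊗[k] L) ≃+* FractionRing (L ⊗[K] L) :=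
    IsFractionRing.ringEquivOfRingEquiv e
  exact ⟨e'.isArtinianRing, isReduced_of_injective e'.symm e'.symm.injective⟩

theorem aux_art {ι : Type*} (K L : Type*) [Field K] [CharZero K] [Field L] [Algebra K L] (x : ι → L)
    (hx : AlgebraicIndependent K x)
    (hfin : FiniteDimensional (IntermediateField.adjoin K (Set.range x)) L) :
    IsArtinianRing (FractionRing (L ⊗[K] L)) ∧ IsReduced (FractionRing (L ⊗[K] L)) :=
  aux_art2 K L (IntermediateField.adjoin K (Set.range x)) (aux_dom2 K L x hx)

theorem aux_prod (M : Type*) [CommRing M] [IsArtinianRing M] [IsReduced M] :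
    ∃ (r : ℕ) (e : Fin r → M),
      (∀ i, IsIdempotentElem (e i)) ∧
      (∀ i j, i ≠ j → e i * e j = 0) ∧
      (∑ i, e i) = 1 ∧
      (∀ i, e i ≠ 0 ∧ ∀ x : M, e i * x ≠ 0 → ∃ y : M, (e i * x) * (e i * y) = e i) := by
  classical
  let E := IsArtinianRing.equivPi M
  obtain ⟨r, ⟨σ⟩⟩ := Finite.exists_equiv_fin (MaximalSpectrum M)
  let := Fintype.ofFinite (MaximalSpectrum M)
  let u : MaximalSpectrum M → ∀ I : MaximalSpectrum M, M ⧸ I.asIdeal := fun I => Pi.single I 1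
  refine ⟨r, fun i => E.symm (u (σ.symm i)), ?_, ?_, ?_, ?_⟩
  · intro i
    rw [IsIdempotentElem, ← map_mul, ← Pi.single_mul, one_mul]
  · intro i j hij
    rw [← map_mul]
    have : u (σ.symm i) * u (σ.symm j) = 0 := by
      ext I
      by_cases h : I = σ.symm i
      · subst h
        have : σ.symm i ≠ σ.symm j := fun h => hij (σ.symm.injective h)
        simp [u, Pi.single_eq_of_ne this]
      · simp [u, Pi.single_eq_of_ne h]
    rw [this, map_zero]
  · rw [← map_sum, Equiv.sum_comp σ.symm u, ← map_one E.symm]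
    congr 1
    exact Finset.univ_sum_single (1 : ∀ I : MaximalSpectrum M, M ⧸ I.asIdeal)
  · intro i
    change E.symm (u (σ.symm i)) ≠ 0 ∧ ∀ x : M, E.symm (u (σ.symm i)) * x ≠ 0 →
      ∃ y : M, (E.symm (u (σ.symm i)) * x) * (E.symm (u (σ.symm i)) * y) = E.symm (u (σ.symm i))
    generalize σ.symm i = I
    have hI := I.isMaximal
    refine ⟨fun h => ?_, fun x hx => ?_⟩
    · have h' : u I = 0 := by simpa using h
      have := congrFun h' I
      simp only [u, Pi.single_eq_same, Pi.zero_apply] at this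
      exact one_ne_zero this
    · let := Ideal.Quotient.field I.asIdeal
      have hne : E x I ≠ 0 := by
        intro h0
        apply hx
        apply E.injective
        rw [map_mul, map_zero, AlgEquiv.apply_symm_apply]
        ext J
        by_cases h : J = I
        · subst h
          rw [Pi.mul_apply, h0, mul_zero, Pi.zero_apply]
        · simp [u, Pi.single_eq_of_ne h]
      refine ⟨E.symm (Pi.single I (E x I)⁻¹), ?_⟩
      apply E.injective
      simp only [map_mul, AlgEquiv.apply_symm_apply]
      ext J
      by_cases h : J = I
      · subst h
        simp only [u, Pi.mul_apply, Pi.single_eq_same, one_mul]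
        exact mul_inv_cancel₀ hne
      · simp [u, Pi.single_eq_of_ne h]

section
open IntermediateField

theorem aux_indep {I K L : Type*} [LinearOrder I] [Field K] [Field L] [Algebra K L] (v : I → L)
    (T : Set I) (hT : ∀ i ∈ T, Transcendental (adjoin K (v '' Set.Iio i)) (v i)) :
    AlgebraicIndependent K (fun i : T => v i) := by
  classical
  refine algebraicIndependent_of_finite_type fun t ht => ?_
  change AlgebraicIndepOn K (fun i : T => v i) t
  obtain ⟨s, rfl⟩ := ht.exists_finset_coe
  clear ht
  induction s using Finset.induction_on_max with
  | empty =>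
    rw [Finset.coe_empty]
    refine algebraicIndependent_empty_type_iff.mpr (algebraMap K L).injective
  | insert a s hs ih =>
    rw [Finset.coe_insert]
    refine ih.insert ?_
    have h := hT a a.2
    intro halg
    apply h
    have hle : Algebra.adjoin K ((fun i : T => v i) '' (s : Set T)) ≤
        (adjoin K (v '' Set.Iio (a : I))).toSubalgebra := by
      rw [Algebra.adjoin_le_iff]
      rintro _ ⟨j, hj, rfl⟩
      exact subset_adjoin _ _ ⟨j, hs j hj, rfl⟩
    obtain ⟨p, hp, hp0⟩ := halg
    refine ⟨p.map (Subalgebra.inclusion hle).toRingHom, ?_, ?_⟩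
    · exact (Polynomial.map_ne_zero_iff (Subalgebra.inclusion_injective hle)).mpr hp
    · rw [Polynomial.aeval_def, Polynomial.eval₂_map]
      exact hp0

theorem aux_fin {I K L : Type*} [LinearOrder I] [WellFoundedLT I] [Field K] [Field L] [Algebra K L]
    (v : I → L) (hv : adjoin K (Set.range v) = ⊤) (Mn : Set I) (hMn : Mn.Finite)
    (h : ∀ i, IsAlgebraic (adjoin K (v '' Set.Iio i)) (v i) → i ∈ Mn ∨
      v i ∈ adjoin K (v '' Set.Iio i)) :
    ∃ T : Set I, AlgebraicIndependent K (fun i : T => v i) ∧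
      FiniteDimensional (adjoin K (Set.range (fun i : T => v i))) L := by
  let T : Set I := {i | Transcendental (adjoin K (v '' Set.Iio i)) (v i)}
  refine ⟨T, aux_indep v T fun i hi => hi, ?_⟩
  set k := adjoin K (Set.range (fun i : T => v i)) with hk
  have hTk : ∀ i ∈ T, v i ∈ k := fun i hi => subset_adjoin _ _ ⟨⟨i, hi⟩, rfl⟩
  -- algebraicity
  have halg : ∀ i, v i ∈ algebraicClosure k L := by
    intro i
    induction i using WellFoundedLT.induction with
    | ind i ih =>
      by_cases hi : i ∈ T
      · exact (algebraicClosure k L).algebraMap_mem ⟨v i, hTk i hi⟩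
      · have hi' : IsAlgebraic (adjoin K (v '' Set.Iio i)) (v i) := not_not.mp hi
        have hle : adjoin K (v '' Set.Iio i) ≤ (algebraicClosure k L).restrictScalars K := by
          rw [adjoin_le_iff]
          rintro _ ⟨j, hj, rfl⟩
          exact ih j hj
        have h2 : IsAlgebraic (algebraicClosure k L) (v i) := by
          obtain ⟨p, hp, hp0⟩ := hi'
          let g : adjoin K (v '' Set.Iio i) →+* algebraicClosure k L :=
            (algebraMap (adjoin K (v '' Set.Iio i)) L).codRestrict (algebraicClosure k L)
              (fun x => hle x.2)
          refine ⟨p.map g, ?_, ?_⟩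
          · exact (Polynomial.map_ne_zero_iff g.injective).mpr hp
          · rw [Polynomial.aeval_def, Polynomial.eval₂_map]
            exact hp0
        rw [mem_algebraicClosure_iff']
        exact isIntegral_trans (R := k) (A := algebraicClosure k L) _ h2.isIntegral
  have hfin : FiniteDimensional k (adjoin k (v '' Mn)) := by
    have : Finite (v '' Mn) := (hMn.image v).to_subtype
    refine finiteDimensional_adjoin ?_
    rintro _ ⟨i, -, rfl⟩
    exact mem_algebraicClosure_iff'.mp (halg i)
  have hmem : ∀ i, v i ∈ adjoin k (v '' Mn) := by
    intro i
    induction i using WellFoundedLT.induction with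
    | ind i ih =>
      by_cases hi : i ∈ T
      · exact (adjoin k (v '' Mn)).algebraMap_mem ⟨v i, hTk i hi⟩
      · have hi' : IsAlgebraic (adjoin K (v '' Set.Iio i)) (v i) := not_not.mp hi
        rcases h i hi' with hm | hm
        · exact subset_adjoin _ _ ⟨i, hm, rfl⟩
        · have hle : adjoin K (v '' Set.Iio i) ≤ (adjoin k (v '' Mn)).restrictScalars K := by
            rw [adjoin_le_iff]
            rintro _ ⟨j, hj, rfl⟩
            exact ih j hj
          exact hle hm
  have htop : adjoin k (v '' Mn) = ⊤ := by
    rw [eq_top_iff]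
    intro y _
    have hle : adjoin K (Set.range v) ≤ (adjoin k (v '' Mn)).restrictScalars K := by
      rw [adjoin_le_iff]
      rintro _ ⟨j, rfl⟩
      exact hmem j
    exact hle (hv ▸ mem_top)
  rw [htop] at hfin
  exact Module.Finite.equiv (topEquiv (F := k) (E := L)).toLinearEquiv

theorem aux_deriv {K L : Type*} [Field K] [Field L] [CharZero L] [Algebra K L]
    (d : Derivation ℤ L L) (F F' : IntermediateField K L) (hF : ∀ x ∈ F, x ∈ F' ∧ d x ∈ F')
    (y : L) (hy : y ∈ F') (halg : IsAlgebraic F y) : d y ∈ F' := by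
  have key : ∀ p : Polynomial F, Polynomial.aeval y p ∈ F' ∧
      d (Polynomial.aeval y p) - Polynomial.aeval y p.derivative * d y ∈ F' := by
    intro p
    induction p using Polynomial.induction_on' with
    | add p q hp hq =>
      refine ⟨by rw [map_add]; exact add_mem hp.1 hq.1, ?_⟩
      have := add_mem hp.2 hq.2
      convert this using 1
      simp only [map_add]
      ring
    | monomial n a =>
      obtain ⟨h1, h2⟩ := hF a a.2
      rw [Polynomial.derivative_monomial]
      simp only [Polynomial.aeval_monomial, Derivation.leibniz, Derivation.leibniz_pow, smul_eq_mul,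
        map_mul, map_natCast, nsmul_eq_mul]
      refine ⟨mul_mem h1 (pow_mem hy n), ?_⟩
      have : y ^ n * d (a : L) ∈ F' := mul_mem (pow_mem hy n) h2
      convert this using 1
      simp only [IntermediateField.algebraMap_apply]
      ring
  obtain ⟨_, h2⟩ := key (minpoly F y)
  obtain ⟨h3, _⟩ := key (minpoly F y).derivative
  have hs : (minpoly F y).Separable := (minpoly.irreducible halg.isIntegral).separable
  have hne := hs.aeval_derivative_ne_zero (minpoly.aeval F y)
  rw [minpoly.aeval, map_zero, zero_sub] at h2
  have h4 := mul_mem (inv_mem h3) (neg_mem h2)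
  rwa [neg_neg, inv_mul_cancel_left₀ hne] at h4

theorem aux_shift {I K L : Type*} [LinearOrder I] [Field K] [Field L] [CharZero L] [Algebra K L]
    (δK : Derivation ℤ K K) (δL : Derivation ℤ L L)
    (hcompat : ∀ a, δL (algebraMap K L a) = algebraMap K L (δK a))
    (v : I → L) (sh : I → I) (hsh : StrictMono sh) (hlt : ∀ p, p < sh p)
    (hv : ∀ p, v (sh p) = δL (v p)) (p : I)
    (hp : IsAlgebraic (adjoin K (v '' Set.Iio p)) (v p)) :
    v (sh p) ∈ adjoin K (v '' Set.Iio (sh p)) := by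
  rw [hv]
  refine aux_deriv δL (adjoin K (v '' Set.Iio p)) _ ?_ _ (subset_adjoin _ _ ⟨p, hlt p, rfl⟩) hp
  intro x hx
  induction hx using adjoin_induction with
  | mem x hx =>
    obtain ⟨q, hq, rfl⟩ := hx
    refine ⟨subset_adjoin _ _ ⟨q, lt_trans hq (hlt p), rfl⟩, ?_⟩
    rw [← hv]
    exact subset_adjoin _ _ ⟨_, hsh hq, rfl⟩
  | algebraMap x => exact ⟨IntermediateField.algebraMap_mem _ _, by rw [hcompat]; exact IntermediateField.algebraMap_mem _ _⟩
  | add x y _ _ hx hy => exact ⟨add_mem hx.1 hy.1, by rw [map_add]; exact add_mem hx.2 hy.2⟩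
  | inv x _ hx =>
    refine ⟨inv_mem hx.1, ?_⟩
    rw [Derivation.leibniz_inv, smul_eq_mul]
    exact mul_mem (neg_mem (pow_mem (inv_mem hx.1) 2)) hx.2
  | mul x y _ _ hx hy =>
    refine ⟨mul_mem hx.1 hy.1, ?_⟩
    rw [Derivation.leibniz, smul_eq_mul, smul_eq_mul]
    exact add_mem (mul_mem hx.1 hy.2) (mul_mem hy.1 hx.2)

/-- Dickson -/
theorem aux_dickson {m : ℕ} {J : Type*} [Finite J] (P : (Fin m →₀ ℕ) → J → Prop)
    (hP : ∀ i α j, P α j → P (Finsupp.single i 1 + α) j) :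
    {p : (Fin m →₀ ℕ) × J | P p.1 p.2 ∧ ∀ i β, p.1 = Finsupp.single i 1 + β → ¬ P β p.2}.Finite := by
  have hup : ∀ (γ α : Fin m →₀ ℕ) j, P α j → P (γ + α) j := by
    intro γ
    induction γ using Finsupp.induction_linear with
    | zero => intro α j h; simpa using h
    | add f g hf hg => intro α j h; rw [add_assoc]; exact hf _ _ (hg _ _ h)
    | single i n =>
      induction n with
      | zero => intro α j h; simpa using h
      | succ n ih =>
        intro α j h
        rw [add_comm n 1, Finsupp.single_add, add_assoc]
        exact hP _ _ _ (ih _ _ h)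
  have hfib : ∀ j : J, {α : Fin m →₀ ℕ | P α j ∧ ∀ i β, α = Finsupp.single i 1 + β → ¬ P β j}.Finite := by
    intro j
    refine IsAntichain.finite_of_wellQuasiOrdered (r := (· ≤ ·)) ?_ wellQuasiOrdered_le
    intro α hα β hβ hne hle
    obtain ⟨γ, rfl⟩ := exists_add_of_le hle
    have hγ : γ ≠ 0 := by rintro rfl; simp at hne
    obtain ⟨i, hi⟩ := Finsupp.ne_iff.mp hγ
    have hle' : Finsupp.single i 1 ≤ γ := by
      rw [Finsupp.single_le_iff]
      exact Nat.one_le_iff_ne_zero.mpr hi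
    obtain ⟨γ', rfl⟩ := exists_add_of_le hle'
    exact hβ.2 i (γ' + α) (by abel) (hup _ _ _ hα.1)
  refine (Set.finite_iUnion fun j => (hfib j).image fun α => (α, j)).subset ?_
  rintro ⟨α, j⟩ h
  exact Set.mem_iUnion.mpr ⟨j, α, h, rfl⟩

theorem aux_main {m : ℕ}
    (K L : Type*) [Field K] [Field L] [CharZero L] [Algebra K L]
    (δK : Fin m → Derivation ℤ K K) (δL : Fin m → Derivation ℤ L L)
    (hcL : CommutingDerivations δL)
    (hcompat : ∀ i a, δL i (algebraMap K L a) = algebraMap K L (δK i a))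
    (hfg : FinitelyDeltaGenerated K L δL) :
    ∃ (ι : Type) (x : ι → L), AlgebraicIndependent K x ∧
      FiniteDimensional (adjoin K (Set.range x)) L := by
  obtain ⟨S, hS⟩ := hfg
  have hlc : LeftCommutative (fun (i : Fin m) (y : L) => δL i y) := ⟨fun i j y => hcL i j y⟩
  let mo : MonomialOrder (Fin m) := MonomialOrder.lex
  let I := mo.syn ×ₗ Fin S.card
  let a : Fin S.card → L := fun j => S.equivFin.symm j
  let D : (Fin m →₀ ℕ) → L → L := fun α y =>
    Multiset.foldr (fun (i : Fin m) (y : L) => δL i y) y (Finsupp.toMultiset α)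
  have hD : ∀ i α y, D (Finsupp.single i 1 + α) y = δL i (D α y) := by
    intro i α y
    simp only [D, map_add, Finsupp.toMultiset_single, one_smul, Multiset.singleton_add,
      Multiset.foldr_cons]
  let v : I → L := fun p => D (mo.toSyn.symm (ofLex p).1) (a (ofLex p).2)
  let sh : Fin m → I → I := fun i p => toLex (mo.toSyn (Finsupp.single i 1) + (ofLex p).1, (ofLex p).2)
  have hv : ∀ i p, v (sh i p) = δL i (v p) := by
    intro i p
    simp only [v, sh, ofLex_toLex, map_add, AddEquiv.symm_apply_apply, hD]
  have hsh : ∀ i, StrictMono (sh i) := by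
    intro i p q hpq
    rw [Prod.Lex.lt_iff] at hpq ⊢
    rcases hpq with h | ⟨h, h'⟩
    · left
      simpa [sh] using h
    · right
      refine ⟨by simp [sh, h], by simpa [sh] using h'⟩
  have hpos : ∀ i, 0 < mo.toSyn (Finsupp.single i 1) := by
    intro i
    refine lt_of_le_of_ne ?_ ?_
    · simp
    · intro h
      have h' : mo.toSyn 0 = mo.toSyn (Finsupp.single i 1) := by rw [map_zero]; exact h
      have := DFunLike.congr_fun (mo.toSyn.injective h') i
      simp at this
  have hlt : ∀ i p, p < sh i p := by
    intro i p
    rw [Prod.Lex.lt_iff]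
    left
    simpa [sh] using hpos i
  have hshift := fun i => aux_shift (δK i) (δL i) (hcompat i) v (sh i) (hsh i) (hlt i) (hv i)
  let P : (Fin m →₀ ℕ) → Fin S.card → Prop := fun α j =>
    IsAlgebraic (adjoin K (v '' Set.Iio (toLex (mo.toSyn α, j) : I))) (v (toLex (mo.toSyn α, j)))
  have hP : ∀ i α j, P α j → P (Finsupp.single i 1 + α) j := by
    intro i α j h
    have h1 := hshift i _ h
    have h2 : sh i (toLex (mo.toSyn α, j)) = toLex (mo.toSyn (Finsupp.single i 1 + α), j) := by
      simp [sh]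
    rw [h2] at h1
    exact isAlgebraic_algebraMap (⟨_, h1⟩ : adjoin K _)
  have hfin := aux_dickson P hP
  suffices h : _ ∧ _ by
    obtain ⟨T, h1, h2⟩ := aux_fin (K := K) v h.1 _
      (hfin.image fun p => (toLex (mo.toSyn p.1, p.2) : I)) h.2
    exact ⟨_, _, h1, h2⟩
  constructor
  · rw [eq_top_iff, ← hS]
    apply adjoin.mono
    rintro x ⟨b, hb, w, rfl⟩
    refine ⟨toLex (mo.toSyn (Multiset.toFinsupp (w : Multiset (Fin m))), S.equivFin ⟨b, hb⟩), ?_⟩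
    simp [v, D, a]
  · intro p hp
    by_cases hm : ∃ i β, mo.toSyn.symm (ofLex p).1 = Finsupp.single i 1 + β ∧ P β (ofLex p).2
    · right
      obtain ⟨i, β, he, hβ⟩ := hm
      have h1 := hshift i _ hβ
      have h2 : sh i (toLex (mo.toSyn β, (ofLex p).2)) = p := by
        simp only [sh, ofLex_toLex, ← map_add, ← he, AddEquiv.apply_symm_apply]
        rfl
      rwa [h2] at h1
    · left
      push Not at hm
      refine ⟨(mo.toSyn.symm (ofLex p).1, (ofLex p).2), ⟨?_, hm⟩, ?_⟩
      · simp only [P, AddEquiv.apply_symm_apply]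
        exact hp
      · simp only [AddEquiv.apply_symm_apply]
        rfl

end

/-- If `L|K` is a finitely `Δ`-generated extension of `Δ`-fields of
characteristic zero, then the total ring of fractions `M := Quot(L ⊗_K L)` is a finite
direct product of fields: there are pairwise orthogonal idempotents `e₁, …, e_r` summing
to `1` such that each `eᵢM` is a field (with unit `eᵢ`). -/
theorem totalFractionRing_is_finite_product_of_fields {m : ℕ}
    (K L : Type*) [Field K] [CharZero K] [Field L] [CharZero L] [Algebra K L]
    (δK : Fin m → Derivation ℤ K K) (δL : Fin m → Derivation ℤ L L)
    (hcK : CommutingDerivations δK) (hcL : CommutingDerivations δL)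
    (hcompat : ∀ i a, δL i (algebraMap K L a) = algebraMap K L (δK i a))
    (hfg : FinitelyDeltaGenerated K L δL) :
    ∃ (r : ℕ) (e : Fin r → FractionRing (L ⊗[K] L)),
      (∀ i, IsIdempotentElem (e i)) ∧
      (∀ i j, i ≠ j → e i * e j = 0) ∧
      (∑ i, e i) = 1 ∧
      -- each `eᵢM` is a field: `eᵢ` is a nonzero identity of `eᵢM` and every nonzero
      -- element of `eᵢM` has a multiplicative inverse inside `eᵢM`:
      (∀ i, e i ≠ 0 ∧
        ∀ x : FractionRing (L ⊗[K] L), e i * x ≠ 0 →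
          ∃ y : FractionRing (L ⊗[K] L), (e i * x) * (e i * y) = e i) := by
  obtain ⟨ι, x, hx, hfin⟩ := aux_main K L δK δL hcL hcompat hfg
  obtain ⟨h1, h2⟩ := aux_art K L x hx hfin
  exact aux_prod _
end

section
/- Let L|K be an extension of Δ-fields of characteristic zero with K relatively algebraically closed in L. Regard L ⊗_K L as an L-algebra via the first factor, set D := (L ⊗_K L)^Δ and R := {a ∈ L : 1 ⊗ a ∈ (L ⊗ 1)·D}. Suppose b ∈ L satisfies 1 ⊗ b ∈ (L ⊗ 1)D, i.e., u·(1 ⊗ b) = Σ (aᵢ ⊗ 1)dᵢ for some aᵢ ∈ L, dᵢ ∈ D and some u ∈ (L ⊗ 1)·D that is a unit of L ⊗_K L. Then there exists a nonzero a ∈ R with ab ∈ R; in particular b lies in the quotient field of the K-Δ-subalgebra R of L. -/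
open scoped TensorProduct

open Polynomial in
theorem irr_map {K L : Type*} [Field K] [Field L] [Algebra K L]
    (hrac : ∀ x : L, IsAlgebraic K x → x ∈ (algebraMap K L).range)
    (f : K[X]) (hf : f.Monic) (hi : Irreducible f) : Irreducible (f.map (algebraMap K L)) := by
  have key : ∀ g : L[X], g.Monic → g ∣ f.map (algebraMap K L) →
      ∃ g' : K[X], g'.map (algebraMap K L) = g ∧ g'.Monic := by
    intro g hg hd
    have : g ∈ Polynomial.lifts (algebraMap K L) := by
      rw [Polynomial.lifts_iff_coeff_lifts]
      intro n
      exact hrac _ (isIntegral_coeff_of_dvd f g hf hg hd n).isAlgebraic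
    obtain ⟨q, h1, _, h3⟩ := Polynomial.lifts_and_natDegree_eq_and_monic this hg
    exact ⟨q, h1, h3⟩
  rw [(hf.map _).irreducible_iff_natDegree]
  rw [hf.irreducible_iff_natDegree] at hi
  refine ⟨fun h => hi.1 (Polynomial.map_injective _ (algebraMap K L).injective (by simpa using h)), ?_⟩
  intro g h hg hh hgh
  obtain ⟨g', rfl, hg'⟩ := key g hg ⟨h, hgh.symm⟩
  obtain ⟨h', rfl, hh'⟩ := key h hh ⟨_, by rw [mul_comm]; exact hgh.symm⟩
  rw [← Polynomial.map_mul] at hgh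
  have := hi.2 g' h' hg' hh' (Polynomial.map_injective _ (algebraMap K L).injective hgh)
  simpa using this

theorem dom_fin {K L : Type*} [Field K] [CharZero K] [Field L] [Algebra K L]
    (hrac : ∀ x : L, IsAlgebraic K x → x ∈ (algebraMap K L).range)
    (E : Type*) [Field E] [Algebra K E] [FiniteDimensional K E] {x y : L ⊗[K] E}
    (hx : x ≠ 0) (hy : y ≠ 0) : x * y ≠ 0 := by
  let pb := Field.powerBasisOfFiniteOfSeparable K E
  have hint : IsIntegral K pb.gen := pb.isIntegral_gen
  let N := AlgebraicClosure L
  let φ : E →ₐ[K] N := IsAlgClosed.lift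
  have hm : (minpoly K pb.gen).map (algebraMap K L) = minpoly L (φ pb.gen) := by
    apply minpoly.eq_of_irreducible_of_monic
    · exact irr_map hrac _ (minpoly.monic hint) (minpoly.irreducible hint)
    · rw [Polynomial.aeval_map_algebraMap, Polynomial.aeval_algHom_apply, minpoly.aeval, map_zero]
    · exact (minpoly.monic hint).map _
  let Φ : L ⊗[K] E →ₐ[L] N :=
    Algebra.TensorProduct.lift (Algebra.ofId L N) φ (fun _ _ => Commute.all _ _)
  have hdeg : pb.dim = (minpoly L (φ pb.gen)).natDegree := by
    rw [← hm, Polynomial.natDegree_map, pb.natDegree_minpoly]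
  have hli : LinearIndependent L (fun i : Fin pb.dim => (φ pb.gen) ^ (i : ℕ)) := by
    have := linearIndependent_pow (K := L) (φ pb.gen)
    rw [← hdeg] at this
    exact this
  let b := Algebra.TensorProduct.basis L pb.basis
  have hinj : Function.Injective Φ := by
    rw [injective_iff_map_eq_zero]
    intro z hz
    rw [Fintype.linearIndependent_iff] at hli
    have h2 : ∑ i, b.repr z i • (φ pb.gen) ^ (i : ℕ) = 0 := by
      rw [← hz]
      conv_rhs => rw [← b.sum_repr z]
      simp [b, Φ]
    have h3 := hli _ h2
    apply b.repr.injective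
    ext i
    simpa using h3 i
  intro h
  have h1 : Φ x * Φ y = 0 := by rw [← map_mul, h, map_zero]
  rcases mul_eq_zero.1 h1 with h1 | h1
  · exact hx (hinj (h1.trans (map_zero Φ).symm))
  · exact hy (hinj (h1.trans (map_zero Φ).symm))

theorem dom_alg {K L : Type*} [Field K] [CharZero K] [Field L] [Algebra K L]
    (hrac : ∀ x : L, IsAlgebraic K x → x ∈ (algebraMap K L).range)
    (k : Type*) [Field k] [Algebra K k] [Algebra.IsAlgebraic K k] {x y : L ⊗[K] k}
    (hx : x ≠ 0) (hy : y ≠ 0) : x * y ≠ 0 := by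
  obtain ⟨N, hN, hs⟩ := TensorProduct.exists_finite_submodule_right_of_setFinite {x, y}
    (Set.toFinite _)
  obtain ⟨S, hS⟩ := (Module.Finite.iff_fg (N := N)).1 hN
  let E := IntermediateField.adjoin K (S : Set k)
  have : FiniteDimensional K E :=
    IntermediateField.finiteDimensional_adjoin (fun x _ => Algebra.IsIntegral.isIntegral x)
  have hNE : N ≤ Subalgebra.toSubmodule E.toSubalgebra := by
    rw [← hS, Submodule.span_le]
    exact IntermediateField.subset_adjoin K _
  let ι : L ⊗[K] E →ₐ[K] L ⊗[K] k := Algebra.TensorProduct.map (AlgHom.id K L) E.val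
  have hinj : Function.Injective ι :=
    Module.Flat.lTensor_preserves_injective_linearMap E.val.toLinearMap E.val.injective
  have hr : ∀ z ∈ ({x, y} : Set (L ⊗[K] k)), ∃ w, ι w = z := by
    intro z hz
    obtain ⟨w, rfl⟩ := hs hz
    clear hz
    refine ⟨LinearMap.lTensor L (Submodule.inclusion hNE) w, ?_⟩
    induction w using TensorProduct.induction_on with
    | zero => simp
    | tmul a b => rfl
    | add a b ha hb => rw [map_add, map_add, map_add, ha, hb]
  obtain ⟨x', rfl⟩ := hr x (by simp)
  obtain ⟨y', rfl⟩ := hr y (by simp)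
  rw [← map_mul]
  have hx' : x' ≠ 0 := by rintro rfl; simp at hx
  have hy' : y' ≠ 0 := by rintro rfl; simp at hy
  intro h
  exact dom_fin hrac E hx' hy' (hinj (by rw [h, map_zero]))

theorem coord_map {K L A B ι : Type*} [Field K] [CommRing L] [Algebra K L] [CommRing A] [CommRing B]
    [Algebra K A] [Algebra K B] [DecidableEq ι] (e : Module.Basis ι K L) (g : A →ₐ[K] B)
    (z : L ⊗[K] A) (i : ι) :
    TensorProduct.equivFinsuppOfBasisLeft e (Algebra.TensorProduct.map (AlgHom.id K L) g z) i
      = g (TensorProduct.equivFinsuppOfBasisLeft e z i) := by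
  induction z using TensorProduct.induction_on with
  | zero => simp
  | tmul a b => simp
  | add a b ha hb => simp [ha, hb]

/-- lift an element to a subalgebra containing its coordinates -/
theorem exists_lift {K L k ι : Type*} [Field K] [CommRing L] [Algebra K L] [CommRing k]
    [Algebra K k] [DecidableEq ι] (e : Module.Basis ι K L) (A : Subalgebra K k)
    (z : L ⊗[K] k) (h : ∀ i, TensorProduct.equivFinsuppOfBasisLeft e z i ∈ A) :
    ∃ w : L ⊗[K] A, Algebra.TensorProduct.map (AlgHom.id K L) A.val w = z := by
  refine ⟨∑ i ∈ (TensorProduct.equivFinsuppOfBasisLeft e z).support, e i ⊗ₜ ⟨_, h i⟩, ?_⟩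
  apply (TensorProduct.equivFinsuppOfBasisLeft e).injective
  rw [map_sum]
  conv_rhs => rw [← (TensorProduct.equivFinsuppOfBasisLeft e).symm_apply_apply z,
    TensorProduct.equivFinsuppOfBasisLeft_symm_apply, Finsupp.sum]
  simp

theorem dom_all {K L : Type*} [Field K] [CharZero K] [Field L] [Algebra K L]
    (hrac : ∀ x : L, IsAlgebraic K x → x ∈ (algebraMap K L).range)
    (k : Type*) [Field k] [Algebra K k] {x y : L ⊗[K] k}
    (hx : x ≠ 0) (hy : y ≠ 0) : x * y ≠ 0 := by
  classical
  let e := Module.Free.chooseBasis K L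
  let c := TensorProduct.equivFinsuppOfBasisLeft (N := k) e
  obtain ⟨i, hi⟩ : ∃ i, c x i ≠ 0 := by
    by_contra! h
    exact hx (c.injective (by ext i; simp [h i]))
  obtain ⟨j, hj⟩ : ∃ i, c y i ≠ 0 := by
    by_contra! h
    exact hy (c.injective (by ext i; simp [h i]))
  let S : Finset k := insert (c x i)⁻¹ (insert (c y j)⁻¹ ((c x).support.image (c x) ∪ (c y).support.image (c y)))
  let A : Subalgebra K k := Algebra.adjoin K (S : Set k)
  have hSA : (S : Set k) ⊆ A := Algebra.subset_adjoin
  have hAx : ∀ l, c x l ∈ A := by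
    intro l
    by_cases h : c x l = 0
    · rw [h]; exact zero_mem _
    · exact hSA (by simp only [S, Finset.coe_insert, Finset.coe_union, Finset.coe_image]; right; right; left; exact ⟨l, by simpa using h, rfl⟩)
  have hAy : ∀ l, c y l ∈ A := by
    intro l
    by_cases h : c y l = 0
    · rw [h]; exact zero_mem _
    · exact hSA (by simp only [S, Finset.coe_insert, Finset.coe_union, Finset.coe_image]; right; right; right; exact ⟨l, by simpa using h, rfl⟩)
  have hix : (c x i)⁻¹ ∈ A := hSA (by simp [S])
  have hjy : (c y j)⁻¹ ∈ A := hSA (by simp [S])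
  have hft : Algebra.FiniteType K A := (Subalgebra.fg_iff_finiteType A).1 ⟨S, rfl⟩
  obtain ⟨x', hx'⟩ := exists_lift e A x hAx
  obtain ⟨y', hy'⟩ := exists_lift e A y hAy
  obtain ⟨m, hm⟩ := Ideal.exists_maximal A
  let _ : Field (A ⧸ m) := Ideal.Quotient.field m
  have : Module.Finite K (A ⧸ m) := finite_of_finite_type_of_isJacobsonRing K (A ⧸ m)
  let π : L ⊗[K] A →ₐ[K] L ⊗[K] (A ⧸ m) :=
    Algebra.TensorProduct.map (AlgHom.id K L) (Ideal.Quotient.mkₐ K m)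
  have hne : ∀ (z : L ⊗[K] k) (z' : L ⊗[K] A) (l) (h : (c z l)⁻¹ ∈ A) (h0 : c z l ≠ 0),
      Algebra.TensorProduct.map (AlgHom.id K L) A.val z' = z → π z' ≠ 0 := by
    intro z z' l h h0 hz hπ
    have h1 := coord_map e (Ideal.Quotient.mkₐ K m) z' l
    have h2 := coord_map e A.val z' l
    rw [hz] at h2
    have h3 : π z' = Algebra.TensorProduct.map (AlgHom.id K L) (Ideal.Quotient.mkₐ K m) z' := rfl
    rw [← h3, hπ, map_zero, Finsupp.zero_apply] at h1
    have h4 : TensorProduct.equivFinsuppOfBasisLeft e z' l * ⟨_, h⟩ = 1 := by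
      apply Subtype.ext
      change A.val _ * (c z l)⁻¹ = 1
      rw [← h2]
      exact mul_inv_cancel₀ h0
    have h5 := congrArg (Ideal.Quotient.mkₐ K m) h4
    rw [map_mul, ← h1, zero_mul, map_one] at h5
    exact zero_ne_one h5
  have hp := dom_alg hrac (A ⧸ m) (hne x x' i hix hi hx') (hne y y' j hjy hj hy')
  rw [← map_mul] at hp
  rw [← hx', ← hy', ← map_mul]
  intro h
  have hinj : Function.Injective (Algebra.TensorProduct.map (AlgHom.id K L) A.val) :=
    Module.Flat.lTensor_preserves_injective_linearMap A.val.toLinearMap Subtype.val_injective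
  exact hp (by rw [hinj (h.trans (map_zero _).symm), map_zero])

/-- Gauss normalisation of an element with respect to a valuation subring. -/
theorem gauss_norm {K L : Type*} [Field K] [Field L] [Algebra K L]
    (V : ValuationSubring L) (O : Subalgebra K L) (hO : ∀ x, x ∈ O ↔ x ∈ V)
    (I : Ideal O) (hI : I ≠ ⊤) (u : L ⊗[K] L) (hu : u ≠ 0) :
    ∃ (c : L) (p : L ⊗[K] O), c ≠ 0 ∧
      u = (1 ⊗ₜ c) * Algebra.TensorProduct.map (AlgHom.id K L) O.val p ∧
      Algebra.TensorProduct.map (AlgHom.id K L) (Ideal.Quotient.mkₐ K I) p ≠ 0 := by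
  classical
  let e := Module.Free.chooseBasis K L
  let c := TensorProduct.equivFinsuppOfBasisLeft (N := L) e
  have hne : (c u).support.Nonempty := by
    rw [Finsupp.support_nonempty_iff]
    intro h
    exact hu (c.injective (by rw [h, map_zero]))
  obtain ⟨i, hi, hmax⟩ := Finset.exists_max_image (c u).support (fun i => V.valuation (c u i)) hne
  have hi0 : c u i ≠ 0 := by simpa using hi
  have hc : ∀ (t : L) (z : L ⊗[K] L) l, c ((1 ⊗ₜ t) * z) l = t * c z l := by
    intro t z l
    induction z using TensorProduct.induction_on with
    | zero => simp
    | tmul a b => simp [c]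
    | add a b ha hb => rw [mul_add, map_add, Finsupp.add_apply, ha, hb, map_add, Finsupp.add_apply,
        mul_add]
  obtain ⟨p, hp⟩ := exists_lift e O ((1 ⊗ₜ (c u i)⁻¹) * u) (by
    intro l
    change c _ l ∈ O
    rw [hc, hO, ← V.valuation_le_one_iff, map_mul, map_inv₀]
    by_cases hl : c u l = 0
    · simp [hl]
    · have := hmax l (by simpa using hl)
      rw [inv_mul_le_iff₀ (by simpa [zero_lt_iff] using hi0)]
      simpa using this)
  refine ⟨c u i, p, hi0, ?_, ?_⟩
  · rw [hp, ← mul_assoc, Algebra.TensorProduct.tmul_mul_tmul, mul_inv_cancel₀ hi0, one_mul,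
      ← Algebra.TensorProduct.one_def, one_mul]
  · intro h
    have h1 := coord_map e (Ideal.Quotient.mkₐ K I) p i
    have h2 := coord_map e O.val p i
    rw [h, map_zero, Finsupp.zero_apply] at h1
    rw [hp] at h2
    have h3 : c ((1 ⊗ₜ (c u i)⁻¹) * u) i = 1 := by rw [hc, inv_mul_cancel₀ hi0]
    have h4 : TensorProduct.equivFinsuppOfBasisLeft e p i = 1 := Subtype.ext (h2.symm.trans h3)
    rw [h4] at h1
    exact hI ((Ideal.eq_top_iff_one I).2 (Ideal.Quotient.eq_zero_iff_mem.1 h1.symm))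

theorem unit_val {K L M : Type*} [Field K] [CharZero K] [Field L] [Algebra K L]
    [CommRing M] [Algebra K M] (j₁ j₂ : L →ₐ[K] M)
    (hrac : ∀ x : L, IsAlgebraic K x → x ∈ (algebraMap K L).range)
    (V : ValuationSubring L) (O : Subalgebra K L) (hO : ∀ x, x ∈ O ↔ x ∈ V)
    (u v : L ⊗[K] L) (huv : u * v = 1) :
    Algebra.TensorProduct.map j₁ (AlgHom.id K L) u * Algebra.TensorProduct.map j₂ (AlgHom.id K L) v
      ∈ (Algebra.TensorProduct.map (AlgHom.id K M) O.val).range := by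
  -- the maximal ideal of `O`
  have hloc : IsLocalRing O := by
    have : O.toSubring = V.toSubring := by ext x; exact hO x
    have h2 : IsLocalRing V.toSubring := inferInstanceAs (IsLocalRing V)
    rw [← this] at h2
    exact h2
  let I := IsLocalRing.maximalIdeal O
  let _ : Field (O ⧸ I) := Ideal.Quotient.field I
  have hI : I ≠ ⊤ := Ideal.IsPrime.ne_top'
  have hu : u ≠ 0 := by rintro rfl; simp at huv
  have hv : v ≠ 0 := by rintro rfl; simp at huv
  obtain ⟨c, p, hc, hup, hp⟩ := gauss_norm V O hO I hI u hu
  obtain ⟨d, q, hd, hvq, hq⟩ := gauss_norm V O hO I hI v hv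
  have hpq := dom_all hrac (O ⧸ I) hp hq
  rw [← map_mul] at hpq
  have hinj : Function.Injective (Algebra.TensorProduct.map (AlgHom.id K L) O.val) :=
    Module.Flat.lTensor_preserves_injective_linearMap O.val.toLinearMap Subtype.val_injective
  have hcd : c * d ∈ O := by
    by_contra hcd
    have hs : (c * d)⁻¹ ∈ O := by
      rw [hO] at hcd ⊢
      exact (V.mem_or_inv_mem _).resolve_left hcd
    let s : O := ⟨_, hs⟩
    have hsI : s ∈ I := by
      rw [IsLocalRing.mem_maximalIdeal, mem_nonunits_iff]
      intro h
      obtain ⟨t, ht⟩ := h.exists_right_inv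
      have ht' : (c * d)⁻¹ * (t : L) = 1 := congrArg Subtype.val ht
      have : c * d = t := by
        rw [inv_mul_eq_iff_eq_mul₀ (mul_ne_zero hc hd), mul_one] at ht'
        exact ht'.symm
      exact hcd (this ▸ t.2)
    have h1 : p * q = 1 ⊗ₜ s := by
      apply hinj
      rw [map_mul, Algebra.TensorProduct.map_tmul]
      have h2 : (1 : L ⊗[K] L) = (1 ⊗ₜ (c * d)) *
          (Algebra.TensorProduct.map (AlgHom.id K L) O.val p *
           Algebra.TensorProduct.map (AlgHom.id K L) O.val q) := by
        rw [← huv, hup, hvq, ← one_mul (1 : L), ← Algebra.TensorProduct.tmul_mul_tmul, one_mul]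
        ring
      have h3 : ((1 : L) ⊗ₜ[K] (c * d)⁻¹) * (1 ⊗ₜ (c * d)) = 1 := by
        rw [Algebra.TensorProduct.tmul_mul_tmul, inv_mul_cancel₀ (mul_ne_zero hc hd), one_mul]
        rfl
      calc _ = ((1 : L) ⊗ₜ[K] (c * d)⁻¹) * ((1 ⊗ₜ (c * d)) *
          (Algebra.TensorProduct.map (AlgHom.id K L) O.val p *
           Algebra.TensorProduct.map (AlgHom.id K L) O.val q)) := by
              rw [← mul_assoc, h3, one_mul]
        _ = _ := by rw [← h2, mul_one]; rfl
    apply hpq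
    rw [h1, Algebra.TensorProduct.map_tmul]
    have : Ideal.Quotient.mkₐ K I s = 0 := Ideal.Quotient.eq_zero_iff_mem.2 hsI
    rw [this, TensorProduct.tmul_zero]
  have hcomm : ∀ (j : L →ₐ[K] M) (z : L ⊗[K] O),
      Algebra.TensorProduct.map j (AlgHom.id K L)
        (Algebra.TensorProduct.map (AlgHom.id K L) O.val z) =
      Algebra.TensorProduct.map (AlgHom.id K M) O.val
        (Algebra.TensorProduct.map j (AlgHom.id K O) z) := by
    intro j z
    induction z using TensorProduct.induction_on with
    | zero => simp
    | tmul a b => simp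
    | add a b ha hb => simp only [map_add, ha, hb]
  refine ⟨(1 ⊗ₜ ⟨c * d, hcd⟩) * (Algebra.TensorProduct.map j₁ (AlgHom.id K O) p *
    Algebra.TensorProduct.map j₂ (AlgHom.id K O) q), ?_⟩
  change Algebra.TensorProduct.map (AlgHom.id K M) O.val _ = _
  rw [map_mul, map_mul, ← hcomm, ← hcomm, hup, hvq, map_mul, map_mul]
  simp only [Algebra.TensorProduct.map_tmul, map_one, AlgHom.id_apply, Subalgebra.coe_val]
  rw [← one_mul (1 : M), ← Algebra.TensorProduct.tmul_mul_tmul, one_mul]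
  ring

theorem unit_pure {K L : Type*} [Field K] [CharZero K] [Field L] [Algebra K L]
    (hrac : ∀ x : L, IsAlgebraic K x → x ∈ (algebraMap K L).range)
    (u : L ⊗[K] L) (hu : IsUnit u) : ∃ a b : L, u = a ⊗ₜ b := by
  classical
  obtain ⟨v, huv⟩ := hu.exists_right_inv
  let M := L ⊗[K] L
  let j₁ : L →ₐ[K] M := Algebra.TensorProduct.includeLeft
  let j₂ : L →ₐ[K] M := Algebra.TensorProduct.includeRight
  let F₁ := Algebra.TensorProduct.map j₁ (AlgHom.id K L)
  let F₂ := Algebra.TensorProduct.map j₂ (AlgHom.id K L)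
  let x := F₁ u * F₂ v
  let eM := Module.Free.chooseBasis K M
  let cM := TensorProduct.equivFinsuppOfBasisLeft (N := L) eM
  have hx : ∀ i, cM x i ∈ (⊥ : Subalgebra K L) := by
    intro i
    let s : Set L := Set.range (algebraMap K L)
    have h1 : cM x i ∈ (⨅ V : {V : ValuationSubring L // s ⊆ V.toSubring}, V.1.toSubring) := by
      rw [Subring.mem_iInf]
      rintro ⟨V, hV⟩
      let O : Subalgebra K L := { V.toSubring with
        algebraMap_mem' := fun r => hV ⟨r, rfl⟩ }
      obtain ⟨w, hw⟩ := unit_val j₁ j₂ hrac V O (fun _ => Iff.rfl) u v huv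
      change Algebra.TensorProduct.map (AlgHom.id K M) O.val w = x at hw
      rw [← hw]
      have := coord_map eM O.val w i
      change TensorProduct.equivFinsuppOfBasisLeft eM _ i ∈ V
      rw [this]
      exact (TensorProduct.equivFinsuppOfBasisLeft eM w i).2
    rw [iInf_valuationSubring_superset] at h1
    have h2 : IsIntegral (Subring.closure s) (cM x i) := h1
    apply hrac
    apply IsIntegral.isAlgebraic
    have h3 : Subring.closure s = (algebraMap K L).range := by
      change Subring.closure (Set.range (algebraMap K L)) = _
      rw [← RingHom.coe_range, Subring.closure_eq]
    rw [h3] at h2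
    obtain ⟨P, hP, hP2⟩ := h2
    have hl : P.map (algebraMap (algebraMap K L).range L) ∈ Polynomial.lifts (algebraMap K L) := by
      rw [Polynomial.lifts_iff_coeff_lifts]
      intro n
      rw [Polynomial.coeff_map]
      exact (P.coeff n).2
    obtain ⟨Q, hQ, _, hQ3⟩ := Polynomial.lifts_and_natDegree_eq_and_monic hl (hP.map _)
    exact ⟨Q, hQ3, by rw [← Polynomial.eval_map, hQ, Polynomial.eval_map, hP2]⟩
  obtain ⟨w, hw⟩ := exists_lift eM ⊥ x hx
  obtain ⟨m, hm⟩ : ∃ m : M, x = m ⊗ₜ 1 := by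
    rw [← hw]
    clear hw
    induction w using TensorProduct.induction_on with
    | zero => exact ⟨0, by simp⟩
    | tmul a b =>
      obtain ⟨b, hb⟩ := b
      obtain ⟨r, rfl⟩ := Algebra.mem_bot.1 hb
      refine ⟨r • a, ?_⟩
      rw [Algebra.TensorProduct.map_tmul, TensorProduct.smul_tmul, ← Algebra.algebraMap_eq_smul_one]
      rfl
    | add a b ha hb =>
      obtain ⟨m, hm⟩ := ha
      obtain ⟨n, hn⟩ := hb
      exact ⟨m + n, by rw [map_add, hm, hn, TensorProduct.add_tmul]⟩
  have hF : F₁ u = (m ⊗ₜ 1) * F₂ u := by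
    rw [← hm]
    change _ = F₁ u * F₂ v * F₂ u
    rw [mul_assoc, ← map_mul, mul_comm v, huv, map_one, mul_one]
  let e := Module.Free.chooseBasis K L
  let c := TensorProduct.equivFinsuppOfBasisRight (M := L) e
  let c' := TensorProduct.equivFinsuppOfBasisRight (M := M) e
  have hcF : ∀ (j : L →ₐ[K] M) (z : L ⊗[K] L) i,
      c' (Algebra.TensorProduct.map j (AlgHom.id K L) z) i = j (c z i) := by
    intro j z i
    induction z using TensorProduct.induction_on with
    | zero => simp
    | tmul a b => simp [c, c']
    | add a b ha hb => simp only [map_add, ha, hb, Finsupp.add_apply]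
  have hcm : ∀ (z : M ⊗[K] L) i, c' ((m ⊗ₜ 1) * z) i = m * c' z i := by
    intro z i
    induction z using TensorProduct.induction_on with
    | zero => simp
    | tmul a b => simp [c']
    | add a b ha hb => simp only [mul_add, map_add, ha, hb, Finsupp.add_apply]
  have hrel : ∀ i, (c u i) ⊗ₜ[K] (1 : L) = m * (1 ⊗ₜ (c u i)) := by
    intro i
    have h1 := hcF j₁ u i
    have h2 := hcF j₂ u i
    change c' (F₁ u) i = _ at h1
    change c' (F₂ u) i = _ at h2
    rw [hF, hcm, h2] at h1
    exact h1.symm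
  obtain ⟨i, hi⟩ : ∃ i, c u i ≠ 0 := by
    by_contra! h
    have : u = 0 := c.injective (by ext i; simp [h i])
    simp [this] at huv
  have hmi : m = (c u i) ⊗ₜ (c u i)⁻¹ := by
    have h := congrArg (· * ((1 : L) ⊗ₜ[K] (c u i)⁻¹)) (hrel i)
    simp only [mul_assoc, Algebra.TensorProduct.tmul_mul_tmul, mul_inv_cancel₀ hi, mul_one, one_mul]
      at h
    rw [h, ← Algebra.TensorProduct.one_def, mul_one]
  have hk : ∀ l, ∃ r : K, c u l = r • c u i := by
    intro l
    have h := hrel l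
    rw [hmi, Algebra.TensorProduct.tmul_mul_tmul, mul_one] at h
    obtain ⟨f, hf⟩ := (Algebra.linearMap K L).exists_leftInverse_of_injective
      (LinearMap.ker_eq_bot.2 (algebraMap K L).injective)
    have hf1 : f 1 = 1 := by simpa using LinearMap.congr_fun hf 1
    have h2 := congrArg (fun z => TensorProduct.rid K L (LinearMap.lTensor L f z)) h
    simp only [LinearMap.lTensor_tmul, TensorProduct.rid_tmul, hf1, one_smul] at h2
    exact ⟨_, h2⟩
  choose r hr using hk
  refine ⟨c u i, ∑ l ∈ (c u).support, r l • e l, ?_⟩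
  have h := c.symm_apply_apply u
  rw [TensorProduct.equivFinsuppOfBasisRight_symm_apply, Finsupp.sum] at h
  rw [TensorProduct.tmul_sum]
  conv_lhs => rw [← h]
  refine Finset.sum_congr rfl fun l _ => ?_
  rw [← TensorProduct.smul_tmul, ← hr l]

theorem dotSet_smul {K L : Type*} [Field K] [Field L] [Algebra K L] (D : Set (L ⊗[K] L)) (t : L)
    (z : L ⊗[K] L) (hz : z ∈ dotSet (Set.range fun l : L => l ⊗ₜ[K] (1 : L)) D) :
    (t ⊗ₜ 1) * z ∈ dotSet (Set.range fun l : L => l ⊗ₜ[K] (1 : L)) D := by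
  obtain ⟨n, s, d, hs, hd, rfl⟩ := hz
  refine ⟨n, fun i => (t ⊗ₜ 1) * s i, d, fun i => ?_, hd, ?_⟩
  · obtain ⟨l, hl⟩ := hs i
    exact ⟨t * l, by simp [← hl]⟩
  · rw [Finset.mul_sum]
    exact Finset.sum_congr rfl fun i _ => (mul_assoc _ _ _).symm

/-- Let `L|K` be an extension of `Δ`-fields with `K` relatively
algebraically closed in `L`. Set `D := (L ⊗_K L)^Δ` and
`R := {a ∈ L | 1 ⊗ a ∈ (L ⊗ 1)·D}`. If `b ∈ L` satisfies `1 ⊗ b ∈ (L ⊗ 1)D`, then there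
is a nonzero `a ∈ R` with `ab ∈ R`; in particular `b` lies in the quotient field of `R`. -/
theorem mem_quotientField_of_picardVessiotRing {m : ℕ}
    (K L : Type*) [Field K] [CharZero K] [Field L] [CharZero L] [Algebra K L]
    (δK : Fin m → Derivation ℤ K K) (δL : Fin m → Derivation ℤ L L)
    (hcK : CommutingDerivations δK) (hcL : CommutingDerivations δL)
    (hcompat : ∀ i a, δL i (algebraMap K L a) = algebraMap K L (δK i a))
    (hrac : ∀ x : L, IsAlgebraic K x → x ∈ (algebraMap K L).range)
    -- the (unique) `Δ`-ring structure on `L ⊗_K L`: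
    (δT : Fin m → Derivation ℤ (L ⊗[K] L) (L ⊗[K] L))
    (hδT : ∀ i (a b : L), δT i (a ⊗ₜ[K] b) = (δL i a) ⊗ₜ[K] b + a ⊗ₜ[K] (δL i b))
    -- `D := (L ⊗_K L)^Δ` and `R := {a ∈ L | 1 ⊗ a ∈ (L ⊗ 1)·D}`:
    (D : Set (L ⊗[K] L)) (hD : D = {x : L ⊗[K] L | ∀ i, δT i x = 0})
    (R : Set L) (hR : R = {a : L | (1 : L) ⊗ₜ[K] a ∈
      dotSet (Set.range fun l : L => l ⊗ₜ[K] (1 : L)) D})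
    (b : L)
    (hb : (1 : L) ⊗ₜ[K] b ∈ fracSet (Set.range fun l : L => l ⊗ₜ[K] (1 : L)) D) :
    ∃ a : L, a ≠ 0 ∧ a ∈ R ∧ a * b ∈ R := by
  subst hR
  obtain ⟨r, u, hr, hu, hunit, hbu⟩ := hb
  obtain ⟨a', a, rfl⟩ := unit_pure hrac u hunit
  have hne : a' ⊗ₜ[K] a ≠ 0 := hunit.ne_zero
  have ha' : a' ≠ 0 := by rintro rfl; simp at hne
  have ha : a ≠ 0 := by rintro rfl; simp at hne
  refine ⟨a, ha, ?_, ?_⟩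
  · have h := dotSet_smul D a'⁻¹ _ hu
    rwa [Algebra.TensorProduct.tmul_mul_tmul, inv_mul_cancel₀ ha', one_mul] at h
  · have h := dotSet_smul D a'⁻¹ _ hr
    rwa [← hbu, Algebra.TensorProduct.tmul_mul_tmul, Algebra.TensorProduct.tmul_mul_tmul, one_mul,
      inv_mul_cancel₀ ha', one_mul, mul_comm b] at h
end
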